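/- Assume condition (D1) (A is increasing on [0,1]) and that the probability measure m on ℝ has a finite first moment. Then there exists exactly one weak solution F to the Cauchy problem with initial condition H*m that belongs to the class 𝓕. -/

import Mathlib

open MeasureTheory Set Filter Topology Function
open scoped ENNReal

noncomputable section

/-- `primitive f u = ∫₀^u f(v) dv`. -/
def primitive (f : ℝ → ℝ) : ℝ → ℝ := fun u => ∫ v in (0:ℝ)..u, f v

/-- The cumulative distribution function `H * μ` of a measure `μ` on `ℝ`. -/
def cdfOf (μ : MeasureTheory.Measure ℝ) : ℝ → ℝ := fun x => (μ (Set.Iic x)).toReal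

/-- `F` is a weak solution of `∂ₜ F = (1/2) ∂ₓₓ (A (F)) - ∂ₓ (B (F))` with
initial condition `F₀`. -/
def IsWeakSolution (A B : ℝ → ℝ) (F₀ : ℝ → ℝ) (F : ℝ → ℝ → ℝ) : Prop :=
  ∀ g : ℝ → ℝ → ℝ, ContDiff ℝ (⊤ : ℕ∞) (Function.uncurry g) →
    HasCompactSupport (Function.uncurry g) →
    ∀ t : ℝ, 0 ≤ t →
      ((∫ x : ℝ, g t x * F t x) - ∫ x : ℝ, g 0 x * F₀ x) =
        ∫ x : ℝ, ∫ s in (0:ℝ)..t,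
          ((1/2) * A (F s x) * deriv (deriv (fun y => g s y)) x
            + B (F s x) * deriv (fun y => g s y) x
            + F s x * deriv (fun r => g r x) s)

/-- Membership in the class `𝓕`: `F t` is the cdf of `P t` for a weakly continuous
flow `t ↦ P t` of probability measures with finite first moments, the first moment
being locally integrable in time. -/
def MemF (F : ℝ → ℝ → ℝ) : Prop :=
  ∃ P : ℝ → ProbabilityMeasure ℝ,
    ContinuousOn P (Set.Ici 0) ∧
    (∀ t : ℝ, 0 ≤ t → Integrable (fun x => |x|) (P t : Measure ℝ)) ∧
    (∀ T : ℝ, 0 < T → IntegrableOn (fun t => ∫ x, |x| ∂(P t : Measure ℝ)) (Set.Icc 0 T)) ∧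
    (∀ t : ℝ, 0 ≤ t → ∀ x : ℝ, F t x = ((P t : Measure ℝ) (Set.Iic x)).toReal)


section
/-- A flow of cumulative distribution functions, weakly continuous in time. -/
structure CdfFlow (F : ℝ → ℝ → ℝ) : Prop where
  mono : ∀ t, Monotone (F t)
  nonneg : ∀ t x, 0 ≤ F t x
  le_one : ∀ t x, F t x ≤ 1
  rc : ∀ t x, ContinuousWithinAt (F t) (Ici x) x
  bot : ∀ t, Tendsto (F t) atBot (𝓝 0)
  top : ∀ t, Tendsto (F t) atTop (𝓝 1)
  cont : ∀ t x, ContinuousAt (F t) x → ContinuousAt (fun s => F s x) t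

lemma mono_ae_cont {f : ℝ → ℝ} (hf : Monotone f) : ∀ᵐ y, ContinuousAt f y := by
  have := hf.countable_not_continuousAt
  exact (this.ae_notMem volume).mono (fun x hx => by simpa using hx)

lemma mono_exists_cont {f : ℝ → ℝ} (hf : Monotone f) {a b : ℝ} (hab : a < b) :
    ∃ y ∈ Ioo a b, ContinuousAt f y := by
  have h := hf.countable_not_continuousAt.dense_compl ℝ
  obtain ⟨y, hy, hy'⟩ := h.exists_between hab
  exact ⟨y, hy', by simpa using hy⟩

lemma CdfFlow.joint {F : ℝ → ℝ → ℝ} (hF : CdfFlow F) {t x : ℝ} (h : ContinuousAt (F t) x) :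
    ContinuousAt (uncurry F) (t, x) := by
  rw [Metric.continuousAt_iff'] 
  intro e he
  obtain ⟨d, hd, hd'⟩ := Metric.continuousAt_iff.1 h (e/2) (by positivity)
  obtain ⟨y, hy, hyc⟩ := mono_exists_cont (hF.mono t) (show x - d < x by linarith)
  obtain ⟨z, hz, hzc⟩ := mono_exists_cont (hF.mono t) (show x < x + d by linarith)
  have h1 := Metric.continuousAt_iff'.1 (hF.cont t y hyc) (e/2) (by positivity)
  have h2 := Metric.continuousAt_iff'.1 (hF.cont t z hzc) (e/2) (by positivity)
  have h3 : ∀ᶠ w in 𝓝 x, y < w ∧ w < z := Ioo_mem_nhds hy.2 hz.1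
  rw [nhds_prod_eq]
  filter_upwards [(h1.and h2).prod_mk h3] with p hp
  obtain ⟨⟨p1, p2⟩, p3, p4⟩ := hp
  have a1 := hF.mono p.1 p3.le
  have a2 := hF.mono p.1 p4.le
  have a3 := @hd' y (by rw [Real.dist_eq, abs_lt]; constructor <;> linarith [hy.1, hy.2])
  have a4 := @hd' z (by rw [Real.dist_eq, abs_lt]; constructor <;> linarith [hz.1, hz.2])
  rw [Real.dist_eq, abs_lt] at *
  simp only [uncurry]
  constructor <;> linarith

/-- convolution, `f` rough and `k` the kernel -/
def cv (f k : ℝ → ℝ) (x : ℝ) : ℝ := ∫ y, f (x - y) * k y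

lemma cv_swap (f k : ℝ → ℝ) (x : ℝ) : cv f k x = ∫ y, f y * k (x - y) := by
  rw [cv, ← integral_sub_left_eq_self _ _ x]
  simp

lemma CdfFlow.mem {F : ℝ → ℝ → ℝ} (hF : CdfFlow F) (t x : ℝ) : F t x ∈ Icc (0:ℝ) 1 :=
  ⟨hF.nonneg t x, hF.le_one t x⟩

lemma bdd01 {ψ : ℝ → ℝ} (hψ : Continuous ψ) : ∃ M, 0 ≤ M ∧ ∀ u ∈ Icc (0:ℝ) 1, |ψ u| ≤ M := by
  obtain ⟨M, hM⟩ := isCompact_Icc.exists_bound_of_continuousOn (hψ.continuousOn (s := Icc (0:ℝ) 1))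
  exact ⟨M, (norm_nonneg _).trans (hM 0 (by simp)), hM⟩

lemma CdfFlow.cv_cont {F : ℝ → ℝ → ℝ} (hF : CdfFlow F) {ψ k : ℝ → ℝ} (hψ : Continuous ψ)
    (hk : Integrable k) : Continuous (fun q : ℝ × ℝ => cv (fun y => ψ (F q.1 y)) k q.2) := by
  obtain ⟨M, hM0, hM⟩ := bdd01 hψ
  rw [continuous_iff_continuousAt]
  rintro ⟨t, x⟩
  apply tendsto_integral_filter_of_dominated_convergence (fun y => M * |k y|)
  · refine Eventually.of_forall fun q => ?_
    have : Measurable (fun y => ψ (F q.1 (q.2 - y))) :=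
      hψ.measurable.comp ((hF.mono q.1).measurable.comp (measurable_const.sub measurable_id))
    exact this.aestronglyMeasurable.mul hk.aestronglyMeasurable
  · refine Eventually.of_forall fun q => Eventually.of_forall fun y => ?_
    rw [norm_mul]
    exact mul_le_mul_of_nonneg_right (hM _ (hF.mem _ _)) (norm_nonneg _)
  · exact hk.abs.const_mul M
  · have h0 : ∀ᵐ y, ContinuousAt (F t) (x - y) := by
      have := (Measure.measurePreserving_sub_left (volume : Measure ℝ) x).quasiMeasurePreserving.ae
        (mono_ae_cont (hF.mono t))
      exact this
    filter_upwards [h0] with y hy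
    have h1 := (hF.joint hy)
    have h2 : ContinuousAt (fun q : ℝ × ℝ => uncurry F (q.1, q.2 - y)) (t, x) := by
      apply ContinuousAt.comp (g := uncurry F) (f := fun q : ℝ × ℝ => (q.1, q.2 - y)) h1
      fun_prop
    exact ((hψ.continuousAt.comp h2).mul continuousAt_const)

lemma CdfFlow.int_cont {F : ℝ → ℝ → ℝ} (hF : CdfFlow F) {ψ k : ℝ → ℝ} (hψ : Continuous ψ)
    (hk : Integrable k) : Continuous (fun t => ∫ y, ψ (F t y) * k y) := by
  have h := (hF.cv_cont hψ (hk.comp_neg)).comp (Continuous.prodMk continuous_id (continuous_const (y := (0:ℝ))))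
  convert h using 2 with t
  simp only [comp, cv_swap, id]
  simp

lemma CdfFlow.meas {F : ℝ → ℝ → ℝ} (hF : CdfFlow F) : Measurable (uncurry F) := by
  let k : ℕ → ℝ → ℝ := fun n => (Icc (-(1/((n:ℝ)+1))) 0).indicator (fun _ => ((n:ℝ)+1))
  have hk : ∀ n, Integrable (k n) := fun n => by
    apply (integrable_indicator_iff measurableSet_Icc).2
    exact integrableOn_const (by simp)
  have hc : ∀ n, Continuous (fun q : ℝ × ℝ => cv (fun y => F q.1 y) (k n) q.2) :=
    fun n => hF.cv_cont continuous_id (hk n)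
  refine measurable_of_tendsto_metrizable (fun n => (hc n).measurable) ?_
  rw [tendsto_pi_nhds]
  rintro ⟨t, x⟩
  have key : ∀ n, F t x ≤ cv (fun y => F t y) (k n) x ∧
      cv (fun y => F t y) (k n) x ≤ F t (x + 1/((n:ℝ)+1)) := by
    intro n
    have hn : (0:ℝ) < (n:ℝ)+1 := by positivity
    have e : ∀ c : ℝ, ∫ y, c * k n y = c := by
      intro c
      rw [integral_const_mul, integral_indicator measurableSet_Icc]
      simp
      rw [max_eq_left (by positivity), inv_mul_cancel₀ hn.ne']; simp
    have hi : Integrable (fun y => F t (x - y) * k n y) := by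
      refine Integrable.bdd_mul (c := 1) (hk n) ?_ ?_
      · exact (((hF.mono t).measurable).comp (measurable_const.sub measurable_id)).aestronglyMeasurable
      · refine Eventually.of_forall fun y => ?_
        rw [Real.norm_eq_abs, abs_of_nonneg (hF.nonneg _ _)]; exact hF.le_one _ _
    constructor
    · conv_lhs => rw [← e (F t x)]
      refine integral_mono ((hk n).const_mul _) hi fun y => ?_
      by_cases hy : y ∈ Icc (-(1/((n:ℝ)+1))) 0
      · simp only [k, indicator_of_mem hy]
        exact mul_le_mul_of_nonneg_right (hF.mono t (by linarith [hy.2])) hn.le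
      · simp only [k, indicator_of_notMem hy]; simp
    · conv_rhs => rw [← e (F t _)]
      refine integral_mono hi ((hk n).const_mul _) fun y => ?_
      by_cases hy : y ∈ Icc (-(1/((n:ℝ)+1))) 0
      · simp only [k, indicator_of_mem hy]
        exact mul_le_mul_of_nonneg_right (hF.mono t (by linarith [hy.1])) hn.le
      · simp only [k, indicator_of_notMem hy]; simp
  refine tendsto_of_tendsto_of_tendsto_of_le_of_le (g := fun _ : ℕ => F t x)
    (h := fun n : ℕ => F t (x + 1/((n:ℝ)+1))) tendsto_const_nhds ?_ (fun n => (key n).1) (fun n => (key n).2)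
  refine (hF.rc t x).tendsto.comp ?_
  refine tendsto_nhdsWithin_iff.2 ⟨?_, Eventually.of_forall fun n => ?_⟩
  · simpa using (tendsto_const_nhds (x := x)).add tendsto_one_div_add_atTop_nhds_zero_nat
  · have : (0:ℝ) < 1/((n:ℝ)+1) := by positivity
    simp only [mem_Ici]; linarith
end


section
structure Nice (A B a b : ℝ → ℝ) (C : ℝ) : Prop where
  ha : Continuous a
  hb : Continuous b
  hA : ∀ u, HasDerivAt A (a u) u
  hB : ∀ u, HasDerivAt B (b u) u
  a0 : ∀ u, 0 ≤ a u
  aC : ∀ u, a u ≤ C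
  bC : ∀ u, |b u| ≤ C
  C0 : 1 ≤ C
  A0 : A 0 = 0
  B0 : B 0 = 0
  sm : StrictMonoOn A (Icc 0 1)

lemma Nice.cA {A B a b : ℝ → ℝ} {C : ℝ} (h : Nice A B a b C) : Continuous A :=
  continuous_iff_continuousAt.2 fun u => (h.hA u).continuousAt
lemma Nice.cB {A B a b : ℝ → ℝ} {C : ℝ} (h : Nice A B a b C) : Continuous B :=
  continuous_iff_continuousAt.2 fun u => (h.hB u).continuousAt

def Lop (A B f φ : ℝ → ℝ) : ℝ := ∫ x, ((1/2) * A (f x) * deriv (deriv φ) x + B (f x) * deriv φ x)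

def WW (A B F₀ : ℝ → ℝ) (F : ℝ → ℝ → ℝ) : Prop :=
  ∀ φ : ℝ → ℝ, ContDiff ℝ (⊤ : ℕ∞) φ → HasCompactSupport φ → ∀ t : ℝ, 0 ≤ t →
    (∫ x, φ x * F t x) - (∫ x, φ x * F₀ x) = ∫ s in (0:ℝ)..t, Lop A B (F s) φ

lemma smooth_deriv {φ : ℝ → ℝ} (h : ContDiff ℝ (⊤ : ℕ∞) φ) : ContDiff ℝ (⊤ : ℕ∞) (deriv φ) :=
  (contDiff_infty_iff_deriv.1 h).2

lemma fub {H : ℝ → ℝ → ℝ} (hH : Measurable (uncurry H)) {k : ℝ → ℝ} (hk : Integrable k) {t : ℝ}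
    (ht : 0 ≤ t) (hb : ∀ s x, |H s x| ≤ k x) :
    ∫ x, ∫ s in (0:ℝ)..t, H s x = ∫ s in (0:ℝ)..t, ∫ x, H s x := by
  simp only [intervalIntegral.integral_of_le ht]
  apply integral_integral_swap
  refine Integrable.mono' (g := fun p : ℝ × ℝ => k p.1) (Integrable.comp_fst hk _) ?_ ?_
  · exact (hH.comp measurable_swap).aestronglyMeasurable
  · exact Eventually.of_forall fun p => hb _ _

/-- continuous with compact support in both variables gives an integrable dominating function -/
lemma exists_dom {k : ℝ → ℝ → ℝ} (hk : Continuous (uncurry k)) (hc : HasCompactSupport (uncurry k)) :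
    ∃ κ : ℝ → ℝ, Integrable κ ∧ ∀ s x, |k s x| ≤ κ x := by
  obtain ⟨M, hM⟩ := hc.exists_bound_of_continuous hk
  have hK : IsCompact (Prod.snd '' tsupport (uncurry k)) := hc.image continuous_snd
  have hM0 : 0 ≤ M := (norm_nonneg _).trans (hM 0)
  refine ⟨(Prod.snd '' tsupport (uncurry k)).indicator (fun _ => M), ?_, fun s x => ?_⟩
  · exact (integrable_indicator_iff hK.measurableSet).2 (integrableOn_const hK.measure_lt_top.ne)
  · by_cases hx : x ∈ Prod.snd '' tsupport (uncurry k)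
    · rw [indicator_of_mem hx]; exact hM (s, x)
    · rw [indicator_of_notMem hx]
      have : uncurry k (s, x) = 0 := image_eq_zero_of_notMem_tsupport (fun h => hx ⟨_, h, rfl⟩)
      simp only [uncurry] at this
      simp [this]

lemma partial_x {g : ℝ → ℝ → ℝ} (hg : ContDiff ℝ (⊤ : ℕ∞) (uncurry g))
    (hc : HasCompactSupport (uncurry g)) :
    ContDiff ℝ (⊤ : ℕ∞) (uncurry fun s x => deriv (fun y => g s y) x) ∧
    HasCompactSupport (uncurry fun s x => deriv (fun y => g s y) x) ∧
    ∀ s x, HasDerivAt (fun y => g s y) (deriv (fun y => g s y) x) x := by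
  have hd : Differentiable ℝ (uncurry g) := hg.differentiable (by simp)
  have key : ∀ s x, HasDerivAt (fun y => g s y) (fderiv ℝ (uncurry g) (s, x) (0, 1)) x := by
    intro s x
    have := (hd (s, x)).hasFDerivAt.comp_hasDerivAt x (f := fun y => (s, y))
      ((hasDerivAt_const x s).prodMk (hasDerivAt_id x))
    exact this
  have e : (uncurry fun s x => deriv (fun y => g s y) x) = fun p => fderiv ℝ (uncurry g) p (0, 1) := by
    ext ⟨s, x⟩; exact (key s x).deriv
  refine ⟨?_, ?_, fun s x => (key s x).differentiableAt.hasDerivAt⟩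
  · rw [e]
    exact (hg.fderiv_right (by simp)).clm_apply contDiff_const
  · rw [e]
    exact (hc.fderiv ℝ).comp_left (g := fun L : ℝ × ℝ →L[ℝ] ℝ => L (0, 1)) (by simp)

lemma partial_t {g : ℝ → ℝ → ℝ} (hg : ContDiff ℝ (⊤ : ℕ∞) (uncurry g))
    (hc : HasCompactSupport (uncurry g)) :
    ContDiff ℝ (⊤ : ℕ∞) (uncurry fun s x => deriv (fun r => g r x) s) ∧
    HasCompactSupport (uncurry fun s x => deriv (fun r => g r x) s) ∧
    ∀ s x, HasDerivAt (fun r => g r x) (deriv (fun r => g r x) s) s := by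
  have hd : Differentiable ℝ (uncurry g) := hg.differentiable (by simp)
  have key : ∀ s x, HasDerivAt (fun r => g r x) (fderiv ℝ (uncurry g) (s, x) (1, 0)) s := by
    intro s x
    have := (hd (s, x)).hasFDerivAt.comp_hasDerivAt s (f := fun r => (r, x))
      ((hasDerivAt_id s).prodMk (hasDerivAt_const s x))
    exact this
  have e : (uncurry fun s x => deriv (fun r => g r x) s) = fun p => fderiv ℝ (uncurry g) p (1, 0) := by
    ext ⟨s, x⟩; exact (key s x).deriv
  refine ⟨?_, ?_, fun s x => (key s x).differentiableAt.hasDerivAt⟩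
  · rw [e]
    exact (hg.fderiv_right (by simp)).clm_apply contDiff_const
  · rw [e]
    exact (hc.fderiv ℝ).comp_left (g := fun L : ℝ × ℝ →L[ℝ] ℝ => L (1, 0)) (by simp)

lemma CdfFlow.cont_int2 {F : ℝ → ℝ → ℝ} (hF : CdfFlow F) {ψ : ℝ → ℝ} (hψ : Continuous ψ)
    {k : ℝ → ℝ → ℝ} (hk : Continuous (uncurry k)) (hc : HasCompactSupport (uncurry k)) :
    Continuous fun t => ∫ x, ψ (F t x) * k t x := by
  obtain ⟨M, hM0, hM⟩ := bdd01 hψ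
  obtain ⟨κ, hκ, hb⟩ := exists_dom hk hc
  rw [continuous_iff_continuousAt]
  intro t
  apply tendsto_integral_filter_of_dominated_convergence (fun y => M * κ y)
  · refine Eventually.of_forall fun s => ?_
    have h2 : Measurable (fun y => k s y) := hk.measurable.comp measurable_prodMk_left
    exact ((hψ.measurable.comp (hF.mono s).measurable).mul h2).aestronglyMeasurable
  · refine Eventually.of_forall fun q => Eventually.of_forall fun y => ?_
    rw [norm_mul]
    exact mul_le_mul (hM _ (hF.mem _ _)) (hb _ _) (norm_nonneg _) hM0
  · exact hκ.const_mul M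
  · filter_upwards [mono_ae_cont (hF.mono t)] with y hy
    have h2 : Continuous (fun s => k s y) := hk.comp (by fun_prop : Continuous fun s : ℝ => (s, y))
    exact (hψ.continuousAt.comp (hF.cont t y hy)).mul h2.continuousAt

lemma CdfFlow.integrable_mul {F : ℝ → ℝ → ℝ} (hF : CdfFlow F) {ψ : ℝ → ℝ} (hψ : Continuous ψ)
    (t : ℝ) {k : ℝ → ℝ} (hk : Integrable k) : Integrable (fun x => ψ (F t x) * k x) := by
  obtain ⟨M, hM0, hM⟩ := bdd01 hψ
  refine Integrable.bdd_mul (c := M) hk ?_ ?_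
  · exact (hψ.measurable.comp (hF.mono t).measurable).aestronglyMeasurable
  · exact Eventually.of_forall fun y => hM _ (hF.mem _ _)

lemma cs_int {k : ℝ → ℝ} (hk : Continuous k) (hc : HasCompactSupport k) : Integrable k :=
  hk.integrable_of_hasCompactSupport hc

lemma CdfFlow.Lop_eq {F : ℝ → ℝ → ℝ} (hF : CdfFlow F) {A B : ℝ → ℝ} (hA : Continuous A)
    (hB : Continuous B) {φ : ℝ → ℝ} (h : ContDiff ℝ (⊤ : ℕ∞) φ) (hc : HasCompactSupport φ) (t : ℝ) :
    Lop A B (F t) φ = (1/2) * (∫ x, A (F t x) * deriv (deriv φ) x) + ∫ x, B (F t x) * deriv φ x := by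
  have h1 := smooth_deriv h
  have h2 := smooth_deriv h1
  have i1 := hF.integrable_mul hA t (cs_int h2.continuous hc.deriv.deriv)
  have i2 := hF.integrable_mul hB t (cs_int h1.continuous hc.deriv)
  rw [Lop, ← integral_const_mul, ← integral_add (i1.const_mul _) i2]
  congr 1; ext x; ring

lemma CdfFlow.Lop_cont {F : ℝ → ℝ → ℝ} (hF : CdfFlow F) {A B : ℝ → ℝ} (hA : Continuous A)
    (hB : Continuous B) {φ : ℝ → ℝ} (h : ContDiff ℝ (⊤ : ℕ∞) φ) (hc : HasCompactSupport φ) :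
    Continuous fun t => Lop A B (F t) φ := by
  have h1 := smooth_deriv h
  have h2 := smooth_deriv h1
  simp only [hF.Lop_eq hA hB h hc]
  exact (continuous_const.mul (hF.int_cont hA (cs_int h2.continuous hc.deriv.deriv))).add
    (hF.int_cont hB (cs_int h1.continuous hc.deriv))

lemma WW_of_weak {A B F₀ : ℝ → ℝ} {F G : ℝ → ℝ → ℝ} (hF : CdfFlow F) (hA : Continuous A)
    (hB : Continuous B) (hG : IsWeakSolution A B F₀ G) (hGF : ∀ t, 0 ≤ t → ∀ x, G t x = F t x) :
    WW A B F₀ F := by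
  intro φ hφ hc t ht
  let ζ : ContDiffBump (0:ℝ) := ⟨t+1, t+2, by linarith, by linarith⟩
  have hζs : ContDiff ℝ (⊤ : ℕ∞) (ζ : ℝ → ℝ) := ζ.contDiff
  have hζ1 : ∀ s ∈ Icc 0 t, (ζ : ℝ → ℝ) =ᶠ[𝓝 s] fun _ => 1 := by
    intro s hs
    have : Metric.ball (0:ℝ) (t+1) ∈ 𝓝 s := Metric.isOpen_ball.mem_nhds (by
      rw [mem_ball_zero_iff, Real.norm_eq_abs, abs_lt]; constructor <;> linarith [hs.1, hs.2])
    filter_upwards [this] with r hr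
    exact ζ.one_of_mem_closedBall (Metric.ball_subset_closedBall hr)
  have hg : ContDiff ℝ (⊤ : ℕ∞) (uncurry fun s x => ζ s * φ x) :=
    (hζs.comp contDiff_fst).mul (hφ.comp contDiff_snd)
  have hgc : HasCompactSupport (uncurry fun s x => ζ s * φ x) := by
    refine HasCompactSupport.intro (ζ.hasCompactSupport.prod hc) ?_
    rintro ⟨s, x⟩ h
    simp only [uncurry]
    by_cases h1 : s ∈ tsupport ζ
    · have h2 : x ∉ tsupport φ := fun h2 => h ⟨h1, h2⟩
      rw [image_eq_zero_of_notMem_tsupport h2, mul_zero]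
    · rw [image_eq_zero_of_notMem_tsupport h1, zero_mul]
  have key := hG _ hg hgc t ht
  simp only [(hζ1 t ⟨ht, le_rfl⟩).eq_of_nhds, (hζ1 0 ⟨le_rfl, ht⟩).eq_of_nhds, one_mul] at key
  have e1 : ∀ x, G t x = F t x := hGF t ht
  simp only [e1] at key
  rw [key]
  have h1 := smooth_deriv hφ
  have h2 := smooth_deriv h1
  have e2 : ∀ x, (∫ s in (0:ℝ)..t, ((1/2) * A (G s x) * deriv (deriv (fun y => ζ s * φ y)) x
            + B (G s x) * deriv (fun y => ζ s * φ y) x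
            + G s x * deriv (fun r => ζ r * φ x) s)) =
      ∫ s in (0:ℝ)..t, ((1/2) * A (F s x) * deriv (deriv φ) x + B (F s x) * deriv φ x) := by
    intro x
    apply intervalIntegral.integral_congr
    intro s hs
    rw [uIcc_of_le ht] at hs
    have hz := hζ1 s hs
    have d1 : deriv (fun r => ζ r * φ x) s = 0 := by
      have : (fun r => ζ r * φ x) =ᶠ[𝓝 s] fun _ => 1 * φ x := by
        filter_upwards [hz] with r hr; rw [hr]
      rw [this.deriv_eq]; simp
    simp only [hz.eq_of_nhds, one_mul, d1, hGF s hs.1, mul_zero, add_zero]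
  simp only [e2]
  obtain ⟨MA, hMA0, hMA⟩ := bdd01 hA
  obtain ⟨MB, hMB0, hMB⟩ := bdd01 hB
  refine fub (k := fun x => (1/2) * MA * |deriv (deriv φ) x| + MB * |deriv φ x|) ?_ ?_ ht ?_
  · have := hF.meas
    have m1 : Measurable fun p : ℝ × ℝ => A (uncurry F p) := hA.measurable.comp this
    have m2 : Measurable fun p : ℝ × ℝ => B (uncurry F p) := hB.measurable.comp this
    exact ((m1.const_mul (1/2)).mul (h2.continuous.measurable.comp measurable_snd)).add
      (m2.mul (h1.continuous.measurable.comp measurable_snd))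
  · exact ((cs_int h2.continuous hc.deriv.deriv).abs.const_mul _).add
      ((cs_int h1.continuous hc.deriv).abs.const_mul _)
  · intro s x
    refine (abs_add_le _ _).trans ?_
    rw [abs_mul, abs_mul, abs_mul, abs_of_pos (show (0:ℝ) < 1/2 by norm_num)]
    gcongr
    · exact hMA _ (hF.mem _ _)
    · exact hMB _ (hF.mem _ _)
end


section
lemma slice_cs {g : ℝ → ℝ → ℝ} (hg : ContDiff ℝ (⊤ : ℕ∞) (uncurry g))
    (hc : HasCompactSupport (uncurry g)) (t : ℝ) :
    ContDiff ℝ (⊤ : ℕ∞) (g t) ∧ HasCompactSupport (g t) := by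
  constructor
  · exact hg.comp (contDiff_prodMk_right t)
  · refine HasCompactSupport.intro (hc.image continuous_snd) ?_
    intro x hx
    exact image_eq_zero_of_notMem_tsupport (f := uncurry g) (x := (t, x)) (fun h => hx ⟨_, h, rfl⟩)

lemma deriv_second {g : ℝ → ℝ → ℝ} (hg : ContDiff ℝ (⊤ : ℕ∞) (uncurry g))
    (hc : HasCompactSupport (uncurry g)) {F : ℝ → ℝ → ℝ} (hF : CdfFlow F) (t : ℝ) :
    HasDerivAt (fun s => ∫ x, F s x * (g s x - g t x)) (∫ x, F t x * deriv (fun r => g r x) t) t := by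
  obtain ⟨p1, p2, p3⟩ := partial_t hg hc
  obtain ⟨κ, hκ, hb⟩ := exists_dom p1.continuous p2
  rw [hasDerivAt_iff_tendsto_slope]
  have e : ∀ s, slope (fun s => ∫ x, F s x * (g s x - g t x)) t s
      = ∫ x, F s x * ((s - t)⁻¹ * (g s x - g t x)) := by
    intro s
    simp only [slope_def_field, sub_self, mul_zero, integral_zero, sub_zero]
    rw [div_eq_inv_mul, ← integral_const_mul]
    congr 1; ext x; ring
  refine Tendsto.congr (fun s => (e s).symm) ?_
  apply tendsto_integral_filter_of_dominated_convergence κ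
  · refine Eventually.of_forall fun s => ?_
    have h1 := (slice_cs hg hc s).1.continuous.measurable
    have h2 := (slice_cs hg hc t).1.continuous.measurable
    exact ((hF.mono s).measurable.mul ((h1.sub h2).const_mul _)).aestronglyMeasurable
  · filter_upwards [self_mem_nhdsWithin] with s hs
    refine Eventually.of_forall fun x => ?_
    have hne : s - t ≠ 0 := sub_ne_zero.2 hs
    have mv : ‖g s x - g t x‖ ≤ κ x * ‖s - t‖ :=
      Convex.norm_image_sub_le_of_norm_hasDerivWithin_le (f := fun r => g r x) (s := univ)
        (fun r _ => (p3 r x).hasDerivWithinAt) (fun r _ => hb r x) convex_univ trivial trivial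
    rw [norm_mul, norm_mul, norm_inv, Real.norm_eq_abs (F s x), abs_of_nonneg (hF.nonneg _ _)]
    have hpos : 0 < ‖s - t‖ := norm_pos_iff.2 hne
    have h3 : ‖s - t‖⁻¹ * ‖g s x - g t x‖ ≤ κ x := by
      rw [inv_mul_le_iff₀ hpos]; linarith
    have h4 : 0 ≤ ‖s - t‖⁻¹ * ‖g s x - g t x‖ := by positivity
    nlinarith [hF.le_one s x, hF.nonneg s x]
  · exact hκ
  · filter_upwards [mono_ae_cont (hF.mono t)] with x hx
    have h1 := (hF.cont t x hx).tendsto.mono_left (nhdsWithin_le_nhds (s := {t}ᶜ))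
    have h2 := (hasDerivAt_iff_tendsto_slope.1 (p3 t x))
    refine h1.mul (h2.congr fun s => ?_)
    rw [slope_def_field, div_eq_inv_mul]

lemma weak_of_WW {A B F₀ : ℝ → ℝ} {F : ℝ → ℝ → ℝ} (hF : CdfFlow F) (hA : Continuous A)
    (hB : Continuous B) (hW : WW A B F₀ F) : IsWeakSolution A B F₀ F := by
  intro g hg hc t ht
  obtain ⟨t1, t2, t3⟩ := partial_t hg hc
  obtain ⟨x1, x2, x3⟩ := partial_x hg hc
  obtain ⟨y1, y2, y3⟩ := partial_x x1 x2
  have hmF := hF.meas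
  have mA : Measurable fun p : ℝ × ℝ => A (uncurry F p) := hA.measurable.comp hmF
  have mB : Measurable fun p : ℝ × ℝ => B (uncurry F p) := hB.measurable.comp hmF
  obtain ⟨MA, hMA0, hMA⟩ := bdd01 hA
  obtain ⟨MB, hMB0, hMB⟩ := bdd01 hB
  obtain ⟨κ1, hκ1, hb1⟩ := exists_dom t1.continuous t2
  obtain ⟨κ2, hκ2, hb2⟩ := exists_dom x1.continuous x2
  obtain ⟨κ3, hκ3, hb3⟩ := exists_dom y1.continuous y2
  rw [fub (k := fun x => (1/2) * MA * κ3 x + MB * κ2 x + 1 * κ1 x) ?_ ?_ ht ?_]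
  rotate_left
  · exact (((mA.const_mul (1/2)).mul y1.continuous.measurable).add
      (mB.mul x1.continuous.measurable)).add (hmF.mul t1.continuous.measurable)
  · exact ((hκ3.const_mul _).add (hκ2.const_mul _)).add (hκ1.const_mul _)
  · intro s x
    refine (abs_add_le _ _).trans (add_le_add ((abs_add_le _ _).trans ?_) ?_)
    · rw [abs_mul, abs_mul, abs_mul, abs_of_pos (show (0:ℝ) < 1/2 by norm_num)]
      gcongr
      · exact hMA _ (hF.mem _ _)
      · exact hb3 s x
      · exact hMB _ (hF.mem _ _)
      · exact hb2 s x
    · rw [abs_mul, abs_of_nonneg (hF.nonneg _ _)]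
      gcongr
      · exact hF.le_one _ _
      · exact hb1 s x
  -- splitting of the integrand
  have hsl := fun s => slice_cs hg hc s
  have split : ∀ s, (∫ x, ((1/2) * A (F s x) * deriv (deriv (fun y => g s y)) x
            + B (F s x) * deriv (fun y => g s y) x
            + F s x * deriv (fun r => g r x) s)) = Lop A B (F s) (g s) +
            ∫ x, F s x * deriv (fun r => g r x) s := by
    intro s
    have h1 := smooth_deriv (hsl s).1
    have h2 := smooth_deriv h1
    have i1 := hF.integrable_mul hA s (cs_int h2.continuous (hsl s).2.deriv.deriv)
    have i2 := hF.integrable_mul hB s (cs_int h1.continuous (hsl s).2.deriv)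
    have st := slice_cs t1 t2 s
    have i3 := hF.integrable_mul continuous_id s (cs_int st.1.continuous st.2)
    simp only [id] at i3
    rw [Lop, ← integral_add ?_ i3]
    · refine ((i1.const_mul (1/2)).add i2).congr (Eventually.of_forall fun x => ?_)
      simp only [Pi.add_apply]; ring
  simp only [split]
  set N : ℝ → ℝ := fun s => Lop A B (F s) (g s) + ∫ x, F s x * deriv (fun r => g r x) s with hN
  have Ncont : Continuous N := by
    have c1 := hF.cont_int2 hA y1.continuous y2
    have c2 := hF.cont_int2 hB x1.continuous x2
    have c3 := hF.cont_int2 continuous_id t1.continuous t2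
    refine Continuous.add ?_ c3
    have : (fun s => Lop A B (F s) (g s)) = fun s => (1/2) * (∫ x, A (F s x) * deriv (deriv (g s)) x)
        + ∫ x, B (F s x) * deriv (g s) x := by
      ext s; exact hF.Lop_eq hA hB (hsl s).1 (hsl s).2 s
    rw [this]
    exact (continuous_const.mul c1).add c2
  have Tcont : Continuous fun s => ∫ x, F s x * g s x := hF.cont_int2 continuous_id hg.continuous hc
  have hder : ∀ s ∈ Ioo 0 t, HasDerivAt (fun s => ∫ x, F s x * g s x) (N s) s := by
    intro s hs
    have d2 := deriv_second hg hc hF s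
    have d1 : HasDerivAt (fun r => (∫ x, g s x * F₀ x) + ∫ q in (0:ℝ)..r, Lop A B (F q) (g s))
        (Lop A B (F s) (g s)) s := by
      refine HasDerivAt.const_add _ ?_
      have := hF.Lop_cont hA hB (hsl s).1 (hsl s).2
      exact intervalIntegral.integral_hasDerivAt_right (this.intervalIntegrable _ _)
        (this.stronglyMeasurableAtFilter _ _) this.continuousAt
    refine (d1.add d2).congr_of_eventuallyEq ?_
    filter_upwards [Ioi_mem_nhds hs.1] with r hr
    have := hW (g s) (hsl s).1 (hsl s).2 r (le_of_lt hr)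
    simp only [Pi.add_apply]
    rw [← this, add_sub_cancel]
    have i1 := hF.integrable_mul continuous_id r (cs_int (hsl s).1.continuous (hsl s).2)
    have i2 := hF.integrable_mul continuous_id r (cs_int (hsl r).1.continuous (hsl r).2)
    simp only [id] at i1 i2
    have e1 : (fun x => g s x * F r x) = fun x => F r x * g s x := by ext x; ring
    rw [e1, ← integral_add i1]
    · congr 1; ext x; ring
    · refine (i2.sub i1).congr (Eventually.of_forall fun x => ?_)
      simp only [Pi.sub_apply]; ring
  have ftc := intervalIntegral.integral_eq_sub_of_hasDerivAt_of_le ht Tcont.continuousOn hder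
    (Ncont.intervalIntegrable _ _)
  rw [ftc]
  have h0 := hW (g 0) (hsl 0).1 (hsl 0).2 0 le_rfl
  rw [intervalIntegral.integral_same, sub_eq_zero] at h0
  rw [← h0]
  congr 1 <;> (congr 1; ext x; ring)
end


section
structure Mol (k : ℝ → ℝ) (ε : ℝ) : Prop where
  pos : 0 < ε
  smooth : ContDiff ℝ (⊤ : ℕ∞) k
  supp : ∀ y, ε ≤ |y| → k y = 0
  nonneg : ∀ y, 0 ≤ k y
  int : ∫ y, k y = 1

lemma exists_mol {ε : ℝ} (hε : 0 < ε) : ∃ k, Mol k ε := by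
  let f : ContDiffBump (0:ℝ) := ⟨ε/2, ε, by linarith, by linarith⟩
  refine ⟨f.normed volume, hε, f.contDiff_normed, fun y hy => ?_, f.nonneg_normed, f.integral_normed⟩
  have : y ∉ support (f.normed volume) := by
    rw [f.support_normed_eq]
    simpa using hy
  simpa using this

namespace Mol
variable {k : ℝ → ℝ} {ε : ℝ}

lemma cs (h : Mol k ε) : HasCompactSupport k := by
  refine HasCompactSupport.intro (isCompact_Icc (a := -ε) (b := ε)) fun y hy => h.supp y ?_
  by_contra hlt
  exact hy (by rw [not_le, abs_lt] at hlt; exact ⟨hlt.1.le, hlt.2.le⟩)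

lemma supp' (h : Mol k ε) : ∀ y, ε < |y| → deriv k y = 0 := by
  intro y hy
  have : k =ᶠ[𝓝 y] fun _ => 0 := by
    have : ∀ᶠ z in 𝓝 y, ε < |z| := (continuous_abs.tendsto y).eventually (lt_mem_nhds hy)
    filter_upwards [this] with z hz using h.supp z hz.le
  rw [this.deriv_eq]; simp

lemma s1 (h : Mol k ε) : ContDiff ℝ (⊤ : ℕ∞) (deriv k) := smooth_deriv h.smooth
lemma s2 (h : Mol k ε) : ContDiff ℝ (⊤ : ℕ∞) (deriv (deriv k)) := smooth_deriv h.s1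
lemma i0 (h : Mol k ε) : Integrable k := cs_int h.smooth.continuous h.cs
lemma i1 (h : Mol k ε) : Integrable (deriv k) := cs_int h.s1.continuous h.cs.deriv
lemma i2 (h : Mol k ε) : Integrable (deriv (deriv k)) := cs_int h.s2.continuous h.cs.deriv.deriv
end Mol

lemma cv_hasDerivAt {f k : ℝ → ℝ} (hf : Measurable f) {M : ℝ} (hM : ∀ x, |f x| ≤ M)
    (hk : ContDiff ℝ (⊤ : ℕ∞) k) (hc : HasCompactSupport k) (x : ℝ) :
    HasDerivAt (cv f k) (cv f (deriv k) x) x := by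
  have hl : LocallyIntegrable f volume := by
    refine LocallyIntegrable.mono (f := fun _ => M) (locallyIntegrable_const M) hf.aestronglyMeasurable ?_
    exact Eventually.of_forall fun y => (hM y).trans (le_abs_self M)
  have := hc.hasDerivAt_convolution_right (ContinuousLinearMap.mul ℝ ℝ) hl (hk.of_le (by simp)) x
  have e : ∀ g, cv f g = (convolution f g (ContinuousLinearMap.mul ℝ ℝ) volume) := by
    intro g; ext z; rw [cv_swap]; rfl
  rw [e, e]; exact this

lemma cv_integrable {f k : ℝ → ℝ} (hf : Measurable f) {M : ℝ} (hM : ∀ x, |f x| ≤ M)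
    (hk : Integrable k) (x : ℝ) : Integrable (fun y => f (x - y) * k y) := by
  refine Integrable.bdd_mul (c := M) hk ?_ ?_
  · exact (hf.comp (measurable_const.sub measurable_id)).aestronglyMeasurable
  · exact Eventually.of_forall fun y => hM _

lemma cv_mono {f k : ℝ → ℝ} {ε M : ℝ} (hk : Mol k ε) (hf : Monotone f) (hM : ∀ x, |f x| ≤ M) :
    Monotone (cv f k) := by
  intro x y hxy
  refine integral_mono (cv_integrable hf.measurable hM hk.i0 x) (cv_integrable hf.measurable hM hk.i0 y)
    fun z => ?_
  exact mul_le_mul_of_nonneg_right (hf (by linarith)) (hk.nonneg z)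

lemma cv_bounds {f k : ℝ → ℝ} {ε M : ℝ} (hk : Mol k ε) (hf : Monotone f) (hM : ∀ x, |f x| ≤ M) (x : ℝ) :
    f (x - ε) ≤ cv f k x ∧ cv f k x ≤ f (x + ε) := by
  have e : ∀ c : ℝ, c = ∫ y, c * k y := fun c => by rw [integral_const_mul, hk.int, mul_one]
  have hi := cv_integrable hf.measurable hM hk.i0 x
  constructor
  · rw [e (f (x - ε))]
    refine integral_mono (hk.i0.const_mul _) hi fun y => ?_
    rcases le_or_gt ε |y| with h | h
    · simp [hk.supp y h]
    · exact mul_le_mul_of_nonneg_right (hf (by linarith [(abs_lt.1 h).2])) (hk.nonneg y)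
  · rw [e (f (x + ε))]
    refine integral_mono hi (hk.i0.const_mul _) fun y => ?_
    rcases le_or_gt ε |y| with h | h
    · simp [hk.supp y h]
    · exact mul_le_mul_of_nonneg_right (hf (by linarith [(abs_lt.1 h).1])) (hk.nonneg y)

lemma cv_deriv_nonneg {f k : ℝ → ℝ} {ε M : ℝ} (hk : Mol k ε) (hf : Monotone f) (hM : ∀ x, |f x| ≤ M)
    (x : ℝ) : 0 ≤ cv f (deriv k) x := by
  have := cv_hasDerivAt hf.measurable hM hk.smooth hk.cs x
  rw [← this.deriv]
  exact (cv_mono hk hf hM).deriv_nonneg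

lemma cv_deriv_nonneg' {f k : ℝ → ℝ} {ε x : ℝ} (hk : Mol k ε)
    (hf : MonotoneOn f (Icc (x - ε) (x + ε))) : 0 ≤ cv f (deriv k) x := by
  have hle : x - ε ≤ x + ε := by linarith [hk.pos]
  let f' : ℝ → ℝ := IccExtend hle (fun z => f z)
  have hf' : Monotone f' := by
    apply Monotone.IccExtend
    intro y z hyz
    exact hf y.2 z.2 hyz
  have hb : ∀ y, |f' y| ≤ |f (x - ε)| + |f (x + ε)| := by
    intro y
    have hm := (projIcc (x - ε) (x + ε) hle y).2
    have h1 := hf (left_mem_Icc.2 hle) hm hm.1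
    have h2 := hf hm (right_mem_Icc.2 hle) hm.2
    have : f' y = f (projIcc (x - ε) (x + ε) hle y) := rfl
    rw [this, abs_le]
    constructor
    · linarith [neg_abs_le (f (x - ε)), abs_nonneg (f (x + ε))]
    · linarith [le_abs_self (f (x + ε)), abs_nonneg (f (x - ε))]
  have h := cv_deriv_nonneg hk hf' hb x
  have e : cv f' (deriv k) x = cv f (deriv k) x := by
    unfold cv
    congr 1; ext y
    rcases lt_or_ge ε |y| with h | h
    · simp [hk.supp' y h]
    · have : x - y ∈ Icc (x - ε) (x + ε) := by
        have := abs_le.1 h; constructor <;> linarith [this.1, this.2]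
      simp only [f']
      rw [IccExtend_of_mem _ _ this]
  rwa [e] at h

namespace CdfFlow
variable {F : ℝ → ℝ → ℝ} {k : ℝ → ℝ} {ε : ℝ}

lemma comp_bdd (hF : CdfFlow F) {ψ : ℝ → ℝ} (hψ : Continuous ψ) (t : ℝ) :
    Measurable (fun y => ψ (F t y)) ∧ ∃ M, 0 ≤ M ∧ ∀ y, |ψ (F t y)| ≤ M := by
  obtain ⟨M, h0, hM⟩ := bdd01 hψ
  exact ⟨hψ.measurable.comp (hF.mono t).measurable, M, h0, fun y => hM _ (hF.mem _ _)⟩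

lemma abs_le_one (hF : CdfFlow F) (t x : ℝ) : |F t x| ≤ 1 := by
  rw [abs_of_nonneg (hF.nonneg _ _)]; exact hF.le_one _ _

lemma cv_deriv (hF : CdfFlow F) {ψ : ℝ → ℝ} (hψ : Continuous ψ) {g : ℝ → ℝ} 
    (hk : ContDiff ℝ (⊤ : ℕ∞) g) (hc : HasCompactSupport g) (t x : ℝ) :
    HasDerivAt (cv (fun y => ψ (F t y)) g) (cv (fun y => ψ (F t y)) (deriv g) x) x := by
  obtain ⟨h1, M, h0, hM⟩ := hF.comp_bdd hψ t
  exact cv_hasDerivAt h1 hM hk hc x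

/-- the key comparison of the mollified fluxes with the mollified density -/
lemma flux_est (hF : CdfFlow F) (hk : Mol k ε) {Ψ α : ℝ → ℝ} (hΨ : ∀ u, HasDerivAt Ψ (α u) u)
    {t x α0 ω : ℝ} (hω : ∀ v ∈ Icc (F t (x - ε)) (F t (x + ε)), |α v - α0| ≤ ω) :
    |cv (fun y => Ψ (F t y)) (deriv k) x - α0 * cv (F t) (deriv k) x| ≤ ω * cv (F t) (deriv k) x := by
  have cΨ : Continuous Ψ := continuous_iff_continuousAt.2 fun u => (hΨ u).continuousAt
  obtain ⟨m1, M, h0, hM⟩ := hF.comp_bdd cΨ t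
  have I1 := cv_integrable m1 hM hk.i1 x
  have I2 := cv_integrable (hF.mono t).measurable (hF.abs_le_one t) hk.i1 x
  have key : ∀ σ : ℝ, (∀ v ∈ Icc (F t (x - ε)) (F t (x + ε)), 0 ≤ ω + σ * (α v - α0)) →
      0 ≤ ω * cv (F t) (deriv k) x + σ * (cv (fun y => Ψ (F t y)) (deriv k) x - α0 * cv (F t) (deriv k) x) := by
    intro σ hσ
    have hd : ∀ v, HasDerivAt (fun v => ω * v + σ * (Ψ v - α0 * v)) (ω + σ * (α v - α0)) v := by
      intro v
      have := ((hasDerivAt_id' v).const_mul ω).fun_add (((hΨ v).fun_sub ((hasDerivAt_id' v).const_mul α0)).const_mul σ)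
      simpa using this
    have hm : MonotoneOn (fun v => ω * v + σ * (Ψ v - α0 * v)) (Icc (F t (x - ε)) (F t (x + ε))) := by
      apply monotoneOn_of_deriv_nonneg (convex_Icc _ _)
      · exact fun v _ => (hd v).continuousAt.continuousWithinAt
      · exact fun v _ => (hd v).differentiableAt.differentiableWithinAt
      · intro v hv
        rw [(hd v).deriv]
        exact hσ v (interior_subset hv)
    have := cv_deriv_nonneg' (f := fun y => ω * F t y + σ * (Ψ (F t y) - α0 * F t y)) (x := x) hk (by
      intro y hy z hz hyz
      exact hm ⟨hF.mono t hy.1, hF.mono t hy.2⟩ ⟨hF.mono t hz.1, hF.mono t hz.2⟩ (hF.mono t hyz))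
    have I3 : Integrable (fun y => σ * (Ψ (F t (x - y)) * deriv k y - α0 * (F t (x-y) * deriv k y))) :=
      (I1.sub (I2.const_mul _)).const_mul _
    convert this using 1
    unfold cv
    rw [← integral_const_mul, ← integral_const_mul, ← integral_sub I1 (I2.const_mul _), ← integral_const_mul,
      ← integral_add (I2.const_mul _) I3]
    congr 1; ext y; ring
  have k1 := key 1 (fun v hv => by linarith [(abs_le.1 (hω v hv)).1])
  have k2 := key (-1) (fun v hv => by linarith [(abs_le.1 (hω v hv)).2])
  rw [abs_le]; constructor <;> linarith

lemma p_nonneg (hF : CdfFlow F) (hk : Mol k ε) (t x : ℝ) : 0 ≤ cv (F t) (deriv k) x :=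
  cv_deriv_nonneg hk (hF.mono t) (hF.abs_le_one t) x

lemma J_bounds (hF : CdfFlow F) (hk : Mol k ε) {A B a b : ℝ → ℝ} {C : ℝ} (hN : Nice A B a b C) (t x : ℝ) :
    0 ≤ cv (fun y => A (F t y)) (deriv k) x ∧
    cv (fun y => A (F t y)) (deriv k) x ≤ C * cv (F t) (deriv k) x := by
  have := abs_le.1 (hF.flux_est hk hN.hA (t := t) (x := x) (α0 := C/2) (ω := C/2) (fun v _ => by
    rw [abs_le]; constructor <;> linarith [hN.a0 v, hN.aC v]))
  constructor <;> linarith [this.1, this.2]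

lemma p_tendsto (hF : CdfFlow F) (hk : Mol k ε) (t : ℝ) :
    Tendsto (cv (F t) (deriv k)) atTop (𝓝 0) ∧ Tendsto (cv (F t) (deriv k)) atBot (𝓝 0) := by
  have hz : ∫ y, deriv k y = 0 := by
    have h1 := cv_hasDerivAt (f := fun _ => (1:ℝ)) measurable_const (M := 1) (by simp) hk.smooth hk.cs 0
    have h2 : cv (fun _ => (1:ℝ)) k = fun _ => 1 := by
      ext x; simp [cv, hk.int]
    rw [h2] at h1
    have := h1.unique (hasDerivAt_const _ _)
    simpa [cv] using this
  have gen : ∀ (l : Filter ℝ) [l.IsCountablyGenerated] (c : ℝ),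
      (∀ y, Tendsto (fun x => F t (x - y)) l (𝓝 c)) → Tendsto (cv (F t) (deriv k)) l (𝓝 0) := by
    intro l _ c hl
    have : Tendsto (cv (F t) (deriv k)) l (𝓝 (∫ y, c * deriv k y)) := by
      apply tendsto_integral_filter_of_dominated_convergence (fun y => |deriv k y|)
      · exact Eventually.of_forall fun x =>
          (cv_integrable (hF.mono t).measurable (hF.abs_le_one t) hk.i1 x).aestronglyMeasurable
      · refine Eventually.of_forall fun x => Eventually.of_forall fun y => ?_
        rw [norm_mul]
        have := hF.abs_le_one t (x - y)
        exact mul_le_of_le_one_left (norm_nonneg _) this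
      · exact hk.i1.abs
      · exact Eventually.of_forall fun y => (hl y).mul_const _
    simpa [integral_const_mul, hz] using this
  constructor
  · exact gen atTop 1 fun y => (hF.top t).comp (tendsto_atTop_add_const_right _ (-y) tendsto_id)
  · exact gen atBot 0 fun y => (hF.bot t).comp (tendsto_atBot_add_const_right _ (-y) tendsto_id)

/-- the right-hand side of the mollified equation -/
def rhs (A B : ℝ → ℝ) (F : ℝ → ℝ → ℝ) (k : ℝ → ℝ) (t x : ℝ) : ℝ :=
  (1/2) * cv (fun y => A (F t y)) (deriv (deriv k)) x - cv (fun y => B (F t y)) (deriv k) x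

lemma rhs_cont (hF : CdfFlow F) (hk : Mol k ε) {A B : ℝ → ℝ} (hA : Continuous A) (hB : Continuous B) :
    Continuous (uncurry (rhs A B F k)) :=
  (continuous_const.mul (hF.cv_cont hA hk.i2)).sub (hF.cv_cont hB hk.i1)

lemma moll_eq (hF : CdfFlow F) (hk : Mol k ε) {A B F₀ : ℝ → ℝ} (hA : Continuous A) (hB : Continuous B)
    (hW : WW A B F₀ F) {t : ℝ} (ht : 0 ≤ t) (x : ℝ) :
    cv (F t) k x = cv F₀ k x + ∫ s in (0:ℝ)..t, rhs A B F k s x := by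
  have hs : ContDiff ℝ (⊤ : ℕ∞) (fun y => k (x - y)) := hk.smooth.comp (contDiff_const.sub contDiff_id)
  have hcs : HasCompactSupport (fun y => k (x - y)) := by
    refine HasCompactSupport.intro (isCompact_Icc (a := x - ε) (b := x + ε)) fun y hy => hk.supp _ ?_
    by_contra hlt
    rw [not_le, abs_lt] at hlt
    exact hy ⟨by linarith, by linarith⟩
  have d1 : deriv (fun y => k (x - y)) = fun y => - deriv k (x - y) := by
    ext y; rw [deriv_comp_const_sub]
  have d2 : deriv (deriv (fun y => k (x - y))) = fun y => deriv (deriv k) (x - y) := by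
    rw [d1]; ext y
    rw [deriv.fun_neg, deriv_comp_const_sub (f := deriv k), neg_neg]
  have h := hW _ hs hcs t ht
  have e : ∀ s, Lop A B (F s) (fun y => k (x - y)) = rhs A B F k s x := by
    intro s
    rw [hF.Lop_eq hA hB hs hcs, d2, d1, rhs, cv_swap, cv_swap]
    simp only [mul_neg, integral_neg]; ring
  simp only [e] at h
  rw [← h, cv_swap, cv_swap]
  simp only [mul_comm]; ring

lemma moll_deriv (hF : CdfFlow F) (hk : Mol k ε) {A B F₀ : ℝ → ℝ} (hA : Continuous A) (hB : Continuous B)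
    (hW : WW A B F₀ F) {t : ℝ} (ht : 0 < t) (x : ℝ) :
    HasDerivAt (fun t => cv (F t) k x) (rhs A B F k t x) t := by
  have hc : Continuous fun s => rhs A B F k s x :=
    (hF.rhs_cont hk hA hB).comp (by fun_prop : Continuous fun s : ℝ => (s, x))
  have d : HasDerivAt (fun t => cv F₀ k x + ∫ s in (0:ℝ)..t, rhs A B F k s x) (rhs A B F k t x) t :=
    (intervalIntegral.integral_hasDerivAt_right (hc.intervalIntegrable _ _)
        (hc.stronglyMeasurableAtFilter _ _) hc.continuousAt).const_add _
  refine d.congr_of_eventuallyEq ?_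
  filter_upwards [Ioi_mem_nhds ht] with r hr
  exact hF.moll_eq hk hA hB hW (le_of_lt hr) x
end CdfFlow
end


section
lemma swapII {H : ℝ → ℝ → ℝ} {a b c d : ℝ} (hab : a ≤ b) (hcd : c ≤ d)
    (hH : ContinuousOn (uncurry H) (Icc a b ×ˢ Icc c d)) :
    ∫ x in a..b, ∫ y in c..d, H x y = ∫ y in c..d, ∫ x in a..b, H x y := by
  simp only [intervalIntegral.integral_of_le hab, intervalIntegral.integral_of_le hcd]
  apply integral_integral_swap
  rw [Measure.prod_restrict]
  have : IntegrableOn (uncurry H) (Icc a b ×ˢ Icc c d) (volume.prod volume) :=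
    hH.integrableOn_compact (isCompact_Icc.prod isCompact_Icc)
  exact this.mono_set (prod_mono Ioc_subset_Icc_self Ioc_subset_Icc_self)

namespace CdfFlow
variable {F : ℝ → ℝ → ℝ} {k : ℝ → ℝ} {ε : ℝ} {A B a b F₀ : ℝ → ℝ} {C : ℝ}

lemma AB_bd (hN : Nice A B a b C) : ∀ u ∈ Icc (0:ℝ) 1, 0 ≤ A u ∧ A u ≤ C ∧ |B u| ≤ C := by
  have hAm : Monotone A := monotone_of_deriv_nonneg (fun u => (hN.hA u).differentiableAt)
    (fun u => by rw [(hN.hA u).deriv]; exact hN.a0 u)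
  intro u hu
  have hA : |A u - A 0| ≤ C * |u - 0| := by
    refine Convex.norm_image_sub_le_of_norm_hasDerivWithin_le (s := univ) (f := A) (f' := a)
      (fun x _ => (hN.hA x).hasDerivWithinAt) (fun x _ => ?_) convex_univ trivial trivial
    rw [Real.norm_eq_abs, abs_of_nonneg (hN.a0 x)]; exact hN.aC x
  have hB : |B u - B 0| ≤ C * |u - 0| := by
    exact Convex.norm_image_sub_le_of_norm_hasDerivWithin_le (s := univ) (f := B) (f' := b)
      (fun x _ => (hN.hB x).hasDerivWithinAt) (fun x _ => hN.bC x) convex_univ trivial trivial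
  have h1 : C * |u - 0| ≤ C := by
    rw [sub_zero, abs_of_nonneg hu.1]
    exact mul_le_of_le_one_right (by linarith [hN.C0]) hu.2
  rw [hN.A0, sub_zero] at hA
  rw [hN.B0, sub_zero] at hB
  refine ⟨?_, (le_abs_self _).trans (hA.trans h1), hB.trans h1⟩
  rw [← hN.A0]; exact hAm hu.1

lemma Amono (hN : Nice A B a b C) : Monotone A := monotone_of_deriv_nonneg (fun u => (hN.hA u).differentiableAt)
    (fun u => by rw [(hN.hA u).deriv]; exact hN.a0 u)

lemma cv_const_bound {f : ℝ → ℝ} (hk : Mol k ε) {M : ℝ} (hM : ∀ x, |f x| ≤ M) (x : ℝ) :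
    |cv f k x| ≤ M := by
  have : ‖cv f k x‖ ≤ ∫ y, M * k y := by
    refine norm_integral_le_of_norm_le (hk.i0.const_mul M) (Eventually.of_forall fun y => ?_)
    rw [norm_mul, Real.norm_eq_abs, Real.norm_eq_abs, abs_of_nonneg (hk.nonneg y)]
    exact mul_le_mul_of_nonneg_right (hM _) (hk.nonneg y)
  rwa [integral_const_mul, hk.int, mul_one] at this

lemma q_mem (hF : CdfFlow F) (hk : Mol k ε) (t x : ℝ) : cv (F t) k x ∈ Icc (0:ℝ) 1 := by
  have := cv_bounds hk (hF.mono t) (hF.abs_le_one t) x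
  exact ⟨(hF.nonneg _ _).trans this.1, this.2.trans (hF.le_one _ _)⟩

/-- spatial energy inequality at a fixed time -/
lemma energy_slice (hF : CdfFlow F) (hk : Mol k ε) (hN : Nice A B a b C) {R : ℝ} (hR : 0 < R) (t : ℝ) :
    ∫ x in (-R)..R, (cv (F t) k x * (R^2 - x^2)) * rhs A B F k t x ≤
      (R^2 * C + 2 * R * (C + 2 * R * C)) -
        (1/(2*C)) * ∫ x in (-R)..R, (R^2 - x^2) * (cv (fun y => A (F t y)) (deriv k) x)^2 := by
  have hC := hN.C0
  set q := cv (F t) k with hq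
  set p := cv (F t) (deriv k) with hp
  set J := cv (fun y => A (F t y)) (deriv k) with hJ
  set β := cv (fun y => B (F t y)) k with hβ
  have dq : ∀ x, HasDerivAt q (p x) x := fun x => hF.cv_deriv (ψ := fun u => u) continuous_id hk.smooth hk.cs t x
  have dp : ∀ x, HasDerivAt p (cv (F t) (deriv (deriv k)) x) x :=
    fun x => hF.cv_deriv (ψ := fun u => u) continuous_id hk.s1 hk.cs.deriv t x
  have dJ : ∀ x, HasDerivAt J (cv (fun y => A (F t y)) (deriv (deriv k)) x) x :=
    fun x => hF.cv_deriv hN.cA hk.s1 hk.cs.deriv t x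
  have dβ : ∀ x, HasDerivAt β (cv (fun y => B (F t y)) (deriv k) x) x :=
    fun x => hF.cv_deriv hN.cB hk.smooth hk.cs t x
  have cq : Continuous q := continuous_iff_continuousAt.2 fun x => (dq x).continuousAt
  have cp : Continuous p := continuous_iff_continuousAt.2 fun x => (dp x).continuousAt
  have cJ : Continuous J := continuous_iff_continuousAt.2 fun x => (dJ x).continuousAt
  have cβ : Continuous β := continuous_iff_continuousAt.2 fun x => (dβ x).continuousAt
  have cr : Continuous (fun x => rhs A B F k t x) :=
    (hF.rhs_cont hk hN.cA hN.cB).comp (by fun_prop : Continuous fun x : ℝ => (t, x))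
  have du : ∀ x, HasDerivAt (fun x => q x * (R^2 - x^2)) (p x * (R^2 - x^2) + q x * (-(2*x))) x := by
    intro x
    have h2 : HasDerivAt (fun x : ℝ => R^2 - x^2) (-(2*x)) x := by
      simpa using (hasDerivAt_pow 2 x).const_sub (R^2)
    exact (dq x).mul h2
  have dv : ∀ x, HasDerivAt (fun x => (1/2) * J x - β x) (rhs A B F k t x) x := fun x =>
    ((dJ x).const_mul (1/2)).sub (dβ x)
  have ibp := intervalIntegral.integral_mul_deriv_eq_deriv_mul (a := -R) (b := R) (fun x _ => du x) (fun x _ => dv x)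
    ((by fun_prop : Continuous fun x => p x * (R^2 - x^2) + q x * (-(2*x))).intervalIntegrable _ _)
    (cr.intervalIntegrable _ _)
  rw [ibp]
  simp only [neg_sq, sub_self, mul_zero, zero_mul, zero_sub]
  have hintg : ∫ x in (-R)..R, p x ≤ 1 := by
    rw [intervalIntegral.integral_eq_sub_of_hasDerivAt (fun x _ => dq x) (cp.intervalIntegrable _ _)]
    linarith [(hF.q_mem hk t R).2, (hF.q_mem hk t (-R)).1]
  have hle : -R ≤ R := by linarith
  rw [← intervalIntegral.integral_neg]
  have hmono : ∫ x in (-R)..R, -((p x * (R^2 - x^2) + q x * (-(2*x))) * ((1/2) * J x - β x)) ≤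
      ∫ x in (-R)..R, ((R^2 * C + R * C) * p x + 2 * R * C - 1/(2*C) * ((R^2 - x^2) * J x ^2)) := by
    refine intervalIntegral.integral_mono_on hle (Continuous.intervalIntegrable (by fun_prop) _ _)
      (Continuous.intervalIntegrable (by fun_prop) _ _) fun x hx => ?_
    have hχ : 0 ≤ R^2 - x^2 := by nlinarith [hx.1, hx.2]
    have hχ2 : R^2 - x^2 ≤ R^2 := by nlinarith
    have hp0 : 0 ≤ p x := hF.p_nonneg hk t x
    obtain ⟨hJ0, hJC⟩ := hF.J_bounds hk hN t x
    have hβC : |β x| ≤ C := cv_const_bound hk (fun y => (AB_bd hN _ (hF.mem t y)).2.2) x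
    obtain ⟨hq0, hq1⟩ := hF.q_mem hk t x
    change 0 ≤ J x at hJ0; change J x ≤ C * p x at hJC
    change 0 ≤ q x at hq0; change q x ≤ 1 at hq1
    have e1 : 1/(2*C) * ((R^2 - x^2) * J x ^2) ≤ (1/2) * ((R^2-x^2) * p x * J x) := by
      have : (1/C) * J x ≤ p x := by
        rw [one_div, inv_mul_le_iff₀ (by linarith)]; exact hJC
      have h3 : (R^2-x^2) * J x * ((1/C) * J x) ≤ (R^2-x^2) * J x * p x := 
        mul_le_mul_of_nonneg_left this (by positivity)
      calc _ = (1/2) * ((R^2-x^2) * J x * ((1/C) * J x)) := by field_simp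
        _ ≤ _ := by linarith
    have e2 : p x * (R^2 - x^2) * β x ≤ R^2 * C * p x := by
      have : p x * (R^2 - x^2) * β x ≤ p x * (R^2-x^2) * C :=
        mul_le_mul_of_nonneg_left ((le_abs_self _).trans hβC) (by positivity)
      have : p x * (R^2-x^2) * C ≤ p x * R^2 * C := by gcongr
      linarith
    have hqx : |q x * x| ≤ R := by
      rw [abs_mul, abs_of_nonneg hq0]
      have : |x| ≤ R := abs_le.2 hx
      nlinarith [abs_nonneg x]
    have e3 : q x * x * J x ≤ R * C * p x := by
      have : q x * x * J x ≤ R * J x := mul_le_mul_of_nonneg_right ((le_abs_self _).trans hqx) hJ0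
      nlinarith
    have e4 : - (2 * (q x * x) * β x) ≤ 2 * R * C := by
      have : |q x * x * β x| ≤ R * C := by
        rw [abs_mul]; exact mul_le_mul hqx hβC (abs_nonneg _) hR.le
      linarith [neg_abs_le (q x * x * β x)]
    nlinarith
  refine hmono.trans ?_
  rw [intervalIntegral.integral_sub (Continuous.intervalIntegrable (by fun_prop) _ _)
      (Continuous.intervalIntegrable (by fun_prop) _ _),
    intervalIntegral.integral_add (Continuous.intervalIntegrable (by fun_prop) _ _)
      (Continuous.intervalIntegrable (by fun_prop) _ _)]
  simp only [intervalIntegral.integral_const_mul, intervalIntegral.integral_const]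
  have : (R^2 * C + R * C) * ∫ x in (-R)..R, p x ≤ (R^2 * C + R * C) * 1 :=
    mul_le_mul_of_nonneg_left hintg (by positivity)
  simp only [smul_eq_mul]
  nlinarith [mul_pos hR (by linarith : 0 < C)]

lemma energy (hF : CdfFlow F) (hk : Mol k ε) (hN : Nice A B a b C) (hW : WW A B F₀ F)
    {R T : ℝ} (hR : 0 < R) (hT : 0 ≤ T) :
    ∫ t in (0:ℝ)..T, ∫ x in (-R)..R, (R^2 - x^2) * (cv (fun y => A (F t y)) (deriv k) x)^2 ≤
      2 * C * ((R^2 * C + 2 * R * (C + 2 * R * C)) * T + R^3) := by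
  have hC := hN.C0
  have cq : Continuous (fun z : ℝ × ℝ => cv (F z.1) k z.2) := hF.cv_cont (ψ := fun u => u) continuous_id hk.i0
  have cJ : Continuous (fun z : ℝ × ℝ => cv (fun y => A (F z.1 y)) (deriv k) z.2) := hF.cv_cont hN.cA hk.i1
  have cr := hF.rhs_cont hk hN.cA hN.cB
  have cr' : Continuous (fun z : ℝ × ℝ => rhs A B F k z.1 z.2) := cr
  have hle : -R ≤ R := by linarith
  have ftc : ∀ x, ∫ t in (0:ℝ)..T, (cv (F t) k x * (R^2 - x^2)) * rhs A B F k t x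
      = (1/2) * (cv (F T) k x)^2 * (R^2-x^2) - (1/2) * (cv (F 0) k x)^2 * (R^2-x^2) := by
    intro x
    have c1 : Continuous fun t => cv (F t) k x := cq.comp (by fun_prop : Continuous fun t : ℝ => (t, x))
    have c2 : Continuous fun t => rhs A B F k t x := cr'.comp (by fun_prop : Continuous fun t : ℝ => (t, x))
    refine intervalIntegral.integral_eq_sub_of_hasDerivAt_of_le hT 
      (f := fun t => (1/2) * (cv (F t) k x)^2 * (R^2-x^2)) ?_ ?_ ?_
    · exact Continuous.continuousOn (by fun_prop)
    · intro t ht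
      have d := hF.moll_deriv hk hN.cA hN.cB hW ht.1 x
      refine (((d.fun_pow 2).const_mul (1/2)).mul_const (R^2-x^2)).congr_deriv ?_
      push_cast; ring
    · exact Continuous.intervalIntegrable (by fun_prop) _ _
  have sw := swapII (H := fun x t => (cv (F t) k x * (R^2 - x^2)) * rhs A B F k t x) hle hT (by
    apply Continuous.continuousOn
    have g1 : Continuous fun z : ℝ × ℝ => cv (F z.2) k z.1 := cq.comp continuous_swap
    have g2 : Continuous fun z : ℝ × ℝ => rhs A B F k z.2 z.1 := cr'.comp continuous_swap
    change Continuous fun z : ℝ × ℝ => (cv (F z.2) k z.1 * (R^2 - z.1^2)) * rhs A B F k z.2 z.1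
    fun_prop)
  simp only [ftc] at sw
  have cg : Continuous fun t => ∫ x in (-R)..R, (R^2 - x^2) * (cv (fun y => A (F t y)) (deriv k) x)^2 := by
    apply intervalIntegral.continuous_parametric_intervalIntegral_of_continuous'
    change Continuous fun z : ℝ × ℝ => (R^2 - z.2^2) * (cv (fun y => A (F z.1 y)) (deriv k) z.2)^2
    fun_prop
  have ch : Continuous fun t => ∫ x in (-R)..R, (cv (F t) k x * (R^2 - x^2)) * rhs A B F k t x := by
    apply intervalIntegral.continuous_parametric_intervalIntegral_of_continuous'
    change Continuous fun z : ℝ × ℝ => (cv (F z.1) k z.2 * (R^2 - z.2^2)) * rhs A B F k z.1 z.2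
    fun_prop
  have cg2 : Continuous fun t => 1/(2*C) * ∫ x in (-R)..R, (R^2 - x^2) * (cv (fun y => A (F t y)) (deriv k) x)^2 :=
    continuous_const.mul cg
  have up := intervalIntegral.integral_mono_on (μ := volume) hT (ch.intervalIntegrable _ _)
    ((continuous_const.intervalIntegrable _ _).sub (cg2.intervalIntegrable _ _))
    (fun t _ => hF.energy_slice hk hN hR t)
  rw [← sw, intervalIntegral.integral_sub (continuous_const.intervalIntegrable _ _)
    (cg2.intervalIntegrable _ _), intervalIntegral.integral_const] at up
  simp only [smul_eq_mul, intervalIntegral.integral_const_mul, sub_zero] at up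
  have cx : ∀ t, Continuous (fun x => cv (F t) k x) := fun t => cq.comp (by fun_prop : Continuous fun x : ℝ => (t, x))
  have lo : -(R^3) ≤ ∫ x in (-R)..R, ((1/2) * (cv (F T) k x)^2 * (R^2-x^2) - (1/2) * (cv (F 0) k x)^2 * (R^2-x^2)) := by
    have := cx T; have := cx 0
    have h1 : ∫ x in (-R)..R, (-(1/2) * R^2) ≤ ∫ x in (-R)..R, ((1/2) * (cv (F T) k x)^2 * (R^2-x^2) - (1/2) * (cv (F 0) k x)^2 * (R^2-x^2)) := by
      refine intervalIntegral.integral_mono_on hle (by simp) (Continuous.intervalIntegrable (by fun_prop) _ _) fun x hx => ?_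
      have hχ : 0 ≤ R^2 - x^2 := by nlinarith [hx.1, hx.2]
      have hχ2 : R^2 - x^2 ≤ R^2 := by nlinarith
      obtain ⟨hq0, hq1⟩ := hF.q_mem hk 0 x
      have : 0 ≤ (1/2) * (cv (F T) k x)^2 * (R^2-x^2) := by positivity
      have h2 : (cv (F 0) k x)^2 ≤ 1 := by nlinarith
      have : (cv (F 0) k x)^2 * (R^2-x^2) ≤ 1 * R^2 := by gcongr
      linarith
    refine le_trans (le_of_eq ?_) h1
    rw [intervalIntegral.integral_const, smul_eq_mul]; ring
  have fin : 1/(2*C) * (∫ t in (0:ℝ)..T, ∫ x in (-R)..R, (R^2 - x^2) * (cv (fun y => A (F t y)) (deriv k) x)^2) ≤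
     (R^2 * C + 2 * R * (C + 2 * R * C)) * T + R^3 := by linarith
  rw [one_div, inv_mul_le_iff₀ (by linarith)] at fin
  exact fin

end CdfFlow
end


section
namespace CdfFlow
variable {F : ℝ → ℝ → ℝ} {k : ℝ → ℝ} {ε : ℝ} {A B a b F₀ : ℝ → ℝ} {C : ℝ}

lemma jump_energy (hF : CdfFlow F) (hk : Mol k ε) (hN : Nice A B a b C) {t x0 D R : ℝ} 
    (hR : |x0| + 3 ≤ R) (hε : ε ≤ 1)
    (hD : D = A (F t x0) - A (leftLim (F t) x0)) (hD0 : 0 ≤ D) :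
    D^2 / (4 * ε) ≤ ∫ x in (-R)..R, (R^2 - x^2) * (cv (fun y => A (F t y)) (deriv k) x)^2 := by
  have hε0 := hk.pos
  have hAm := Amono hN
  set J := cv (fun y => A (F t y)) (deriv k) with hJ
  have dq : ∀ x, HasDerivAt (cv (fun y => A (F t y)) k) (J x) x :=
    fun x => hF.cv_deriv hN.cA hk.smooth hk.cs t x
  have dJ : ∀ x, HasDerivAt J (cv (fun y => A (F t y)) (deriv (deriv k)) x) x :=
    fun x => hF.cv_deriv hN.cA hk.s1 hk.cs.deriv t x
  have cJ : Continuous J := continuous_iff_continuousAt.2 fun x => (dJ x).continuousAt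
  obtain ⟨-, M, -, hM⟩ := hF.comp_bdd hN.cA t
  have hm : Monotone fun y => A (F t y) := fun x y h => hAm (hF.mono t h)
  have hintg : D ≤ ∫ x in (x0 - 2*ε)..(x0 + 2*ε), J x := by
    rw [intervalIntegral.integral_eq_sub_of_hasDerivAt (fun x _ => dq x) (cJ.intervalIntegrable _ _), hD]
    have h1 := (cv_bounds hk hm hM (x0 + 2*ε)).1
    have h2 := (cv_bounds hk hm hM (x0 - 2*ε)).2
    have h3 : A (F t x0) ≤ A (F t (x0 + 2*ε - ε)) := hm (by linarith)
    have h4 : A (F t (x0 - 2*ε + ε)) ≤ A (leftLim (F t) x0) := hAm ((hF.mono t).le_leftLim (by linarith))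
    linarith
  have hx := abs_le.1 (le_refl |x0|)
  have h1 : ∫ x in (x0 - 2*ε)..(x0 + 2*ε), (R^2 - x^2) * (J x)^2 ≤ ∫ x in (-R)..R, (R^2 - x^2) * (J x)^2 := by
    refine intervalIntegral.integral_mono_interval (by linarith) (by linarith) (by linarith) ?_ 
      (Continuous.intervalIntegrable (by fun_prop) _ _)
    refine (ae_restrict_iff' measurableSet_Ioc).2 (Eventually.of_forall fun x hx => ?_)
    have : 0 ≤ R^2 - x^2 := by nlinarith [hx.1, hx.2]
    change 0 ≤ (R^2 - x^2) * (J x)^2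
    positivity
  refine le_trans ?_ h1
  have h2 : ∫ x in (x0 - 2*ε)..(x0 + 2*ε), (2 * (D/(4*ε)) * J x - (D/(4*ε))^2) ≤
      ∫ x in (x0 - 2*ε)..(x0 + 2*ε), (R^2 - x^2) * (J x)^2 := by
    refine intervalIntegral.integral_mono_on (by linarith) (Continuous.intervalIntegrable (by fun_prop) _ _)
      (Continuous.intervalIntegrable (by fun_prop) _ _) fun x hx' => ?_
    have : 1 ≤ R^2 - x^2 := by
      have a1 : x ≤ R - 1 := by linarith [hx'.2]
      have a2 : -(R-1) ≤ x := by linarith [hx'.1]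
      nlinarith [abs_nonneg x0]
    nlinarith [sq_nonneg (J x - D/(4*ε)), sq_nonneg (J x)]
  refine le_trans ?_ h2
  rw [intervalIntegral.integral_sub (Continuous.intervalIntegrable (by fun_prop) _ _)
      (Continuous.intervalIntegrable (by fun_prop) _ _)]
  simp only [intervalIntegral.integral_const_mul, intervalIntegral.integral_const, smul_eq_mul]
  have h3 : 2 * (D/(4*ε)) * D ≤ 2 * (D/(4*ε)) * ∫ x in (x0 - 2*ε)..(x0 + 2*ε), J x :=
    mul_le_mul_of_nonneg_left hintg (by positivity)
  refine le_trans (le_of_eq ?_) (sub_le_sub_right h3 _)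
  field_simp; ring

lemma ae_cont_aux (hF : CdfFlow F) (hN : Nice A B a b C) (hW : WW A B F₀ F) (R T : ℕ) :
    ∀ᵐ t ∂(volume.restrict (Ioc (0:ℝ) T)), ∀ x0, |x0| + 3 ≤ (R:ℝ) → ContinuousAt (F t) x0 := by
  by_cases hR0 : (R:ℝ) < 3
  · exact Eventually.of_forall fun t x0 h => by linarith [abs_nonneg x0]
  push Not at hR0
  have hR : 0 < (R:ℝ) := by linarith
  choose k hk using fun n : ℕ => exists_mol (ε := 1/((n:ℝ)+1)) (by positivity)
  let g : ℕ → ℝ → ℝ := fun n t => ∫ x in (-(R:ℝ))..R, ((R:ℝ)^2 - x^2) * (cv (fun y => A (F t y)) (deriv (k n)) x)^2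
  have g0 : ∀ n t, 0 ≤ g n t := by
    intro n t
    refine intervalIntegral.integral_nonneg (by linarith) fun x hx => ?_
    have : 0 ≤ (R:ℝ)^2 - x^2 := by nlinarith [hx.1, hx.2]
    positivity
  have cg : ∀ n, Continuous (g n) := by
    intro n
    have cJ : Continuous (fun z : ℝ × ℝ => cv (fun y => A (F z.1 y)) (deriv (k n)) z.2) := hF.cv_cont hN.cA (hk n).i1
    apply intervalIntegral.continuous_parametric_intervalIntegral_of_continuous'
    change Continuous fun z : ℝ × ℝ => ((R:ℝ)^2 - z.2^2) * (cv (fun y => A (F z.1 y)) (deriv (k n)) z.2)^2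
    fun_prop
  set K := 2 * C * (((R:ℝ)^2 * C + 2 * R * (C + 2 * R * C)) * T + (R:ℝ)^3) with hK
  have hb : ∀ n, ∫⁻ t in Ioc (0:ℝ) T, ENNReal.ofReal (g n t) ≤ ENNReal.ofReal K := by
    intro n
    rw [← ofReal_integral_eq_lintegral_ofReal ((cg n).integrableOn_Ioc) (Eventually.of_forall (g0 n))]
    apply ENNReal.ofReal_le_ofReal
    rw [← intervalIntegral.integral_of_le (by positivity)]
    exact hF.energy (hk n) hN hW hR (by positivity)
  have fat := lintegral_liminf_le' (μ := volume.restrict (Ioc (0:ℝ) T)) (u := atTop) 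
    (f := fun n t => ENNReal.ofReal (g n t)) (fun n => (cg n).measurable.ennreal_ofReal.aemeasurable)
  have fin : ∫⁻ t in Ioc (0:ℝ) T, liminf (fun n => ENNReal.ofReal (g n t)) atTop ≠ ∞ := by
    refine ne_top_of_le_ne_top (b := ENNReal.ofReal K) ENNReal.ofReal_ne_top (fat.trans ?_)
    refine liminf_le_of_frequently_le' (Frequently.of_forall hb) 
  have hae := ae_lt_top (Measurable.liminf (fun n => (cg n).measurable.ennreal_ofReal)) fin
  filter_upwards [hae] with t ht x0 hx0
  by_contra hnc
  have hlt : leftLim (F t) x0 < F t x0 := by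
    refine lt_of_le_of_ne ((hF.mono t).leftLim_le le_rfl) fun heq => hnc ?_
    rw [continuousAt_iff_continuous_left'_right']
    refine ⟨(hF.mono t).continuousWithinAt_Iio_iff_leftLim_eq.2 heq, (hF.rc t x0).mono Ioi_subset_Ici_self⟩
  have hl0 : leftLim (F t) x0 ∈ Icc (0:ℝ) 1 :=
    ⟨(hF.nonneg t (x0-1)).trans ((hF.mono t).le_leftLim (by linarith)), hlt.le.trans (hF.le_one _ _)⟩
  have hD := hN.sm hl0 (hF.mem t x0) hlt
  set D := A (F t x0) - A (leftLim (F t) x0) with hDD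
  have hD0 : 0 < D := by simp only [hDD]; linarith
  have low : ∀ n : ℕ, D^2/4 * ((n:ℝ)+1) ≤ g n t := by
    intro n
    have hle : 1/((n:ℝ)+1) ≤ 1 := by rw [div_le_one (by positivity)]; linarith [(n.cast_nonneg : (0:ℝ) ≤ n)]
    refine le_trans (le_of_eq ?_) (hF.jump_energy (hk n) hN hx0 hle hDD hD0.le)
    field_simp
  have tt : Tendsto (fun n => ENNReal.ofReal (g n t)) atTop (𝓝 ⊤) := by
    apply ENNReal.tendsto_ofReal_atTop.comp
    refine tendsto_atTop_mono low ?_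
    exact (tendsto_atTop_add_const_right _ _ tendsto_natCast_atTop_atTop).const_mul_atTop (by positivity)
  rw [tt.liminf_eq] at ht
  exact lt_irrefl _ ht

/-- for almost every positive time, `F t` is continuous -/
lemma ae_cont (hF : CdfFlow F) (hN : Nice A B a b C) (hW : WW A B F₀ F) :
    ∀ᵐ t : ℝ, 0 < t → Continuous (F t) := by
  have h : ∀ᵐ t : ℝ, ∀ R T : ℕ, t ∈ Ioc (0:ℝ) T → ∀ x0, |x0| + 3 ≤ (R:ℝ) → ContinuousAt (F t) x0 := by
    rw [ae_all_iff]; intro R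
    rw [ae_all_iff]; intro T
    exact (ae_restrict_iff' measurableSet_Ioc).1 (hF.ae_cont_aux hN hW R T)
  filter_upwards [h] with t ht ht0
  rw [continuous_iff_continuousAt]
  intro x
  obtain ⟨R, hR⟩ := exists_nat_ge (|x| + 3)
  obtain ⟨T, hT⟩ := exists_nat_ge t
  exact ht R T ⟨ht0, hT⟩ x hR
end CdfFlow
end


section
/-- a smooth flow of strictly increasing distribution functions -/
structure SF (Q p J Jx bx : ℝ → ℝ → ℝ) : Prop where
  cQ : Continuous (uncurry Q)
  cp : Continuous (uncurry p)
  cJ : Continuous (uncurry J)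
  cJx : Continuous (uncurry Jx)
  cbx : Continuous (uncurry bx)
  dQ : ∀ t x, HasDerivAt (Q t) (p t x) x
  dJ : ∀ t x, HasDerivAt (J t) (Jx t x) x
  pp : ∀ t x, 0 < p t x
  J0 : ∀ t x, 0 ≤ J t x
  dt : ∀ t x, 0 < t → HasDerivAt (fun s => Q s x) ((1/2) * Jx t x - bx t x) t
  bot : ∀ t, Tendsto (Q t) atBot (𝓝 0)
  top : ∀ t, Tendsto (Q t) atTop (𝓝 1)

def qt (Q : ℝ → ℝ → ℝ) (t u : ℝ) : ℝ := sInf {x | u ≤ Q t x}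

namespace SF
variable {Q p J Jx bx : ℝ → ℝ → ℝ}

lemma sm (h : SF Q p J Jx bx) (t : ℝ) : StrictMono (Q t) :=
  strictMono_of_deriv_pos fun x => by rw [(h.dQ t x).deriv]; exact h.pp t x

lemma ct (h : SF Q p J Jx bx) (t : ℝ) : Continuous (Q t) :=
  continuous_iff_continuousAt.2 fun x => (h.dQ t x).continuousAt

lemma ex (h : SF Q p J Jx bx) (t : ℝ) {u : ℝ} (hu : u ∈ Ioo (0:ℝ) 1) : ∃ x, Q t x = u := by
  obtain ⟨x, hx⟩ := ((h.bot t).eventually (gt_mem_nhds hu.1)).exists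
  obtain ⟨y, hy⟩ := ((h.top t).eventually (lt_mem_nhds hu.2)).exists
  exact mem_range_of_exists_le_of_exists_ge (h.ct t) ⟨x, hx.le⟩ ⟨y, hy.le⟩

lemma qt_of (h : SF Q p J Jx bx) (t x : ℝ) : qt Q t (Q t x) = x := by
  have : {y | Q t x ≤ Q t y} = Ici x := by
    ext y; simp [(h.sm t).le_iff_le]
  rw [qt, this, csInf_Ici]

lemma Q_qt (h : SF Q p J Jx bx) (t : ℝ) {u : ℝ} (hu : u ∈ Ioo (0:ℝ) 1) : Q t (qt Q t u) = u := by
  obtain ⟨x, rfl⟩ := h.ex t hu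
  rw [h.qt_of]

lemma qt_lt (h : SF Q p J Jx bx) (t x : ℝ) {u : ℝ} (hu : u ∈ Ioo (0:ℝ) 1) : qt Q t u < x ↔ u < Q t x := by
  rw [← (h.sm t).lt_iff_lt (a := qt Q t u), h.Q_qt t hu]

lemma lt_qt (h : SF Q p J Jx bx) (t x : ℝ) {u : ℝ} (hu : u ∈ Ioo (0:ℝ) 1) : x < qt Q t u ↔ Q t x < u := by
  rw [← (h.sm t).lt_iff_lt (b := qt Q t u), h.Q_qt t hu]

lemma qt_cont (h : SF Q p J Jx bx) (t : ℝ) {u : ℝ} (hu : u ∈ Ioo (0:ℝ) 1) :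
    ContinuousAt (fun z : ℝ × ℝ => qt Q z.1 z.2) (t, u) := by
  have hin : ∀ᶠ z : ℝ × ℝ in 𝓝 (t, u), z.2 ∈ Ioo (0:ℝ) 1 :=
    continuous_snd.continuousAt.eventually (isOpen_Ioo.mem_nhds hu)
  have cc : ∀ x, Continuous fun z : ℝ × ℝ => Q z.1 x := fun x =>
    h.cQ.comp (by fun_prop : Continuous fun z : ℝ × ℝ => (z.1, x))
  rw [ContinuousAt, tendsto_order]
  constructor
  · intro x hx
    rw [h.lt_qt t x hu] at hx
    filter_upwards [hin, ((cc x).continuousAt.eventually_lt continuous_snd.continuousAt hx)] with z hz hz2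
    exact (h.lt_qt _ _ hz).2 hz2
  · intro x hx
    rw [gt_iff_lt, h.qt_lt t x hu] at hx
    filter_upwards [hin, (continuous_snd.continuousAt.eventually_lt (cc x).continuousAt hx)] with z hz hz2
    exact (h.qt_lt _ _ hz).2 hz2

lemma qt_du (h : SF Q p J Jx bx) (t : ℝ) {u : ℝ} (hu : u ∈ Ioo (0:ℝ) 1) :
    HasDerivAt (fun v => qt Q t v) (p t (qt Q t u))⁻¹ u := by
  refine HasDerivAt.of_local_left_inverse (f := Q t) ?_ (h.dQ t _) (h.pp _ _).ne' ?_
  · exact ContinuousAt.comp (f := fun v : ℝ => (t, v)) (g := fun z : ℝ × ℝ => qt Q z.1 z.2) (h.qt_cont t hu) (by fun_prop)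
  · filter_upwards [isOpen_Ioo.mem_nhds hu] with v hv using h.Q_qt t hv

lemma qt_dt (h : SF Q p J Jx bx) {t : ℝ} (ht : 0 < t) {u : ℝ} (hu : u ∈ Ioo (0:ℝ) 1) :
    HasDerivAt (fun s => qt Q s u)
      (-((1/2) * Jx t (qt Q t u) - bx t (qt Q t u)) / p t (qt Q t u)) t := by
  set x := qt Q t u with hx
  set r := (1/2) * Jx t x - bx t x with hr
  have cr : Continuous fun z : ℝ × ℝ => (1/2) * Jx z.1 z.2 - bx z.1 z.2 :=
    (continuous_const.mul h.cJx).sub h.cbx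
  have hs : HasStrictFDerivAt (uncurry Q)
     ((ContinuousLinearMap.toSpanSingleton ℝ r).coprod (ContinuousLinearMap.toSpanSingleton ℝ (p t x))) (t, x) := by
    refine hasStrictFDerivAt_uncurry_coprod (u := (t, x)) (f := Q) 
      (f₁ := fun t x => ContinuousLinearMap.toSpanSingleton ℝ ((1/2) * Jx t x - bx t x))
      (f₂ := fun t x => ContinuousLinearMap.toSpanSingleton ℝ (p t x)) ?_ ?_ ?_ ?_
    · have : ∀ᶠ v : ℝ × ℝ in 𝓝 (t, x), 0 < v.1 := continuous_fst.continuousAt.eventually (lt_mem_nhds ht)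
      filter_upwards [this] with v hv
      exact (h.dt v.1 v.2 hv).hasFDerivAt
    · exact Eventually.of_forall fun v => (h.dQ v.1 v.2).hasFDerivAt
    · exact ((ContinuousLinearMap.toSpanSingletonCLE (𝕜 := ℝ) (E := ℝ)).continuous.comp cr).continuousAt
    · exact ((ContinuousLinearMap.toSpanSingletonCLE (𝕜 := ℝ) (E := ℝ)).continuous.comp h.cp).continuousAt
  have hf := (hasFDerivAt_fst (𝕜 := ℝ) (p := (t, x))).prodMk hs.hasFDerivAt
  have hh : HasFDerivAt (fun s : ℝ => (s, u)) _ t := ((hasDerivAt_id t).prodMk (hasDerivAt_const t u)).hasFDerivAt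
  have hp := (h.pp t x).ne'
  have key := HasFDerivAt.of_comp_of_leftInverse (g := fun s => (s, qt Q s u)) (a := t)
    (f'symm := (ContinuousLinearMap.fst ℝ ℝ ℝ).prod
      ((p t x)⁻¹ • (ContinuousLinearMap.snd ℝ ℝ ℝ - r • ContinuousLinearMap.fst ℝ ℝ ℝ))) ?_ hf hh ?_ ?_
  · have := (HasFDerivAt.snd key).hasDerivAt
    refine this.congr_deriv ?_
    simp
    field_simp
  · have := ContinuousAt.comp (f := fun s : ℝ => (s, u)) (x := t) (g := fun z : ℝ × ℝ => qt Q z.1 z.2) (h.qt_cont t hu) (by fun_prop)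
    exact continuousAt_id.prodMk this
  · refine Eventually.of_forall fun s => ?_
    simp [uncurry, h.Q_qt s hu]
  · rintro ⟨y, z⟩
    simp only [ContinuousLinearMap.prod_apply, ContinuousLinearMap.coe_fst', ContinuousLinearMap.coprod_apply, 
      ContinuousLinearMap.toSpanSingleton_apply, 
      sub_apply, ContinuousLinearMap.coe_snd', smul_apply, smul_eq_mul]
    ext
    · rfl
    · simp only; field_simp; ring

lemma J_du (h : SF Q p J Jx bx) (t : ℝ) {u : ℝ} (hu : u ∈ Ioo (0:ℝ) 1) :
    HasDerivAt (fun v => J t (qt Q t v)) (Jx t (qt Q t u) / p t (qt Q t u)) u := by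
  rw [div_eq_mul_inv]
  exact (h.dJ t _).comp u (h.qt_du t hu)

end SF
end


section
def cc0 (z : ℝ) : ℝ := √(1+z^2) - 1
def cc1 (z : ℝ) : ℝ := z / √(1+z^2)
def cc2 (z : ℝ) : ℝ := 1 / ((1+z^2) * √(1+z^2))

lemma cc0_d (z : ℝ) : HasDerivAt cc0 (cc1 z) z := by
  have h : HasDerivAt (fun z : ℝ => 1 + z^2) (2*z) z := by
    simpa using (hasDerivAt_pow 2 z).const_add 1
  refine ((h.sqrt (by positivity)).sub_const 1).congr_deriv ?_
  rw [cc1]; field_simp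

lemma cc1_d (z : ℝ) : HasDerivAt cc1 (cc2 z) z := by
  have h : HasDerivAt (fun z : ℝ => 1 + z^2) (2*z) z := by
    simpa using (hasDerivAt_pow 2 z).const_add 1
  have hp : 0 < √(1+z^2) := Real.sqrt_pos.2 (by positivity)
  have hs : √(1+z^2)^2 = 1 + z^2 := Real.sq_sqrt (by positivity)
  refine ((hasDerivAt_id' z).fun_div (h.sqrt (by positivity)) hp.ne').congr_deriv ?_
  rw [cc2]; field_simp; rw [hs]; ring

lemma cc1_c : Continuous cc1 := continuous_iff_continuousAt.2 fun z => (cc1_d z).continuousAt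
lemma cc0_c : Continuous cc0 := continuous_iff_continuousAt.2 fun z => (cc0_d z).continuousAt
lemma cc2_c : Continuous cc2 := by
  unfold cc2
  refine continuous_const.div (by fun_prop) fun z => ?_
  have : 0 < √(1+z^2) := Real.sqrt_pos.2 (by positivity)
  positivity
lemma one_le_sqrt' (z : ℝ) : 1 ≤ √(1+z^2) := Real.one_le_sqrt.2 (by nlinarith [sq_nonneg z])
lemma cc2_b (z : ℝ) : 0 ≤ cc2 z ∧ cc2 z ≤ 1 := by
  have := one_le_sqrt' z
  constructor
  · unfold cc2; positivity
  · unfold cc2; rw [div_le_one (by positivity)]; nlinarith [sq_nonneg z]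
lemma cc1_b (z : ℝ) : |cc1 z| ≤ 1 := by
  have := one_le_sqrt' z
  rw [cc1, abs_div, abs_of_pos (by linarith : 0 < √(1+z^2)), div_le_one (by linarith)]
  apply Real.le_sqrt_of_sq_le; rw [sq_abs]; linarith
lemma cc0_nonneg (z : ℝ) : 0 ≤ cc0 z := by rw [cc0]; linarith [one_le_sqrt' z]
lemma cc0_mono {z w : ℝ} (hz : 0 ≤ z) (h : z ≤ w) : cc0 z ≤ cc0 w := by
  unfold cc0; gcongr
lemma cc0_pos {z : ℝ} (hz : 0 < z) : 0 < cc0 z := by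
  rw [cc0, sub_pos, Real.lt_sqrt (by norm_num)]; nlinarith

lemma alg_est {P S α β : ℝ} (hP : 0 < P) (hS : 0 < S) (hα : 0 ≤ α) (hβ : 0 ≤ β) :
    (P⁻¹ - S⁻¹) * (α - β) ≤ |α / P - β / S| := by
  -- α = x P, β = y S
  set x := α / P with hx
  set y := β / S with hy
  have ex : α = x * P := by rw [hx]; field_simp
  have ey : β = y * S := by rw [hy]; field_simp
  have hx0 : 0 ≤ x := by positivity
  have hy0 : 0 ≤ y := by positivity
  have hr : 0 < P / S := by positivity
  have e : (P⁻¹ - S⁻¹) * (α - β) = x + y - x * (P/S) - y * (P/S)⁻¹ := by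
    rw [ex, ey]; field_simp; ring
  rw [e]
  set r := P / S
  have h2 : 2 ≤ r + r⁻¹ := by
    have : r + r⁻¹ - 2 = (r-1)^2 * r⁻¹ := by field_simp; ring
    have : 0 ≤ (r-1)^2 * r⁻¹ := by positivity
    linarith
  have hi : 0 ≤ r⁻¹ := by positivity
  rcases le_total x y with h | h
  · have : |x - y| = y - x := by rw [abs_sub_comm]; exact abs_of_nonneg (by linarith)
    rw [this]
    nlinarith
  · have : |x - y| = x - y := abs_of_nonneg (by linarith)
    rw [this]
    nlinarith

namespace SF
variable {Q p J Jx bx : ℝ → ℝ → ℝ} {Q' p' J' Jx' bx' : ℝ → ℝ → ℝ}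

lemma contOn2 (h : SF Q p J Jx bx) {f : ℝ → ℝ → ℝ} (hf : Continuous (uncurry f)) {κ : ℝ} (hκ : 0 < κ) :
    ContinuousOn (fun z : ℝ × ℝ => f z.1 (qt Q z.1 z.2)) (univ ×ˢ Icc κ (1-κ)) := by
  rintro ⟨t, u⟩ ⟨-, hu⟩
  have hu' : u ∈ Ioo (0:ℝ) 1 := ⟨by linarith [hu.1], by linarith [hu.2]⟩
  have := (hf.continuousAt (x := (t, qt Q t u))).comp_of_eq (continuousAt_fst.prodMk (h.qt_cont t hu')) rfl
  exact this.continuousWithinAt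

lemma contOn1 (h : SF Q p J Jx bx) {f : ℝ → ℝ → ℝ} (hf : Continuous (uncurry f)) {κ : ℝ} (hκ : 0 < κ) (t : ℝ) :
    ContinuousOn (fun u : ℝ => f t (qt Q t u)) (Icc κ (1-κ)) :=
  (h.contOn2 hf hκ).comp (f := fun u : ℝ => (t, u)) (by fun_prop) (fun u hu => ⟨trivial, hu⟩)

/-- the error functional of a single flow -/
def err (Q p J bx : ℝ → ℝ → ℝ) (a b : ℝ → ℝ) (κ t : ℝ) : ℝ :=
  (∫ u in κ..(1-κ), ((1/2) * |J t (qt Q t u) / p t (qt Q t u) - a u| + |bx t (qt Q t u) / p t (qt Q t u) - b u|))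
    + (1/2) * (J t (qt Q t κ) + J t (qt Q t (1-κ)))

lemma slice_est (h : SF Q p J Jx bx) (h' : SF Q' p' J' Jx' bx') {a b : ℝ → ℝ} (ha : Continuous a)
    (hb : Continuous b) {κ : ℝ} (hκ : 0 < κ) (hκ2 : κ ≤ 1/2) (t : ℝ) :
    ∫ u in κ..(1-κ), cc1 (qt Q t u - qt Q' t u) *
      (-((1/2) * Jx t (qt Q t u) - bx t (qt Q t u)) / p t (qt Q t u) -
       (-((1/2) * Jx' t (qt Q' t u) - bx' t (qt Q' t u)) / p' t (qt Q' t u)))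
    ≤ err Q p J bx a b κ t + err Q' p' J' bx' a b κ t := by
  have hle : κ ≤ 1 - κ := by linarith
  have hI : uIcc κ (1-κ) = Icc κ (1-κ) := uIcc_of_le hle
  have hIoo : ∀ u ∈ uIcc κ (1-κ), u ∈ Ioo (0:ℝ) 1 := by
    rw [hI]; intro u hu; exact ⟨by linarith [hu.1], by linarith [hu.2]⟩
  have cX := h.contOn1 (f := fun _ x => x) (by fun_prop) hκ t
  have cY := h'.contOn1 (f := fun _ x => x) (by fun_prop) hκ t
  have cp := h.contOn1 h.cp hκ t
  have cp' := h'.contOn1 h'.cp hκ t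
  have cJ := h.contOn1 h.cJ hκ t
  have cJ' := h'.contOn1 h'.cJ hκ t
  have cJx := h.contOn1 h.cJx hκ t
  have cJx' := h'.contOn1 h'.cJx hκ t
  have cb := h.contOn1 h.cbx hκ t
  have cb' := h'.contOn1 h'.cbx hκ t
  have np : ∀ u ∈ Icc κ (1-κ), p t (qt Q t u) ≠ 0 := fun u _ => (h.pp _ _).ne'
  have np' : ∀ u ∈ Icc κ (1-κ), p' t (qt Q' t u) ≠ 0 := fun u _ => (h'.pp _ _).ne'
  have c1 : ContinuousOn (fun u => cc1 (qt Q t u - qt Q' t u)) (Icc κ (1-κ)) := cc1_c.comp_continuousOn (cX.sub cY)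
  have c2 : ContinuousOn (fun u => cc2 (qt Q t u - qt Q' t u)) (Icc κ (1-κ)) := cc2_c.comp_continuousOn (cX.sub cY)
  have cpi := cp.inv₀ np
  have cpi' := cp'.inv₀ np'
  have II : ∀ {f : ℝ → ℝ}, ContinuousOn f (Icc κ (1-κ)) → IntervalIntegrable f volume κ (1-κ) := 
    fun hf => ContinuousOn.intervalIntegrable (by rwa [hI])
  -- integration by parts
  have ibp := intervalIntegral.integral_mul_deriv_eq_deriv_mul (a := κ) (b := 1-κ)
    (u := fun u => cc1 (qt Q t u - qt Q' t u)) 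
    (u' := fun u => cc2 (qt Q t u - qt Q' t u) * ((p t (qt Q t u))⁻¹ - (p' t (qt Q' t u))⁻¹))
    (v := fun u => J t (qt Q t u) - J' t (qt Q' t u))
    (v' := fun u => Jx t (qt Q t u) / p t (qt Q t u) - Jx' t (qt Q' t u) / p' t (qt Q' t u))
    (fun u hu => (cc1_d _).comp u ((h.qt_du t (hIoo u hu)).sub (h'.qt_du t (hIoo u hu))))
    (fun u hu => (h.J_du t (hIoo u hu)).sub (h'.J_du t (hIoo u hu)))
    (II (c2.mul (cpi.sub cpi'))) (II ((cJx.div cp np).sub (cJx'.div cp' np')))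
  have I1 : IntervalIntegrable (fun u => cc1 (qt Q t u - qt Q' t u) * (Jx t (qt Q t u) / p t (qt Q t u) - Jx' t (qt Q' t u) / p' t (qt Q' t u))) volume κ (1-κ) :=
    II (c1.mul ((cJx.div cp np).sub (cJx'.div cp' np')))
  have I2 : IntervalIntegrable (fun u => cc1 (qt Q t u - qt Q' t u) * (bx t (qt Q t u) / p t (qt Q t u) - bx' t (qt Q' t u) / p' t (qt Q' t u))) volume κ (1-κ) :=
    II (c1.mul ((cb.div cp np).sub (cb'.div cp' np')))
  have I3 : IntervalIntegrable (fun u => cc2 (qt Q t u - qt Q' t u) * ((p t (qt Q t u))⁻¹ - (p' t (qt Q' t u))⁻¹) * (J t (qt Q t u) - J' t (qt Q' t u))) volume κ (1-κ) :=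
    II ((c2.mul (cpi.sub cpi')).mul (cJ.sub cJ'))
  have E1 : IntervalIntegrable (fun u => (1/2) * |J t (qt Q t u) / p t (qt Q t u) - a u| + |bx t (qt Q t u) / p t (qt Q t u) - b u|) volume κ (1-κ) :=
    II ((continuousOn_const.mul ((cJ.div cp np).sub ha.continuousOn).abs).add ((cb.div cp np).sub hb.continuousOn).abs)
  have E2 : IntervalIntegrable (fun u => (1/2) * |J' t (qt Q' t u) / p' t (qt Q' t u) - a u| + |bx' t (qt Q' t u) / p' t (qt Q' t u) - b u|) volume κ (1-κ) :=
    II ((continuousOn_const.mul ((cJ'.div cp' np').sub ha.continuousOn).abs).add ((cb'.div cp' np').sub hb.continuousOn).abs)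
  have e : ∫ u in κ..(1-κ), cc1 (qt Q t u - qt Q' t u) *
      (-((1/2) * Jx t (qt Q t u) - bx t (qt Q t u)) / p t (qt Q t u) -
       (-((1/2) * Jx' t (qt Q' t u) - bx' t (qt Q' t u)) / p' t (qt Q' t u)))
     = (-(1/2)) * (∫ u in κ..(1-κ), cc1 (qt Q t u - qt Q' t u) * (Jx t (qt Q t u) / p t (qt Q t u) - Jx' t (qt Q' t u) / p' t (qt Q' t u)))
      + ∫ u in κ..(1-κ), cc1 (qt Q t u - qt Q' t u) * (bx t (qt Q t u) / p t (qt Q t u) - bx' t (qt Q' t u) / p' t (qt Q' t u)) := by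
    rw [← intervalIntegral.integral_const_mul, ← intervalIntegral.integral_add (I1.const_mul _) I2]
    congr 1; ext u; ring
  rw [e, ibp]
  have main : (1/2) * (∫ u in κ..(1-κ), cc2 (qt Q t u - qt Q' t u) * ((p t (qt Q t u))⁻¹ - (p' t (qt Q' t u))⁻¹) * (J t (qt Q t u) - J' t (qt Q' t u)))
      + (∫ u in κ..(1-κ), cc1 (qt Q t u - qt Q' t u) * (bx t (qt Q t u) / p t (qt Q t u) - bx' t (qt Q' t u) / p' t (qt Q' t u)))
      ≤ (∫ u in κ..(1-κ), ((1/2) * |J t (qt Q t u) / p t (qt Q t u) - a u| + |bx t (qt Q t u) / p t (qt Q t u) - b u|))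
       + (∫ u in κ..(1-κ), ((1/2) * |J' t (qt Q' t u) / p' t (qt Q' t u) - a u| + |bx' t (qt Q' t u) / p' t (qt Q' t u) - b u|)) := by
    rw [← intervalIntegral.integral_const_mul, ← intervalIntegral.integral_add (I3.const_mul _) I2,
      ← intervalIntegral.integral_add E1 E2]
    refine intervalIntegral.integral_mono_on hle ((I3.const_mul _).add I2) (E1.add E2) fun u hu => ?_
    set x := qt Q t u
    set y := qt Q' t u
    have h1 := alg_est (h.pp t x) (h'.pp t y) (h.J0 t x) (h'.J0 t y)
    have h2 := cc2_b (x - y)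
    have h3 := cc1_b (x - y)
    have h4 : |J t x / p t x - J' t y / p' t y| ≤ |J t x / p t x - a u| + |J' t y / p' t y - a u| := by
      rw [abs_sub_comm (J' t y / p' t y)]; exact abs_sub_le _ _ _
    have h5 : |bx t x / p t x - bx' t y / p' t y| ≤ |bx t x / p t x - b u| + |bx' t y / p' t y - b u| := by
      rw [abs_sub_comm (bx' t y / p' t y)]; exact abs_sub_le _ _ _
    have h6 : cc1 (x-y) * (bx t x / p t x - bx' t y / p' t y) ≤ |bx t x / p t x - bx' t y / p' t y| := by
      refine (le_abs_self _).trans ?_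
      rw [abs_mul]; exact mul_le_of_le_one_left (abs_nonneg _) h3
    have h7 : cc2 (x-y) * ((p t x)⁻¹ - (p' t y)⁻¹) * (J t x - J' t y) ≤ |J t x / p t x - J' t y / p' t y| := by
      rw [mul_assoc]
      calc _ ≤ cc2 (x-y) * |J t x / p t x - J' t y / p' t y| := mul_le_mul_of_nonneg_left h1 h2.1
        _ ≤ _ := mul_le_of_le_one_left (abs_nonneg _) h2.2
    linarith
  have bd : ∀ u, |cc1 (qt Q t u - qt Q' t u) * (J t (qt Q t u) - J' t (qt Q' t u))| ≤ J t (qt Q t u) + J' t (qt Q' t u) := by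
    intro u
    rw [abs_mul]
    refine (mul_le_of_le_one_left (abs_nonneg _) (cc1_b _)).trans ?_
    rw [abs_le]
    constructor <;> linarith [h.J0 t (qt Q t u), h'.J0 t (qt Q' t u)]
  have b1 := abs_le.1 (bd κ)
  have b2 := abs_le.1 (bd (1-κ))
  unfold err
  linarith [b1.1, b1.2, b2.1, b2.2]

end SF
end


section
lemma param_cont {f : ℝ → ℝ → ℝ} {c d : ℝ} (hcd : c ≤ d)
    (hf : ContinuousOn (fun z : ℝ × ℝ => f z.1 z.2) (univ ×ˢ Icc c d)) :
    Continuous fun t => ∫ u in c..d, f t u := by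
  have e : ∀ t, ∫ u in c..d, f t u = ∫ u in c..d, f t (max c (min u d)) := by
    intro t
    refine intervalIntegral.integral_congr fun u hu => ?_
    rw [uIcc_of_le hcd] at hu
    simp [hu.1, hu.2]
  simp only [e]
  apply intervalIntegral.continuous_parametric_intervalIntegral_of_continuous'
  have : Continuous fun z : ℝ × ℝ => ((z.1, max c (min z.2 d)) : ℝ × ℝ) := by fun_prop
  refine hf.comp_continuous this fun z => ⟨trivial, le_max_left _ _, max_le hcd (min_le_right _ _)⟩

namespace SF
variable {Q p J Jx bx : ℝ → ℝ → ℝ} {Q' p' J' Jx' bx' : ℝ → ℝ → ℝ}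

lemma err_cont (h : SF Q p J Jx bx) {a b : ℝ → ℝ} (ha : Continuous a)
    (hb : Continuous b) {κ : ℝ} (hκ : 0 < κ) (hκ2 : κ ≤ 1/2) : 
    Continuous (fun t => ∫ u in κ..(1-κ), ((1/2) * |J t (qt Q t u) / p t (qt Q t u) - a u| + |bx t (qt Q t u) / p t (qt Q t u) - b u|)) ∧
    Continuous (fun t => (1/2) * (J t (qt Q t κ) + J t (qt Q t (1-κ)))) := by
  have hle : κ ≤ 1 - κ := by linarith
  constructor
  · refine param_cont (f := fun t u => ((1/2) * |J t (qt Q t u) / p t (qt Q t u) - a u| + |bx t (qt Q t u) / p t (qt Q t u) - b u|)) hle ?_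
    have cp := h.contOn2 h.cp hκ
    have cJ := h.contOn2 h.cJ hκ
    have cb := h.contOn2 h.cbx hκ
    have np : ∀ z ∈ (univ ×ˢ Icc κ (1-κ) : Set (ℝ × ℝ)), p z.1 (qt Q z.1 z.2) ≠ 0 := fun u _ => (h.pp _ _).ne'
    exact ((continuousOn_const.mul ((cJ.div cp np).sub (ha.comp continuous_snd).continuousOn).abs).add
      ((cb.div cp np).sub (hb.comp continuous_snd).continuousOn).abs)
  · have gen : ∀ u ∈ Icc κ (1-κ), Continuous fun t => J t (qt Q t u) := by
      intro u hu
      exact (h.contOn2 h.cJ hκ).comp_continuous (f := fun t : ℝ => (t, u)) (by fun_prop) (fun t => ⟨trivial, hu⟩)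
    exact continuous_const.mul ((gen κ ⟨le_rfl, hle⟩).add (gen (1-κ) ⟨hle, le_rfl⟩))

lemma contraction (h : SF Q p J Jx bx) (h' : SF Q' p' J' Jx' bx') {a b : ℝ → ℝ} (ha : Continuous a)
    (hb : Continuous b) {κ : ℝ} (hκ : 0 < κ) (hκ2 : κ ≤ 1/2) (h0 : ∀ x, Q 0 x = Q' 0 x) {T : ℝ} (hT : 0 ≤ T) :
    ∫ u in κ..(1-κ), cc0 (qt Q T u - qt Q' T u) ≤
      ∫ t in (0:ℝ)..T, (err Q p J bx a b κ t + err Q' p' J' bx' a b κ t) := by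
  have hle : κ ≤ 1 - κ := by linarith
  have hI : uIcc κ (1-κ) = Icc κ (1-κ) := uIcc_of_le hle
  have hIoo : ∀ u ∈ uIcc κ (1-κ), u ∈ Ioo (0:ℝ) 1 := by
    rw [hI]; intro u hu; exact ⟨by linarith [hu.1], by linarith [hu.2]⟩
  have hq0 : ∀ u, qt Q 0 u = qt Q' 0 u := by
    intro u; unfold qt; simp only [h0]
  set D : ℝ → ℝ → ℝ := fun t u => cc1 (qt Q t u - qt Q' t u) *
      (-((1/2) * Jx t (qt Q t u) - bx t (qt Q t u)) / p t (qt Q t u) -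
       (-((1/2) * Jx' t (qt Q' t u) - bx' t (qt Q' t u)) / p' t (qt Q' t u))) with hD
  have cX := h.contOn2 (f := fun _ x => x) (by fun_prop) hκ
  have cY := h'.contOn2 (f := fun _ x => x) (by fun_prop) hκ
  have cD : ContinuousOn (fun z : ℝ × ℝ => D z.1 z.2) (univ ×ˢ Icc κ (1-κ)) := by
    have cp := h.contOn2 h.cp hκ
    have cp' := h'.contOn2 h'.cp hκ
    have cJx := h.contOn2 h.cJx hκ
    have cJx' := h'.contOn2 h'.cJx hκ
    have cb := h.contOn2 h.cbx hκ
    have cb' := h'.contOn2 h'.cbx hκ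
    have np : ∀ z ∈ (univ ×ˢ Icc κ (1-κ) : Set (ℝ × ℝ)), p z.1 (qt Q z.1 z.2) ≠ 0 := fun u _ => (h.pp _ _).ne'
    have np' : ∀ z ∈ (univ ×ˢ Icc κ (1-κ) : Set (ℝ × ℝ)), p' z.1 (qt Q' z.1 z.2) ≠ 0 := fun u _ => (h'.pp _ _).ne'
    have c1 : ContinuousOn (fun z : ℝ × ℝ => cc1 (qt Q z.1 z.2 - qt Q' z.1 z.2)) (univ ×ˢ Icc κ (1-κ)) :=
      cc1_c.comp_continuousOn (cX.sub cY)
    exact c1.mul (((((continuousOn_const.mul cJx).sub cb).neg).div cp np).sub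
      ((((continuousOn_const.mul cJx').sub cb').neg).div cp' np'))
  have sl : ∀ {f : ℝ → ℝ → ℝ}, ContinuousOn (fun z : ℝ × ℝ => f z.1 z.2) (univ ×ˢ Icc κ (1-κ)) → 
      ∀ u ∈ uIcc κ (1-κ), Continuous fun t => f t u := by
    intro f hf u hu
    rw [hI] at hu
    exact hf.comp_continuous (f := fun t : ℝ => (t, u)) (by fun_prop) (fun t => ⟨trivial, hu⟩)
  have ftc : ∀ u ∈ uIcc κ (1-κ), ∫ t in (0:ℝ)..T, D t u = cc0 (qt Q T u - qt Q' T u) := by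
    intro u hu
    have := intervalIntegral.integral_eq_sub_of_hasDerivAt_of_le hT (f := fun t => cc0 (qt Q t u - qt Q' t u)) 
      (f' := fun t => D t u) ?_ ?_ ((sl cD u hu).intervalIntegrable _ _)
    · rw [this, hq0 u]; simp [cc0]
    · exact (cc0_c.comp ((sl cX u hu).sub (sl cY u hu))).continuousOn
    · intro t ht
      exact (cc0_d _).comp t ((h.qt_dt ht.1 (hIoo u hu)).sub (h'.qt_dt ht.1 (hIoo u hu)))
  rw [← intervalIntegral.integral_congr ftc]
  rw [swapII (H := fun u t => D t u) hle hT]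
  · have c1 := h.err_cont ha hb hκ hκ2
    have c2 := h'.err_cont ha hb hκ hκ2
    refine intervalIntegral.integral_mono_on hT ((param_cont hle cD).intervalIntegrable _ _) 
      (((c1.1.add c1.2).add (c2.1.add c2.2)).intervalIntegrable _ _) fun t _ => ?_
    exact h.slice_est h' ha hb hκ hκ2 t
  · exact cD.comp (f := fun z : ℝ × ℝ => (z.2, z.1)) (by fun_prop) (fun z hz => ⟨trivial, hz.1⟩)

end SF
end


section
def Lc (x : ℝ) : ℝ := 1/2 + Real.arctan x / Real.pi
def Lq (x : ℝ) : ℝ := 1 / (Real.pi * (1 + x^2))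

lemma Lp_pos (x : ℝ) : 0 < Lq x := by rw [Lq]; have := Real.pi_pos; positivity
lemma Lc_d (x : ℝ) : HasDerivAt Lc (Lq x) x := by
  have := ((Real.hasDerivAt_arctan x).div_const Real.pi).const_add (1/2)
  refine this.congr_deriv ?_
  rw [Lq]; have := Real.pi_pos; field_simp
lemma Lp_c : Continuous Lq := by
  unfold Lq
  have := Real.pi_pos
  exact continuous_const.div (by fun_prop) (fun x => by positivity)
lemma Lc_c : Continuous Lc := continuous_iff_continuousAt.2 fun z => (Lc_d z).continuousAt
lemma Lc_mem (x : ℝ) : 0 ≤ Lc x ∧ Lc x ≤ 1 := by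
  have h1 := Real.arctan_lt_pi_div_two x
  have h2 := Real.neg_pi_div_two_lt_arctan x
  have hp := Real.pi_pos
  have e1 : Real.arctan x / Real.pi ≤ 1/2 := by rw [div_le_iff₀ hp]; linarith
  have e2 : -(1/2) ≤ Real.arctan x / Real.pi := by rw [le_div_iff₀ hp]; linarith
  rw [Lc]; constructor <;> linarith
lemma Lc_top : Tendsto Lc atTop (𝓝 1) := by
  have hp := Real.pi_pos
  have := ((Real.tendsto_arctan_atTop.mono_right nhdsWithin_le_nhds).div_const Real.pi).const_add (1/2:ℝ)
  have e : (1/2:ℝ) + Real.pi / 2 / Real.pi = 1 := by field_simp; norm_num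
  rw [e] at this; exact this
lemma Lc_bot : Tendsto Lc atBot (𝓝 0) := by
  have hp := Real.pi_pos
  have := ((Real.tendsto_arctan_atBot.mono_right nhdsWithin_le_nhds).div_const Real.pi).const_add (1/2:ℝ)
  have e : (1/2:ℝ) + -(Real.pi / 2) / Real.pi = 0 := by field_simp; norm_num
  rw [e] at this; exact this
lemma Lc_uc : UniformContinuous Lc := by
  have : LipschitzWith 1 Lc := by
    apply lipschitzWith_of_nnnorm_deriv_le (fun x => (Lc_d x).differentiableAt)
    intro x
    rw [(Lc_d x).deriv, ← NNReal.coe_le_coe]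
    simp only [coe_nnnorm, NNReal.coe_one, Real.norm_eq_abs]
    rw [abs_of_pos (Lp_pos x), Lq, div_le_one (by have := Real.pi_pos; positivity)]
    nlinarith [Real.pi_gt_three, sq_nonneg x]
  exact this.uniformContinuous

def mQ (F : ℝ → ℝ → ℝ) (k : ℝ → ℝ) (ε t x : ℝ) : ℝ := (1-ε) * cv (F t) k x + ε * Lc x
def mp (F : ℝ → ℝ → ℝ) (k : ℝ → ℝ) (ε t x : ℝ) : ℝ := (1-ε) * cv (F t) (deriv k) x + ε * Lq x
def mJ (A : ℝ → ℝ) (F : ℝ → ℝ → ℝ) (k : ℝ → ℝ) (ε t x : ℝ) : ℝ := (1-ε) * cv (fun y => A (F t y)) (deriv k) x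
def mJx (A : ℝ → ℝ) (F : ℝ → ℝ → ℝ) (k : ℝ → ℝ) (ε t x : ℝ) : ℝ :=
  (1-ε) * cv (fun y => A (F t y)) (deriv (deriv k)) x

namespace CdfFlow
variable {F : ℝ → ℝ → ℝ} {k : ℝ → ℝ} {ε : ℝ} {A B a b F₀ : ℝ → ℝ} {C : ℝ}

lemma uc (hF : CdfFlow F) {t : ℝ} (hc : Continuous (F t)) : UniformContinuous (F t) := by
  have h0 : Continuous (fun x => F t x - Lc x) := hc.sub Lc_c
  have h1 : UniformContinuous (fun x => F t x - Lc x) := by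
    apply h0.uniformContinuous_of_tendsto_cocompact (x := 0)
    rw [cocompact_eq_atBot_atTop, tendsto_sup]
    constructor
    · simpa using (hF.bot t).sub Lc_bot
    · simpa using (hF.top t).sub Lc_top
  have := h1.add Lc_uc
  simpa using this

lemma msf (hF : CdfFlow F) (hk : Mol k ε) (hε : ε < 1) (hN : Nice A B a b C) (hW : WW A B F₀ F) :
    SF (mQ F k ε) (mp F k ε) (mJ A F k ε) (mJx A F k ε) (mJ B F k ε) where
  cQ := by
    have := hF.cv_cont (ψ := fun u => u) continuous_id hk.i0
    exact (continuous_const.mul this).add (continuous_const.mul (Lc_c.comp continuous_snd))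
  cp := by
    have := hF.cv_cont (ψ := fun u => u) continuous_id hk.i1
    exact (continuous_const.mul this).add (continuous_const.mul (Lp_c.comp continuous_snd))
  cJ := continuous_const.mul (hF.cv_cont hN.cA hk.i1)
  cJx := continuous_const.mul (hF.cv_cont hN.cA hk.i2)
  cbx := continuous_const.mul (hF.cv_cont hN.cB hk.i1)
  dQ t x := by
    have := hF.cv_deriv (ψ := fun u => u) continuous_id hk.smooth hk.cs t x
    exact (this.const_mul _).fun_add ((Lc_d x).const_mul _)
  dJ t x := (hF.cv_deriv hN.cA hk.s1 hk.cs.deriv t x).const_mul _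
  pp t x := by
    have := hF.p_nonneg hk t x
    have := Lp_pos x
    have := hk.pos
    have : 0 ≤ (1-ε) * cv (F t) (deriv k) x := mul_nonneg (by linarith) (by assumption)
    rw [mp]; positivity
  J0 t x := mul_nonneg (by linarith) (hF.J_bounds hk hN t x).1
  dt t x ht := by
    have := ((hF.moll_deriv hk hN.cA hN.cB hW ht x).const_mul (1-ε)).add_const (ε * Lc x)
    refine this.congr_deriv ?_
    simp only [rhs, mJx, mJ]; ring
  bot t := by
    have h1 : Tendsto (cv (F t) k) atBot (𝓝 0) := by
      refine tendsto_of_tendsto_of_tendsto_of_le_of_le tendsto_const_nhds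
        ((hF.bot t).comp (tendsto_atBot_add_const_right _ ε tendsto_id)) (fun x => (hF.q_mem hk t x).1) 
        (fun x => (cv_bounds hk (hF.mono t) (hF.abs_le_one t) x).2)
    have := (h1.const_mul (1-ε)).add (Lc_bot.const_mul ε)
    rw [mul_zero, mul_zero, add_zero] at this; exact this
  top t := by
    have h1 : Tendsto (cv (F t) k) atTop (𝓝 1) := by
      refine tendsto_of_tendsto_of_tendsto_of_le_of_le 
        ((hF.top t).comp (tendsto_atTop_add_const_right _ (-ε) tendsto_id)) tendsto_const_nhds 
        (fun x => (cv_bounds hk (hF.mono t) (hF.abs_le_one t) x).1) (fun x => (hF.q_mem hk t x).2) 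
    have := (h1.const_mul (1-ε)).add (Lc_top.const_mul ε)
    rw [show (1-ε) * 1 + ε * 1 = 1 by ring] at this; exact this

def e1 (A B a b : ℝ → ℝ) (F : ℝ → ℝ → ℝ) (k : ℝ → ℝ) (ε κ t : ℝ) : ℝ :=
  ∫ u in κ..(1-κ), ((1/2) * |mJ A F k ε t (qt (mQ F k ε) t u) / mp F k ε t (qt (mQ F k ε) t u) - a u|
    + |mJ B F k ε t (qt (mQ F k ε) t u) / mp F k ε t (qt (mQ F k ε) t u) - b u|)
def Bd (A : ℝ → ℝ) (F : ℝ → ℝ → ℝ) (k : ℝ → ℝ) (ε κ t : ℝ) : ℝ :=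
  (1/2) * (mJ A F k ε t (qt (mQ F k ε) t κ) + mJ A F k ε t (qt (mQ F k ε) t (1-κ)))

lemma err_eq (κ t : ℝ) : SF.err (mQ F k ε) (mp F k ε) (mJ A F k ε) (mJ B F k ε) a b κ t =
  e1 A B a b F k ε κ t + Bd A F k ε κ t := rfl

lemma mJA_bd (hF : CdfFlow F) (hk : Mol k ε) (hε : ε < 1) (hN : Nice A B a b C) (t x : ℝ) :
    mJ A F k ε t x ≤ C * mp F k ε t x := by
  have h1 := (hF.J_bounds hk hN t x).2
  have h2 := Lp_pos x
  have h3 := hk.pos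
  have h4 := hN.C0
  have h5 : 0 ≤ C * (ε * Lq x) := by positivity
  rw [mJ, mp]
  nlinarith [mul_le_mul_of_nonneg_left h1 (by linarith : 0 ≤ 1 - ε)]

lemma mJB_bd (hF : CdfFlow F) (hk : Mol k ε) (hε : ε < 1) (hN : Nice A B a b C) (t x : ℝ) :
    |mJ B F k ε t x| ≤ C * mp F k ε t x := by
  have h1 := hF.flux_est hk hN.hB (t := t) (x := x) (α0 := 0) (ω := C) (by intro v _; simpa using hN.bC v)
  have h2 := Lp_pos x
  have h3 := hk.pos
  have h4 := hN.C0
  have h5 : 0 ≤ C * (ε * Lq x) := by positivity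
  rw [mJ, mp, abs_mul, abs_of_nonneg (by linarith : 0 ≤ 1 - ε)]
  simp only [zero_mul, sub_zero] at h1
  nlinarith [mul_le_mul_of_nonneg_left h1 (by linarith : 0 ≤ 1 - ε)]

lemma e1_nonneg {κ : ℝ} (hκ2 : κ ≤ 1/2) (t : ℝ) : 0 ≤ e1 A B a b F k ε κ t :=
  intervalIntegral.integral_nonneg (by linarith) (fun u _ => by positivity)

lemma e1_int (hF : CdfFlow F) (hk : Mol k ε) (hε : ε < 1) (hN : Nice A B a b C) (hW : WW A B F₀ F)
    {κ : ℝ} (hκ : 0 < κ) (hκ2 : κ ≤ 1/2) (t : ℝ) :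
    IntervalIntegrable (fun u => ((1/2) * |mJ A F k ε t (qt (mQ F k ε) t u) / mp F k ε t (qt (mQ F k ε) t u) - a u|
    + |mJ B F k ε t (qt (mQ F k ε) t u) / mp F k ε t (qt (mQ F k ε) t u) - b u|)) volume κ (1-κ) := by
  have h := hF.msf hk hε hN hW
  apply ContinuousOn.intervalIntegrable
  rw [uIcc_of_le (by linarith)]
  have c1 := h.contOn1 h.cJ hκ t
  have c2 := h.contOn1 h.cp hκ t
  have c3 := h.contOn1 h.cbx hκ t
  have n : ∀ u ∈ Icc κ (1-κ), mp F k ε t (qt (mQ F k ε) t u) ≠ 0 := fun u _ => (h.pp _ _).ne'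
  exact (continuousOn_const.mul ((c1.div c2 n).sub hN.ha.continuousOn).abs).add 
    ((c3.div c2 n).sub hN.hb.continuousOn).abs

lemma e1_bound (hF : CdfFlow F) (hk : Mol k ε) (hε : ε < 1) (hN : Nice A B a b C) (hW : WW A B F₀ F)
    {κ : ℝ} (hκ : 0 < κ) (hκ2 : κ ≤ 1/2) (t : ℝ) : e1 A B a b F k ε κ t ≤ 3 * C := by
  have h := hF.msf hk hε hN hW
  have h4 := hN.C0
  have : e1 A B a b F k ε κ t ≤ ∫ u in κ..(1-κ), 3 * C := by
    apply intervalIntegral.integral_mono_on (by linarith) (hF.e1_int hk hε hN hW hκ hκ2 t) (by simp)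
    intro u _
    have pp := h.pp t (qt (mQ F k ε) t u)
    have j1 : mJ A F k ε t (qt (mQ F k ε) t u) / mp F k ε t (qt (mQ F k ε) t u) ≤ C := by
      rw [div_le_iff₀ pp]; exact hF.mJA_bd hk hε hN _ _
    have j2 : 0 ≤ mJ A F k ε t (qt (mQ F k ε) t u) / mp F k ε t (qt (mQ F k ε) t u) :=
      div_nonneg (h.J0 _ _) pp.le
    have j3 : |mJ B F k ε t (qt (mQ F k ε) t u) / mp F k ε t (qt (mQ F k ε) t u)| ≤ C := by
      rw [abs_div, abs_of_pos pp, div_le_iff₀ pp]; exact hF.mJB_bd hk hε hN _ _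
    have j4 := abs_sub (mJ B F k ε t (qt (mQ F k ε) t u) / mp F k ε t (qt (mQ F k ε) t u)) (b u)
    have j5 := hN.bC u
    have j6 : |mJ A F k ε t (qt (mQ F k ε) t u) / mp F k ε t (qt (mQ F k ε) t u) - a u| ≤ C := by
      rw [abs_le]; constructor <;> linarith [hN.a0 u, hN.aC u]
    linarith
  refine this.trans ?_
  rw [intervalIntegral.integral_const, smul_eq_mul]
  nlinarith

lemma e1_small (hF : CdfFlow F) (hk : Mol k ε) (hε : ε < 1) (hN : Nice A B a b C) (hW : WW A B F₀ F)
    {κ : ℝ} (hκ : 0 < κ) (hκ2 : κ ≤ 1/2) (t : ℝ) {ω : ℝ} (hω0 : 0 ≤ ω)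
    (hω : ∀ x, ∀ v ∈ Icc (F t (x - ε)) (F t (x + ε)), |a v - a (mQ F k ε t x)| ≤ ω ∧ |b v - b (mQ F k ε t x)| ≤ ω) :
    e1 A B a b F k ε κ t ≤ (3/2) * (ω + C * ε) := by
  have h := hF.msf hk hε hN hW
  have h4 := hN.C0
  have hpos := hk.pos
  have hintg : IntervalIntegrable (fun u => Lq (qt (mQ F k ε) t u) * (mp F k ε t (qt (mQ F k ε) t u))⁻¹) volume κ (1-κ) := by
    apply ContinuousOn.intervalIntegrable
    rw [uIcc_of_le (by linarith)]
    have c1 := h.contOn1 (f := fun _ x => Lq x) (Lp_c.comp continuous_snd) hκ t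
    have c2 := h.contOn1 h.cp hκ t
    exact c1.mul (c2.inv₀ (fun u _ => (h.pp _ _).ne'))
  have ftc : ∫ u in κ..(1-κ), Lq (qt (mQ F k ε) t u) * (mp F k ε t (qt (mQ F k ε) t u))⁻¹ ≤ 1 := by
    rw [intervalIntegral.integral_eq_sub_of_hasDerivAt (f := fun u => Lc (qt (mQ F k ε) t u)) _ hintg]
    · linarith [(Lc_mem (qt (mQ F k ε) t κ)).1, (Lc_mem (qt (mQ F k ε) t (1-κ))).2]
    · intro u hu
      rw [uIcc_of_le (by linarith)] at hu
      exact (Lc_d _).comp u (h.qt_du t ⟨by linarith [hu.1], by linarith [hu.2]⟩)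
  have : e1 A B a b F k ε κ t ≤ ∫ u in κ..(1-κ), ((3/2) * ω + (3/2) * C * ε * (Lq (qt (mQ F k ε) t u) * (mp F k ε t (qt (mQ F k ε) t u))⁻¹)) := by
    apply intervalIntegral.integral_mono_on (by linarith) (hF.e1_int hk hε hN hW hκ hκ2 t) 
      ((by simp : IntervalIntegrable (fun _ => (3/2)*ω) volume κ (1-κ)).add (hintg.const_mul _))
    intro u hu
    have hQ := h.Q_qt t (u := u) ⟨by linarith [hu.1], by linarith [hu.2]⟩
    set x := qt (mQ F k ε) t u with hx
    have pp := h.pp t x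
    have hp0 := hF.p_nonneg hk t x
    have hL := Lp_pos x
    have f1 := hF.flux_est hk hN.hA (t := t) (x := x) (α0 := a u) (ω := ω) (fun v hv => by
      have := (hω x v hv).1; rwa [hQ] at this)
    have f2 := hF.flux_est hk hN.hB (t := t) (x := x) (α0 := b u) (ω := ω) (fun v hv => by
      have := (hω x v hv).2; rwa [hQ] at this)
    have gen : ∀ (Ψ : ℝ → ℝ) (α0 : ℝ), |α0| ≤ C → 
        |cv (fun y => Ψ (F t y)) (deriv k) x - α0 * cv (F t) (deriv k) x| ≤ ω * cv (F t) (deriv k) x →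
        |mJ Ψ F k ε t x / mp F k ε t x - α0| ≤ ω + C * ε * (Lq x * (mp F k ε t x)⁻¹) := by
      intro Ψ α0 hα hf
      have e : mJ Ψ F k ε t x / mp F k ε t x - α0 = 
        ((1-ε) * (cv (fun y => Ψ (F t y)) (deriv k) x - α0 * cv (F t) (deriv k) x) - α0 * (ε * Lq x)) / mp F k ε t x := by
        field_simp
        rw [mJ, mp]; ring
      rw [e, abs_div, abs_of_pos pp, div_le_iff₀ pp]
      have e2 : (ω + C * ε * (Lq x * (mp F k ε t x)⁻¹)) * mp F k ε t x = ω * mp F k ε t x + C * (ε * Lq x) := by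
        field_simp
      rw [e2]
      refine (abs_sub _ _).trans ?_
      rw [abs_mul, abs_mul α0, abs_of_nonneg (by linarith : 0 ≤ 1 - ε), abs_of_nonneg (by positivity : 0 ≤ ε * Lq x)]
      have g1 := mul_le_mul_of_nonneg_right hα (by positivity : 0 ≤ ε * Lq x)
      have g2 := mul_le_mul_of_nonneg_left hf (by linarith : 0 ≤ 1 - ε)
      have g3 : 0 ≤ ω * (ε * Lq x) := by positivity
      rw [mp]; nlinarith
    have r1 := gen A (a u) (by rw [abs_of_nonneg (hN.a0 u)]; exact hN.aC u) f1
    have r2 := gen B (b u) (hN.bC u) f2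
    linarith
  refine this.trans ?_
  rw [intervalIntegral.integral_add (by simp) (hintg.const_mul _), intervalIntegral.integral_const, smul_eq_mul,
    intervalIntegral.integral_const_mul]
  have : (3/2) * C * ε * (∫ u in κ..(1-κ), Lq (qt (mQ F k ε) t u) * (mp F k ε t (qt (mQ F k ε) t u))⁻¹) ≤ (3/2) * C * ε * 1 :=
    mul_le_mul_of_nonneg_left ftc (by positivity)
  nlinarith
end CdfFlow
end


section
namespace CdfFlow
variable {F G : ℝ → ℝ → ℝ} {k : ℝ → ℝ} {ε : ℝ} {A B a b F₀ : ℝ → ℝ} {C : ℝ}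

lemma p0_bd (hF : CdfFlow F) (hk : Mol k ε) (t x : ℝ) : cv (F t) (deriv k) x ≤ ∫ y, |deriv k y| := by
  apply integral_mono (cv_integrable (hF.mono t).measurable (hF.abs_le_one t) hk.i1 x) hk.i1.abs
  intro y
  have h1 := hF.abs_le_one t (x - y)
  calc F t (x - y) * deriv k y ≤ |F t (x - y) * deriv k y| := le_abs_self _
    _ = |F t (x-y)| * |deriv k y| := abs_mul _ _
    _ ≤ 1 * |deriv k y| := by gcongr
    _ = |deriv k y| := one_mul _

lemma mJ_le (hF : CdfFlow F) (hk : Mol k ε) (hε : ε < 1) (hN : Nice A B a b C) (t x : ℝ) :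
    0 ≤ mJ A F k ε t x ∧ mJ A F k ε t x ≤ C * cv (F t) (deriv k) x := by
  have h := hF.J_bounds hk hN t x
  have := hk.pos
  rw [mJ]
  exact ⟨mul_nonneg (by linarith) h.1, by nlinarith [h.1, h.2]⟩

lemma Bd_lim (hF : CdfFlow F) (hk : Mol k ε) (hε : ε < 1) (hN : Nice A B a b C) (hW : WW A B F₀ F) (T : ℝ) :
    Tendsto (fun κ => ∫ t in (0:ℝ)..T, Bd A F k ε κ t) (𝓝[>] 0) (𝓝 0) := by
  have h := hF.msf hk hε hN hW
  have h4 := hN.C0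
  have ev : ∀ᶠ κ : ℝ in 𝓝[>] 0, 0 < κ ∧ κ < 1/2 := by
    have : Ioo (0:ℝ) (1/2) ∈ 𝓝[>] (0:ℝ) := Ioo_mem_nhdsGT (by norm_num)
    exact this
  have z : (0:ℝ) = ∫ t in (0:ℝ)..T, (0:ℝ) := by simp
  suffices hz : Tendsto _ _ (𝓝 (∫ t in (0:ℝ)..T, (0:ℝ))) from by rwa [← z] at hz
  apply intervalIntegral.tendsto_integral_filter_of_dominated_convergence (fun _ => C * ∫ y, |deriv k y|)
  · filter_upwards [ev] with κ hκ
    exact (h.err_cont hN.ha hN.hb hκ.1 hκ.2.le).2.aestronglyMeasurable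
  · filter_upwards [ev] with κ hκ
    refine Eventually.of_forall fun t _ => ?_
    have a1 := hF.mJ_le hk hε hN t (qt (mQ F k ε) t κ)
    have a2 := hF.mJ_le hk hε hN t (qt (mQ F k ε) t (1-κ))
    have b1 := mul_le_mul_of_nonneg_left (hF.p0_bd hk t (qt (mQ F k ε) t κ)) (by linarith : 0 ≤ C)
    have b2 := mul_le_mul_of_nonneg_left (hF.p0_bd hk t (qt (mQ F k ε) t (1-κ))) (by linarith : 0 ≤ C)
    rw [Real.norm_eq_abs, Bd, abs_le]
    constructor <;> linarith
  · simp
  · refine Eventually.of_forall fun t _ => ?_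
    have t1 : Tendsto (fun κ => qt (mQ F k ε) t κ) (𝓝[>] 0) atBot := by
      rw [tendsto_atBot]
      intro x
      have hpos : 0 < mQ F k ε t x := by
        have := (h.sm t).monotone.le_of_tendsto (h.bot t) (x-1)
        exact this.trans_lt (h.sm t (by linarith))
      have : Ioo (0:ℝ) (mQ F k ε t x) ∈ 𝓝[>] (0:ℝ) := Ioo_mem_nhdsGT hpos
      filter_upwards [ev, this] with κ hκ h2
      exact ((h.qt_lt t x ⟨hκ.1, by linarith⟩).2 h2.2).le
    have t2 : Tendsto (fun κ => qt (mQ F k ε) t (1-κ)) (𝓝[>] 0) atTop := by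
      rw [tendsto_atTop]
      intro x
      have hpos : 0 < 1 - mQ F k ε t x := by
        have := (h.sm t).monotone.ge_of_tendsto (h.top t) (x+1)
        have := h.sm t (show x < x + 1 by linarith)
        linarith
      have : Ioo (0:ℝ) (1 - mQ F k ε t x) ∈ 𝓝[>] (0:ℝ) := Ioo_mem_nhdsGT hpos
      filter_upwards [ev, this] with κ hκ h2
      exact ((h.lt_qt t x ⟨by linarith, by linarith⟩).2 (by linarith [h2.2])).le
    have u1 := (((hF.p_tendsto hk t).2.comp t1).const_mul C)
    have u2 := (((hF.p_tendsto hk t).1.comp t2).const_mul C)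
    rw [mul_zero] at u1 u2
    have v1 := squeeze_zero (fun κ => (hF.mJ_le hk hε hN t (qt (mQ F k ε) t κ)).1)
      (fun κ => (hF.mJ_le hk hε hN t (qt (mQ F k ε) t κ)).2) u1
    have v2 := squeeze_zero (fun κ => (hF.mJ_le hk hε hN t (qt (mQ F k ε) t (1-κ))).1)
      (fun κ => (hF.mJ_le hk hε hN t (qt (mQ F k ε) t (1-κ))).2) u2
    have := (v1.add v2).const_mul (1/2)
    rw [add_zero, mul_zero] at this
    exact this

lemma mQ_close (hF : CdfFlow F) (hk : Mol k ε) (hε : ε < 1) (t x : ℝ) :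
    mQ F k ε t x ∈ Icc (0:ℝ) 1 ∧ |mQ F k ε t x - cv (F t) k x| ≤ ε := by
  have h1 := hF.q_mem hk t x
  have h2 := Lc_mem x
  have := hk.pos
  have e : mQ F k ε t x - cv (F t) k x = ε * (Lc x - cv (F t) k x) := by rw [mQ]; ring
  constructor
  · rw [mQ]; constructor
    · have := mul_nonneg (by linarith : 0 ≤ 1 - ε) h1.1
      have := mul_nonneg hk.pos.le h2.1
      linarith
    · have := mul_le_mul_of_nonneg_left h1.2 (by linarith : 0 ≤ 1 - ε)
      have := mul_le_mul_of_nonneg_left h2.2 hk.pos.le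
      linarith
  · rw [e, abs_mul, abs_of_pos this]
    have : |Lc x - cv (F t) k x| ≤ 1 := by rw [abs_le]; constructor <;> linarith [h1.1, h1.2]
    nlinarith

lemma uc01 {f : ℝ → ℝ} (hf : Continuous f) {η : ℝ} (hη : 0 < η) :
    ∃ δ > 0, ∀ u ∈ Icc (0:ℝ) 1, ∀ v ∈ Icc (0:ℝ) 1, |u - v| < δ → |f u - f v| ≤ η := by
  have := isCompact_Icc.uniformContinuousOn_of_continuous (hf.continuousOn (s := Icc (0:ℝ) 1))
  obtain ⟨δ, hδ, h⟩ := Metric.uniformContinuousOn_iff.1 this η hη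
  exact ⟨δ, hδ, fun u hu v hv huv => (h u hu v hv huv).le⟩

lemma e1_lim (hF : CdfFlow F) (hN : Nice A B a b C) (hW : WW A B F₀ F) (T : ℝ) (hT : 0 ≤ T)
    {k : ℕ → ℝ → ℝ} {ε κ : ℕ → ℝ} (hk : ∀ n, Mol (k n) (ε n)) (hε : ∀ n, ε n < 1) (hε0 : Tendsto ε atTop (𝓝 0))
    (hκ : ∀ n, 0 < κ n) (hκ2 : ∀ n, κ n ≤ 1/2) :
    Tendsto (fun n => ∫ t in (0:ℝ)..T, e1 A B a b F (k n) (ε n) (κ n) t) atTop (𝓝 0) := by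
  have h4 := hN.C0
  have z : (0:ℝ) = ∫ t in (0:ℝ)..T, (0:ℝ) := by simp
  suffices hz : Tendsto _ _ (𝓝 (∫ t in (0:ℝ)..T, (0:ℝ))) from by rwa [← z] at hz
  apply intervalIntegral.tendsto_integral_filter_of_dominated_convergence (fun _ => 3 * C)
  · refine Eventually.of_forall fun n => ?_
    exact ((hF.msf (hk n) (hε n) hN hW).err_cont hN.ha hN.hb (hκ n) (hκ2 n)).1.aestronglyMeasurable
  · refine Eventually.of_forall fun n => Eventually.of_forall fun t _ => ?_
    rw [Real.norm_eq_abs, abs_of_nonneg (e1_nonneg (hκ2 n) t)]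
    exact hF.e1_bound (hk n) (hε n) hN hW (hκ n) (hκ2 n) t
  · simp
  · filter_upwards [hF.ae_cont hN hW] with t ht htT
    rw [uIoc_of_le hT] at htT
    have huc := hF.uc (ht htT.1)
    rw [Metric.tendsto_atTop]
    intro η hη
    obtain ⟨δ1, hδ1, ha⟩ := uc01 hN.ha (η := η/4) (by positivity)
    obtain ⟨δ2, hδ2, hb⟩ := uc01 hN.hb (η := η/4) (by positivity)
    set δ := min δ1 δ2 with hδ
    have hδp : 0 < δ := lt_min hδ1 hδ2
    obtain ⟨r, hr, hur⟩ := Metric.uniformContinuous_iff.1 huc (δ/2) (by positivity)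
    have hmin : 0 < min (r/4) (min (δ/2) (η/(4*C))) := by positivity
    obtain ⟨N, hN'⟩ := Metric.tendsto_atTop.1 hε0 _ hmin
    refine ⟨N, fun n hn => ?_⟩
    have hp := (hk n).pos
    have h1 := hN' n hn
    rw [Real.dist_eq, sub_zero, abs_of_pos hp] at h1
    have q1 : ε n < r/4 := h1.trans_le (min_le_left _ _)
    have q2 : ε n < δ/2 := h1.trans_le ((min_le_right _ _).trans (min_le_left _ _))
    have q3 : ε n < η/(4*C) := h1.trans_le ((min_le_right _ _).trans (min_le_right _ _))
    have key := hF.e1_small (hk n) (hε n) hN hW (hκ n) (hκ2 n) t (ω := η/4) (by positivity) (by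
      intro x v hv
      have c1 := hF.mQ_close (hk n) (hε n) t x
      have c2 := cv_bounds (hk n) (hF.mono t) (hF.abs_le_one t) x
      have c3 : |F t (x + ε n) - F t (x - ε n)| < δ/2 := by
        apply hur
        rw [Real.dist_eq, abs_of_nonneg] <;> linarith
      have hv01 : v ∈ Icc (0:ℝ) 1 := ⟨(hF.nonneg _ _).trans hv.1, hv.2.trans (hF.le_one _ _)⟩
      have c4 : |v - mQ F (k n) (ε n) t x| < δ := by
        have := abs_le.1 c1.2
        have := abs_lt.1 c3
        rw [abs_lt]; constructor <;> linarith [hv.1, hv.2, c2.1, c2.2]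
      exact ⟨ha v hv01 _ c1.1 (c4.trans_le (min_le_left _ _)), hb v hv01 _ c1.1 (c4.trans_le (min_le_right _ _))⟩)
    rw [Real.dist_eq, sub_zero, abs_of_nonneg (e1_nonneg (hκ2 n) t)]
    have : C * ε n < η/4 := by
      rw [lt_div_iff₀ (by positivity)] at q3
      linarith
    linarith

lemma uniq_le (hF : CdfFlow F) (hG : CdfFlow G) (hN : Nice A B a b C) (hW : WW A B F₀ F) (hW' : WW A B F₀ G)
    {T : ℝ} (hT : 0 ≤ T) (x : ℝ) : G T x ≤ F T x := by
  by_contra! hlt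
  have h4 := hN.C0
  obtain ⟨w, hw1, hw2⟩ := exists_between hlt
  -- a point to the right where `F` is still below `w`
  obtain ⟨x', hx', hFx'⟩ : ∃ x' > x, F T x' < w := by
    have h1 := (hF.rc T x).mono_left (nhdsWithin_mono x Ioi_subset_Ici_self)
    have h2 : ∀ᶠ y in 𝓝[>] x, F T y < w := h1.eventually (gt_mem_nhds hw1)
    obtain ⟨y, hy, hy'⟩ := (h2.and self_mem_nhdsWithin).exists
    exact ⟨y, hy', hy⟩
  obtain ⟨v, hv1, hv2⟩ := exists_between hw2
  obtain ⟨v', hv1', hv2'⟩ := exists_between hv2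
  have hF0 := hF.nonneg T x'
  have hG1 := hG.le_one T x
  have hw0 : 0 < w := by linarith
  -- choose κ0
  obtain ⟨κ0, hκ0, hκ1⟩ : ∃ κ0 : ℝ, 0 < κ0 ∧ κ0 ≤ min v (1 - v') ∧ κ0 ≤ 1/2 :=
    ⟨min (min v (1 - v')) (1/2), by have : 0 < v := by linarith
                                    have : 0 < 1 - v' := by linarith
                                    positivity, min_le_left _ _, min_le_right _ _⟩
  have hκv : κ0 ≤ v := hκ1.1.trans (min_le_left _ _)
  have hκv' : v' ≤ 1 - κ0 := by linarith [hκ1.1.trans (min_le_right _ _)]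
  set ε : ℕ → ℝ := fun n => 1 / ((n:ℝ) + 2) with hεd
  have hεp : ∀ n, 0 < ε n := fun n => by positivity
  have hε1 : ∀ n, ε n < 1 := fun n => by
    rw [hεd]; simp only; rw [div_lt_one (by positivity)]; linarith [(Nat.cast_nonneg n : (0:ℝ) ≤ n)]
  have hεl : Tendsto ε atTop (𝓝 0) := by
    have := (tendsto_one_div_add_atTop_nhds_zero_nat (𝕜 := ℝ)).comp (tendsto_add_atTop_nat 1)
    refine this.congr fun n => ?_
    simp [hεd]; ring
  choose k hk using fun n => exists_mol (hεp n)
  have hκex : ∀ n, ∃ κ : ℝ, 0 < κ ∧ κ ≤ κ0 ∧ (∫ t in (0:ℝ)..T, Bd A F (k n) (ε n) κ t) < ε n ∧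
      (∫ t in (0:ℝ)..T, Bd A G (k n) (ε n) κ t) < ε n := by
    intro n
    have e1 := (hF.Bd_lim (hk n) (hε1 n) hN hW T).eventually (gt_mem_nhds (hεp n))
    have e2 := (hG.Bd_lim (hk n) (hε1 n) hN hW' T).eventually (gt_mem_nhds (hεp n))
    have e3 : Ioo (0:ℝ) κ0 ∈ 𝓝[>] (0:ℝ) := Ioo_mem_nhdsGT hκ0
    obtain ⟨κ, h1, h2, h3⟩ := (e1.and (e2.and e3)).exists
    exact ⟨κ, h3.1, h3.2.le, h1, h2⟩
  choose κ hκp hκle hκF hκG using hκex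
  have hκ2 : ∀ n, κ n ≤ 1/2 := fun n => (hκle n).trans hκ1.2
  have lim : Tendsto (fun n => (∫ t in (0:ℝ)..T, e1 A B a b F (k n) (ε n) (κ n) t) +
      (∫ t in (0:ℝ)..T, e1 A B a b G (k n) (ε n) (κ n) t) + 2 * ε n) atTop (𝓝 0) := by
    have := ((hF.e1_lim hN hW T hT hk hε1 hεl hκp hκ2).add (hG.e1_lim hN hW' T hT hk hε1 hεl hκp hκ2)).add
      (hεl.const_mul 2)
    simpa using this
  have hpos : 0 < (v' - v) * cc0 ((x' - x)/2) := mul_pos (by linarith) (cc0_pos (by linarith))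
  have ev1 := lim.eventually (gt_mem_nhds hpos)
  set δ := min ((x' - x)/4) (min (w - F T x') (G T x - v')) with hδ
  have hδp : 0 < δ := lt_min (by linarith) (lt_min (by linarith) (by linarith))
  -- keep some room: eventually ε n is tiny
  have ev2 := hεl.eventually (gt_mem_nhds hδp)
  obtain ⟨n, hn1, hn2⟩ := (ev1.and ev2).exists
  have d1 : ε n < (x' - x)/4 := hn2.trans_le (min_le_left _ _)
  have d2 : ε n < w - F T x' := hn2.trans_le ((min_le_right _ _).trans (min_le_left _ _))
  have d3 : ε n < G T x - v' := hn2.trans_le ((min_le_right _ _).trans (min_le_right _ _))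
  have sF := hF.msf (hk n) (hε1 n) hN hW
  have sG := hG.msf (hk n) (hε1 n) hN hW'
  have con := sF.contraction sG hN.ha hN.hb (hκp n) (hκ2 n) (T := T) (by
    intro y
    have h1 := hF.moll_eq (hk n) hN.cA hN.cB hW le_rfl y
    have h2 := hG.moll_eq (hk n) hN.cA hN.cB hW' le_rfl y
    rw [intervalIntegral.integral_same] at h1 h2
    rw [mQ, mQ, h1, h2]) hT
  simp only [err_eq] at con
  have cF := sF.err_cont hN.ha hN.hb (hκp n) (hκ2 n)
  have cG := sG.err_cont hN.ha hN.hb (hκp n) (hκ2 n)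
  have iF1 : IntervalIntegrable (e1 A B a b F (k n) (ε n) (κ n)) volume 0 T := cF.1.intervalIntegrable 0 T
  have iF2 : IntervalIntegrable (Bd A F (k n) (ε n) (κ n)) volume 0 T := cF.2.intervalIntegrable 0 T
  have iG1 : IntervalIntegrable (e1 A B a b G (k n) (ε n) (κ n)) volume 0 T := cG.1.intervalIntegrable 0 T
  have iG2 : IntervalIntegrable (Bd A G (k n) (ε n) (κ n)) volume 0 T := cG.2.intervalIntegrable 0 T
  rw [intervalIntegral.integral_add (iF1.add iF2) (iG1.add iG2), intervalIntegral.integral_add iF1 iF2,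
    intervalIntegral.integral_add iG1 iG2] at con
  have hF' := hκF n
  have hG' := hκG n
  have hcont : ContinuousOn (fun u => cc0 (qt (mQ F (k n) (ε n)) T u - qt (mQ G (k n) (ε n)) T u)) (Icc (κ n) (1 - κ n)) := by
    have c1 := sF.contOn1 (f := fun _ x => x) continuous_snd (hκp n) T
    have c2 := sG.contOn1 (f := fun _ x => x) continuous_snd (hκp n) T
    exact cc0_c.comp_continuousOn (c1.sub c2)
  have hκn := hκle n
  have low : (v' - v) * cc0 ((x' - x)/2) ≤ 
      ∫ u in (κ n)..(1-κ n), cc0 (qt (mQ F (k n) (ε n)) T u - qt (mQ G (k n) (ε n)) T u) := by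
    have s1 : ∫ u in v..v', cc0 (qt (mQ F (k n) (ε n)) T u - qt (mQ G (k n) (ε n)) T u) ≤ 
        ∫ u in (κ n)..(1-κ n), cc0 (qt (mQ F (k n) (ε n)) T u - qt (mQ G (k n) (ε n)) T u) := by
      apply intervalIntegral.integral_mono_interval (by linarith) (by linarith) (by linarith)
      · exact Eventually.of_forall fun u => cc0_nonneg _
      · apply ContinuousOn.intervalIntegrable
        rwa [uIcc_of_le (by linarith)]
    have s2 : ∫ u in v..v', cc0 ((x' - x)/2) ≤ ∫ u in v..v', cc0 (qt (mQ F (k n) (ε n)) T u - qt (mQ G (k n) (ε n)) T u) := by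
      apply intervalIntegral.integral_mono_on (by linarith) (by simp)
      · apply ContinuousOn.intervalIntegrable
        rw [uIcc_of_le (by linarith)]
        exact hcont.mono (Icc_subset_Icc (by linarith) (by linarith))
      · intro u hu
        have hu01 : u ∈ Ioo (0:ℝ) 1 := ⟨by linarith [hu.1], by linarith [hu.2]⟩
        apply cc0_mono (by linarith)
        have a1 : x' - ε n < qt (mQ F (k n) (ε n)) T u := by
          rw [sF.lt_qt T _ hu01]
          have c1 := abs_le.1 (hF.mQ_close (hk n) (hε1 n) T (x' - ε n)).2
          have c2 := (cv_bounds (hk n) (hF.mono T) (hF.abs_le_one T) (x' - ε n)).2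
          rw [sub_add_cancel] at c2
          linarith [hu.1]
        have a2 : qt (mQ G (k n) (ε n)) T u < x + ε n := by
          rw [sG.qt_lt T _ hu01]
          have c1 := abs_le.1 (hG.mQ_close (hk n) (hε1 n) T (x + ε n)).2
          have c2 := (cv_bounds (hk n) (hG.mono T) (hG.abs_le_one T) (x + ε n)).1
          rw [add_sub_cancel_right] at c2
          linarith [hu.2]
        linarith
    rw [intervalIntegral.integral_const, smul_eq_mul] at s2
    linarith
  linarith

theorem uniq (hF : CdfFlow F) (hG : CdfFlow G) (hN : Nice A B a b C) (hW : WW A B F₀ F) (hW' : WW A B F₀ G)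
    {T : ℝ} (hT : 0 ≤ T) (x : ℝ) : G T x = F T x :=
  le_antisymm (hF.uniq_le hG hN hW hW' hT x) (hG.uniq_le hF hN hW' hW hT x)
end CdfFlow
end


section
/-- monotone, [0,1]-valued functions -/
structure M01 (f : ℝ → ℝ) : Prop where
  mono : Monotone f
  nonneg : ∀ x, 0 ≤ f x
  le_one : ∀ x, f x ≤ 1

lemma M01.mem {f : ℝ → ℝ} (h : M01 f) (x : ℝ) : f x ∈ Icc (0:ℝ) 1 := ⟨h.nonneg x, h.le_one x⟩

/-- first and second centered differences -/
def dd1 (φ : ℝ → ℝ) (h x : ℝ) : ℝ := (φ (x+h) - φ (x-h)) / (2*h)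
def dd2 (φ : ℝ → ℝ) (h x : ℝ) : ℝ := (φ (x+h) - 2 * φ x + φ (x-h)) / h^2

lemma second_diff {g g' g'' : ℝ → ℝ} {x h M : ℝ} (hh : 0 < h) (h1 : ∀ y, HasDerivAt g (g' y) y)
    (h2 : ∀ y, HasDerivAt g' (g'' y) y) (hM : ∀ y ∈ Icc (x-h) (x+h), |g'' y| ≤ M) :
    |g (x+h) - 2 * g x + g (x-h)| ≤ 2 * M * h^2 := by
  have d1 : ∀ s ∈ Icc (0:ℝ) h, |g' (x+s) - g' (x-s)| ≤ 2 * M * h := by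
    intro s hs
    have := Convex.norm_image_sub_le_of_norm_hasDerivWithin_le (f := g') (f' := g'') (C := M) (s := Icc (x-h) (x+h))
      (x := x-s) (y := x+s) (fun y _ => (h2 y).hasDerivWithinAt) hM (convex_Icc _ _) 
      ⟨by linarith [hs.2], by linarith [hs.1]⟩ ⟨by linarith [hs.1], by linarith [hs.2]⟩
    rw [Real.norm_eq_abs, Real.norm_eq_abs, show x + s - (x - s) = 2 * s by ring, abs_of_nonneg (by linarith [hs.1] : 0 ≤ 2*s)] at this
    have hM0 : 0 ≤ M := (abs_nonneg _).trans (hM x ⟨by linarith, by linarith⟩)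
    nlinarith [hs.2]
  have hd : ∀ s, HasDerivAt (fun s => g (x+s) + g (x-s)) (g' (x+s) - g' (x-s)) s := by
    intro s
    have e1 := (h1 (x+s)).comp_const_add x s
    have e2 := (h1 (x-s)).comp_const_sub x s
    exact (e1.fun_add e2).congr_deriv (by ring)
  have := Convex.norm_image_sub_le_of_norm_hasDerivWithin_le (C := 2*M*h) (s := Icc (0:ℝ) h)
      (x := 0) (y := h) (fun y _ => (hd y).hasDerivWithinAt) d1 (convex_Icc _ _) ⟨le_rfl, hh.le⟩ ⟨hh.le, le_rfl⟩
  simp only [Real.norm_eq_abs, add_zero, sub_zero, abs_of_pos hh] at this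
  rw [show g (x+h) - 2 * g x + g (x-h) = g (x + h) + g (x - h) - (g x + g x) by ring]
  linarith

section test
variable {φ : ℝ → ℝ}

lemma test_d (hφ : ContDiff ℝ (⊤ : ℕ∞) φ) (x : ℝ) : HasDerivAt φ (deriv φ x) x :=
  (hφ.differentiable (by simp) x).hasDerivAt

lemma dd2_lim (hφ : ContDiff ℝ (⊤ : ℕ∞) φ) (x : ℝ) : Tendsto (fun h => dd2 φ h x) (𝓝[>] 0) (𝓝 (deriv (deriv φ) x)) := by
  have h1 := smooth_deriv hφ
  have h2 := smooth_deriv h1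
  rw [Metric.tendsto_nhds]
  intro η hη
  obtain ⟨δ, hδ, hc⟩ := Metric.continuous_iff.1 h2.continuous x (η/4) (by positivity)
  have : Ioo (0:ℝ) δ ∈ 𝓝[>] (0:ℝ) := Ioo_mem_nhdsGT hδ
  filter_upwards [this] with h hh
  set c := deriv (deriv φ) x
  have key := second_diff (g := fun y => φ y - c/2 * (y-x)^2) (g' := fun y => deriv φ y - c * (y-x))
    (g'' := fun y => deriv (deriv φ) y - c) (x := x) (h := h) (M := η/4) hh.1 
    (fun y => by
      have e2 := (((hasDerivAt_id y).sub_const x).fun_pow 2).const_mul (c/2)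
      refine ((test_d hφ y).fun_sub e2).congr_deriv ?_
      simp; ring)
    (fun y => by
      have e2 := ((hasDerivAt_id y).sub_const x).const_mul c
      refine ((test_d h1 y).fun_sub e2).congr_deriv ?_
      simp)
    (fun y hy => (hc y (by rw [Real.dist_eq, abs_lt]; constructor <;> linarith [hy.1, hy.2, hh.2])).le)
  have e : dd2 φ h x - c = (φ (x + h) - c / 2 * (x + h - x) ^ 2 - 2 * (φ x - c / 2 * (x - x) ^ 2) + (φ (x - h) - c / 2 * (x - h - x) ^ 2)) / h^2 := by
    have := hh.1.ne'
    rw [dd2]; field_simp; ring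
  have hp : 0 < h^2 := by have := hh.1; positivity
  rw [Real.dist_eq, e, abs_div, abs_of_pos hp, div_lt_iff₀ hp]
  nlinarith

lemma dd1_lim (hφ : ContDiff ℝ (⊤ : ℕ∞) φ) (x : ℝ) : Tendsto (fun h => dd1 φ h x) (𝓝[>] 0) (𝓝 (deriv φ x)) := by
  have hd : HasDerivAt (fun s => φ (x+s) - φ (x-s)) (2 * deriv φ x) 0 := by
    have e1 := HasDerivAt.comp_const_add (f := φ) x 0 (f' := deriv φ x) (by simpa using test_d hφ x)
    have e2 := HasDerivAt.comp_const_sub (f := φ) x 0 (f' := deriv φ x) (by simpa using test_d hφ x)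
    exact (e1.fun_sub e2).congr_deriv (by ring)
  have := hd.tendsto_slope_zero_right
  have := this.const_mul (1/2)
  rw [show 1/2 * (2 * deriv φ x) = deriv φ x by ring] at this
  refine this.congr' ?_
  filter_upwards [self_mem_nhdsWithin] with h hh
  have : h ≠ 0 := (ne_of_gt hh)
  simp [dd1]; field_simp

lemma dd_dom (hφ : ContDiff ℝ (⊤ : ℕ∞) φ) (hc : HasCompactSupport φ) : ∃ κ : ℝ → ℝ, Integrable κ ∧ 
    ∀ h x, 0 < h → h ≤ 1 → |dd1 φ h x| ≤ κ x ∧ |dd2 φ h x| ≤ κ x := by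
  have h1 := smooth_deriv hφ
  have h2 := smooth_deriv h1
  obtain ⟨M1, hM1⟩ := hc.deriv.exists_bound_of_continuous h1.continuous
  obtain ⟨M2, hM2⟩ := hc.deriv.deriv.exists_bound_of_continuous h2.continuous
  obtain ⟨R, hR⟩ := hc.isCompact.isBounded.subset_closedBall 0
  have hz : ∀ y, R < |y| → φ y = 0 := fun y hy => by
    by_contra hne
    have := hR (subset_tsupport _ (mem_support.2 hne))
    rw [Metric.mem_closedBall, Real.dist_eq, sub_zero] at this
    linarith
  have hM10 := (norm_nonneg _).trans (hM1 0)
  have hM20 := (norm_nonneg _).trans (hM2 0)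
  refine ⟨(Icc (-(R+1)) (R+1)).indicator (fun _ => M1 + 2 * M2), ?_, fun h x hh hh1 => ?_⟩
  · exact (integrable_indicator_iff measurableSet_Icc).2 (integrableOn_const (by simp))
  · by_cases hx : x ∈ Icc (-(R+1)) (R+1)
    · rw [indicator_of_mem hx]
      constructor
      · have := Convex.norm_image_sub_le_of_norm_hasDerivWithin_le (f := φ) (f' := deriv φ) (C := M1) (s := univ)
          (x := x-h) (y := x+h) (fun y _ => (test_d hφ y).hasDerivWithinAt) (fun y _ => hM1 y) convex_univ trivial trivial
        rw [Real.norm_eq_abs, Real.norm_eq_abs, show x + h - (x - h) = 2 * h by ring, abs_of_pos (by linarith : 0 < 2*h)] at this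
        rw [dd1, abs_div, abs_of_pos (by linarith : 0 < 2*h), div_le_iff₀ (by linarith)]
        nlinarith
      · have := second_diff (x := x) hh (test_d hφ) (test_d h1) (fun y _ => hM2 y)
        have hp : 0 < h^2 := by positivity
        rw [dd2, abs_div, abs_of_pos hp, div_le_iff₀ hp]
        nlinarith
    · rw [indicator_of_notMem hx]
      rw [mem_Icc, ← abs_le, not_le] at hx
      have a1 : φ (x+h) = 0 := hz _ (by
        have := abs_sub_abs_le_abs_sub x (-h); rw [sub_neg_eq_add, abs_neg, abs_of_pos hh] at this; linarith)
      have a2 : φ (x-h) = 0 := hz _ (by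
        have := abs_sub_abs_le_abs_sub x h; rw [abs_of_pos hh] at this; linarith)
      have a3 : φ x = 0 := hz _ (by linarith)
      simp [dd1, dd2, a1, a2, a3]
end test

/-- one step of the explicit scheme -/
def stp (A B : ℝ → ℝ) (C h : ℝ) (f : ℝ → ℝ) (x : ℝ) : ℝ :=
  f x + (1/(2*C)) / 2 * ((A (f (x+h)) + C*h*f (x+h)) - 2 * (A (f x) + C*h*f x) + (A (f (x-h)) + C*h*f (x-h)))
    - (1/(2*C)) * h / 2 * (B (f (x+h)) - B (f (x-h)))

def Lh (A B : ℝ → ℝ) (C h : ℝ) (f φ : ℝ → ℝ) : ℝ :=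
  ∫ x, ((1/2) * (A (f x) + C*h*f x) * dd2 φ h x + B (f x) * dd1 φ h x)

section scheme
variable {A B a b : ℝ → ℝ} {C h : ℝ} {f : ℝ → ℝ}

lemma lip_aux (hN : Nice A B a b C) {u v : ℝ} (huv : u ≤ v) : 
    0 ≤ A v - A u ∧ A v - A u ≤ C * (v - u) ∧ |B v - B u| ≤ C * (v - u) := by
  refine ⟨sub_nonneg.2 (CdfFlow.Amono hN huv), ?_, ?_⟩
  · have := Convex.norm_image_sub_le_of_norm_hasDerivWithin_le (f := A) (f' := a) (C := C) (s := univ)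
      (x := u) (y := v) (fun y _ => (hN.hA y).hasDerivWithinAt) (fun y _ => by
        rw [Real.norm_eq_abs, abs_of_nonneg (hN.a0 y)]; exact hN.aC y) convex_univ trivial trivial
    rw [Real.norm_eq_abs, Real.norm_eq_abs, abs_of_nonneg (sub_nonneg.2 huv)] at this
    exact (le_abs_self _).trans this
  · have := Convex.norm_image_sub_le_of_norm_hasDerivWithin_le (f := B) (f' := b) (C := C) (s := univ)
      (x := u) (y := v) (fun y _ => (hN.hB y).hasDerivWithinAt) (fun y _ => hN.bC y) convex_univ trivial trivial
    rwa [Real.norm_eq_abs, Real.norm_eq_abs, abs_of_nonneg (sub_nonneg.2 huv)] at this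

/-- the scheme is monotone -/
lemma stp_cmp (hN : Nice A B a b C) (hh : 0 < h) (hh1 : h ≤ 1) {p q r p' q' r' : ℝ} (h1 : p ≤ p') (h2 : q ≤ q') (h3 : r ≤ r') :
    q + (1/(2*C)) / 2 * ((A p + C*h*p) - 2 * (A q + C*h*q) + (A r + C*h*r)) - (1/(2*C)) * h / 2 * (B p - B r) ≤
    q' + (1/(2*C)) / 2 * ((A p' + C*h*p') - 2 * (A q' + C*h*q') + (A r' + C*h*r')) - (1/(2*C)) * h / 2 * (B p' - B r') := by
  have hC := hN.C0
  obtain ⟨p1, p2, p3⟩ := lip_aux hN h1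
  obtain ⟨q1, q2, q3⟩ := lip_aux hN h2
  obtain ⟨r1, r2, r3⟩ := lip_aux hN h3
  rw [abs_le] at p3 r3
  set l := 1/(2*C) with hl
  have hl0 : 0 < l := by positivity
  have hlC : l * C = 1/2 := by rw [hl]; field_simp
  have t1 : 0 ≤ l/2 * ((A p' - A p) + C * h * (p' - p)) - l * h/2 * (B p' - B p) := by
    have : 0 ≤ l/2 * (A p' - A p) := by positivity
    have : 0 ≤ (l * h/2) * (C * (p'-p) - (B p' - B p)) := mul_nonneg (by positivity) (by linarith)
    nlinarith
  have t2 : 0 ≤ l/2 * ((A r' - A r) + C * h * (r' - r)) + l * h/2 * (B r' - B r) := by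
    have : 0 ≤ l/2 * (A r' - A r) := by positivity
    have : 0 ≤ (l * h/2) * (C * (r'-r) + (B r' - B r)) := mul_nonneg (by positivity) (by linarith)
    nlinarith
  have t3 : 0 ≤ (q' - q) - l * ((A q' - A q) + C * h * (q' - q)) := by
    have e1 : l * (A q' - A q) ≤ l * (C * (q' - q)) := mul_le_mul_of_nonneg_left q2 hl0.le
    have e2 : l * C * (q'-q) = 1/2 * (q' - q) := by rw [hlC]
    have e3 : l * C * h * (q'-q) ≤ 1/2 * (q' - q) := by rw [hlC]; nlinarith
    nlinarith
  nlinarith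

lemma stp_M01 (hN : Nice A B a b C) (hh : 0 < h) (hh1 : h ≤ 1) (hf : M01 f) : M01 (stp A B C h f) where
  mono x y hxy := stp_cmp hN hh hh1 (hf.mono (by linarith)) (hf.mono hxy) (hf.mono (by linarith))
  nonneg x := by
    have := stp_cmp hN hh hh1 (hf.nonneg (x+h)) (hf.nonneg x) (hf.nonneg (x-h))
    refine le_trans (le_of_eq ?_) this
    rw [hN.A0, hN.B0]; ring
  le_one x := by
    have := stp_cmp hN hh hh1 (hf.le_one (x+h)) (hf.le_one x) (hf.le_one (x-h))
    refine this.trans (le_of_eq ?_)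
    ring

lemma M01.integrable_mul (hf : M01 f) {ψ : ℝ → ℝ} (hψ : Continuous ψ) {k : ℝ → ℝ} (hk : Integrable k) :
    Integrable (fun x => ψ (f x) * k x) := by
  obtain ⟨M, hM0, hM⟩ := bdd01 hψ
  refine Integrable.bdd_mul (c := M) hk ?_ ?_
  · exact (hψ.measurable.comp hf.mono.measurable).aestronglyMeasurable
  · exact Eventually.of_forall fun y => hM _ (hf.mem _)

lemma stp_int (hN : Nice A B a b C) (hh : 0 < h) (hf : M01 f) {φ : ℝ → ℝ} 
    (hφ : Integrable φ) :
    (∫ x, φ x * stp A B C h f x) - (∫ x, φ x * f x) = (1/(2*C)) * h^2 * Lh A B C h f φ := by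
  have hC := hN.C0
  have cA : Continuous (fun u => A u + C * h * u) := hN.cA.add (by fun_prop)
  have cB := hN.cB
  have sh : ∀ (ψ : ℝ → ℝ) (s : ℝ), ∫ x, φ x * ψ (f (x + s)) = ∫ x, ψ (f x) * φ (x - s) := by
    intro ψ s
    rw [← integral_add_right_eq_self (fun x => ψ (f x) * φ (x - s)) s]
    congr 1; ext x; simp [mul_comm]
  have φs : ∀ s, Integrable (fun x => φ (x - s)) := fun s => hφ.comp_sub_right s
  have i1 : ∀ (ψ : ℝ → ℝ) (hψ : Continuous ψ) (s : ℝ), Integrable (fun x => φ x * ψ (f (x + s))) := by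
    intro ψ hψ s
    have := (hf.integrable_mul hψ (φs s)).comp_add_right s
    refine this.congr (Eventually.of_forall fun x => ?_)
    simp [mul_comm]
  have i0 : Integrable (fun x => φ x * f x) := by simpa using i1 (fun u => u) continuous_id 0
  have iA := i1 _ cA
  have iB := i1 _ cB
  set l := 1/(2*C) with hl
  have e1 : (∫ x, φ x * stp A B C h f x) - (∫ x, φ x * f x) = 
      (l/2) * (∫ x, φ x * (A (f (x + h)) + C * h * f (x+h))) - l * (∫ x, φ x * (A (f (x + 0)) + C * h * f (x+0)))
       + (l/2) * (∫ x, φ x * (A (f (x + -h)) + C * h * f (x + -h)))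
       - (l * h / 2) * ((∫ x, φ x * B (f (x+h))) - ∫ x, φ x * B (f (x + -h))) := by
    have es : ∀ x, φ x * stp A B C h f x = φ x * f x + (((l/2) * (φ x * (A (f (x + h)) + C * h * f (x+h))) 
       - l * (φ x * (A (f (x + 0)) + C * h * f (x+0))))
       + ((l/2) * (φ x * (A (f (x + -h)) + C * h * f (x + -h))) 
       - (l * h / 2) * (φ x * B (f (x+h)) - φ x * B (f (x + -h))))) := by
      intro x; simp only [add_zero, ← sub_eq_add_neg]; rw [stp, ← hl]; ring
    simp_rw [es]
    have j1 : Integrable (fun x => (l/2) * (φ x * (A (f (x + h)) + C * h * f (x+h)))) := (iA h).const_mul _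
    have j2 : Integrable (fun x => l * (φ x * (A (f (x + 0)) + C * h * f (x+0)))) := (iA 0).const_mul _
    have j3 : Integrable (fun x => (l/2) * (φ x * (A (f (x + -h)) + C * h * f (x + -h)))) := (iA (-h)).const_mul _
    have j4 : Integrable (fun x => (l*h/2) * (φ x * B (f (x+h)) - φ x * B (f (x + -h)))) := ((iB h).sub (iB (-h))).const_mul _
    have j12 : Integrable (fun x => (l/2) * (φ x * (A (f (x + h)) + C * h * f (x+h))) - l * (φ x * (A (f (x + 0)) + C * h * f (x+0)))) := j1.sub j2
    have j34 : Integrable (fun x => (l/2) * (φ x * (A (f (x + -h)) + C * h * f (x + -h))) - (l*h/2) * (φ x * B (f (x+h)) - φ x * B (f (x + -h)))) := j3.sub j4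
    have j1234 : Integrable (fun x => ((l/2) * (φ x * (A (f (x + h)) + C * h * f (x+h))) 
       - l * (φ x * (A (f (x + 0)) + C * h * f (x+0))))
       + ((l/2) * (φ x * (A (f (x + -h)) + C * h * f (x + -h))) 
       - (l * h / 2) * (φ x * B (f (x+h)) - φ x * B (f (x + -h))))) := j12.add j34
    rw [integral_add i0 j1234, integral_add j12 j34, integral_sub j1 j2, integral_sub j3 j4, integral_const_mul,
      integral_const_mul, integral_const_mul, integral_const_mul, integral_sub (iB h) (iB (-h))]
    ring
  rw [e1]
  have hne : h ≠ 0 := hh.ne'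
  have r1 := sh (fun u => A u + C * h * u)
  have r2 := sh B
  rw [r1, r1, r1, r2, r2]
  simp only [sub_zero, sub_neg_eq_add]
  have k1 := fun s => hf.integrable_mul cA (φs s)
  have k2 := fun s => hf.integrable_mul cB (φs s)
  have eL : Lh A B C h f φ = ∫ x, (((1/(2*h^2)) * ((A (f x) + C*h*f x) * φ (x - (-h))) - (1/h^2) * ((A (f x) + C*h*f x) * φ (x - 0)))
    + ((1/(2*h^2)) * ((A (f x) + C*h*f x) * φ (x - h)) + (1/(2*h)) * (B (f x) * φ (x - (-h)) - B (f x) * φ (x - h)))) := by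
    rw [Lh]; congr 1; ext x; rw [dd1, dd2]; simp only [sub_zero, sub_neg_eq_add]; field_simp; ring
  have j1 := (k1 (-h)).const_mul (1/(2*h^2))
  have j2 := (k1 0).const_mul (1/h^2)
  have j3 := (k1 h).const_mul (1/(2*h^2))
  have j4 : Integrable (fun x => (1/(2*h)) * (B (f x) * φ (x - (-h)) - B (f x) * φ (x - h))) := ((k2 (-h)).sub (k2 h)).const_mul _
  have eL2 : Lh A B C h f φ = ((1/(2*h^2)) * (∫ x, (A (f x) + C*h*f x) * φ (x - (-h))) - (1/h^2) * (∫ x, (A (f x) + C*h*f x) * φ (x - 0)))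
    + ((1/(2*h^2)) * (∫ x, (A (f x) + C*h*f x) * φ (x - h)) + (1/(2*h)) * ((∫ x, B (f x) * φ (x - (-h))) - ∫ x, B (f x) * φ (x - h))) := by
    have j12 : Integrable (fun x => (1/(2*h^2)) * ((A (f x) + C*h*f x) * φ (x - (-h))) - (1/h^2) * ((A (f x) + C*h*f x) * φ (x - 0))) := j1.sub j2
    have j34 : Integrable (fun x => (1/(2*h^2)) * ((A (f x) + C*h*f x) * φ (x - h)) + (1/(2*h)) * (B (f x) * φ (x - (-h)) - B (f x) * φ (x - h))) := j3.add j4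
    rw [eL, integral_add j12 j34, integral_sub j1 j2, integral_add j3 j4, integral_const_mul, integral_const_mul,
      integral_const_mul, integral_const_mul, integral_sub (k2 (-h)) (k2 h)]
  rw [eL2]
  simp only [sub_zero, sub_neg_eq_add]
  field_simp
  ring
end scheme
end


section
section stepfun
variable {v : ℕ → ℝ} {K τ : ℝ}

lemma step_meas (v : ℕ → ℝ) (τ : ℝ) : Measurable (fun s : ℝ => v ⌊s/τ⌋₊) :=
  (measurable_from_nat (f := v)).comp (Nat.measurable_floor.comp (measurable_id.div_const τ))

lemma step_ii (hv : ∀ j, |v j| ≤ K) (c d : ℝ) : IntervalIntegrable (fun s : ℝ => v ⌊s/τ⌋₊) volume c d := by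
  refine (intervalIntegrable_const (c := K)).mono_fun (step_meas v τ).aestronglyMeasurable ?_
  refine Eventually.of_forall fun s => ?_
  rw [Real.norm_eq_abs]
  exact (hv _).trans (le_abs_self K)

lemma step_sum (hτ : 0 < τ) (hv : ∀ j, |v j| ≤ K) (N : ℕ) :
    ∫ s in (0:ℝ)..(N * τ), v ⌊s/τ⌋₊ = τ * ∑ j ∈ Finset.range N, v j := by
  induction N with
  | zero => simp
  | succ N ih =>
    rw [← intervalIntegral.integral_add_adjacent_intervals (step_ii hv 0 (N*τ)) (step_ii hv (N*τ) _), ih, Finset.sum_range_succ,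
      mul_add]
    congr 1
    have : ∫ s in (N * τ)..((N+1:ℕ) * τ), v ⌊s/τ⌋₊ = ∫ s in (N * τ)..((N+1:ℕ) * τ), v N := by
      apply intervalIntegral.integral_congr_ae
      have hne : ∀ᵐ s : ℝ, s ≠ (N+1:ℕ) * τ := by simp [ae_iff]
      filter_upwards [hne] with s hs hs'
      rw [uIoc_of_le (by push_cast; nlinarith)] at hs'
      have : ⌊s/τ⌋₊ = N := by
        rw [Nat.floor_eq_iff (div_nonneg (le_trans (by positivity) hs'.1.le) hτ.le)]
        constructor
        · rw [le_div_iff₀ hτ]; exact hs'.1.le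
        · rw [div_lt_iff₀ hτ]; have := lt_of_le_of_ne hs'.2 hs; push_cast at this; exact this
      rw [this]
    rw [this, intervalIntegral.integral_const, smul_eq_mul]; push_cast; ring

lemma step_err (hτ : 0 < τ) (hv : ∀ j, |v j| ≤ K) {t : ℝ} (ht : 0 ≤ t) :
    |τ * (∑ j ∈ Finset.range ⌊t/τ⌋₊, v j) - ∫ s in (0:ℝ)..t, v ⌊s/τ⌋₊| ≤ K * τ := by
  rw [← step_sum hτ hv, abs_sub_comm, intervalIntegral.integral_interval_sub_left (step_ii hv _ _) (step_ii hv _ _)]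
  have h1 : (⌊t/τ⌋₊ : ℝ) * τ ≤ t := by
    have := Nat.floor_le (div_nonneg ht hτ.le); rwa [le_div_iff₀ hτ] at this
  have h2 : t ≤ (⌊t/τ⌋₊ : ℝ) * τ + τ := by
    have := (Nat.lt_floor_add_one (t/τ)).le; rw [div_le_iff₀ hτ] at this; linarith
  have := intervalIntegral.norm_integral_le_of_norm_le_const (f := fun s => v ⌊s/τ⌋₊) (a := ⌊t/τ⌋₊ * τ) (b := t) (C := K) (fun s _ => hv _)
  rw [Real.norm_eq_abs, abs_of_nonneg (by linarith : 0 ≤ t - ⌊t/τ⌋₊ * τ)] at this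
  have hK : 0 ≤ K := (abs_nonneg _).trans (hv 0)
  refine this.trans ?_
  gcongr; linarith
end stepfun

/-- time step -/
def tst (C h : ℝ) : ℝ := (1/(2*C)) * h^2
/-- the approximate flow -/
def sch (A B : ℝ → ℝ) (C h : ℝ) (F₀ : ℝ → ℝ) (t : ℝ) : ℝ → ℝ := (stp A B C h)^[⌊t / tst C h⌋₊] F₀

section scheme
variable {A B a b : ℝ → ℝ} {C h : ℝ} {f F₀ : ℝ → ℝ}

lemma tst_pos (hN : Nice A B a b C) (hh : 0 < h) : 0 < tst C h := by
  have := hN.C0; rw [tst]; positivity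

lemma it_M01 (hN : Nice A B a b C) (hh : 0 < h) (hh1 : h ≤ 1) (hF : M01 F₀) (N : ℕ) : M01 ((stp A B C h)^[N] F₀) := by
  induction N with
  | zero => exact hF
  | succ N ih => rw [iterate_succ_apply']; exact stp_M01 hN hh hh1 ih

lemma Lh_bd (hN : Nice A B a b C) {φ : ℝ → ℝ} (hφ : ContDiff ℝ (⊤ : ℕ∞) φ) (hc : HasCompactSupport φ) :
    ∃ K, 0 ≤ K ∧ ∀ h f, 0 < h → h ≤ 1 → M01 f → |Lh A B C h f φ| ≤ K := by
  obtain ⟨κ, hκ, hb⟩ := dd_dom hφ hc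
  have hC := hN.C0
  have hκ0 : ∀ x, 0 ≤ κ x := fun x => (abs_nonneg _).trans (hb 1 x one_pos le_rfl).1
  refine ⟨∫ x, 2 * C * κ x, integral_nonneg fun x => mul_nonneg (by positivity) (hκ0 x), fun h f hh hh1 hf => ?_⟩
  rw [Lh, ← Real.norm_eq_abs]
  apply norm_integral_le_of_norm_le (hκ.const_mul _)
  refine Eventually.of_forall fun x => ?_
  obtain ⟨b1, b2⟩ := hb h x hh hh1
  obtain ⟨a1, a2, a3⟩ := CdfFlow.AB_bd hN (f x) (hf.mem x)
  have f0 := hf.nonneg x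
  have f1 := hf.le_one x
  rw [Real.norm_eq_abs]
  have e0 : 0 ≤ C * h * f x := by positivity
  have e0' : C * h * f x ≤ C := by
    have : h * f x ≤ 1 := by nlinarith
    nlinarith
  have e1 : |(1/2) * (A (f x) + C*h*f x)| ≤ C := by
    rw [abs_of_nonneg (by positivity)]
    linarith
  calc |(1/2) * (A (f x) + C*h*f x) * dd2 φ h x + B (f x) * dd1 φ h x| 
      ≤ |(1/2) * (A (f x) + C*h*f x)| * |dd2 φ h x| + |B (f x)| * |dd1 φ h x| := by
        rw [← abs_mul, ← abs_mul]; exact abs_add_le _ _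
    _ ≤ C * κ x + C * κ x := by
        gcongr
    _ = 2 * C * κ x := by ring

lemma it_sum (hN : Nice A B a b C) (hh : 0 < h) (hh1 : h ≤ 1) (hF : M01 F₀) {φ : ℝ → ℝ} (hφ : Integrable φ) (N : ℕ) :
    (∫ x, φ x * (stp A B C h)^[N] F₀ x) - (∫ x, φ x * F₀ x) = 
      tst C h * ∑ j ∈ Finset.range N, Lh A B C h ((stp A B C h)^[j] F₀) φ := by
  induction N with
  | zero => simp
  | succ N ih => 
    have := stp_int hN hh (it_M01 hN hh hh1 hF N) hφ
    rw [iterate_succ_apply', Finset.sum_range_succ, mul_add, ← ih, tst]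
    linarith

lemma sch_M01 (hN : Nice A B a b C) (hh : 0 < h) (hh1 : h ≤ 1) (hF : M01 F₀) (t : ℝ) : M01 (sch A B C h F₀ t) :=
  it_M01 hN hh hh1 hF _

lemma sch_est (hN : Nice A B a b C) (hF : M01 F₀) {φ : ℝ → ℝ} (hφ : ContDiff ℝ (⊤ : ℕ∞) φ) (hc : HasCompactSupport φ) :
    ∃ K, 0 ≤ K ∧ (∀ h f, 0 < h → h ≤ 1 → M01 f → |Lh A B C h f φ| ≤ K) ∧ ∀ h, 0 < h → h ≤ 1 → 
      (∀ t, 0 ≤ t → |(∫ x, φ x * sch A B C h F₀ t x) - (∫ x, φ x * F₀ x) - 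
        ∫ s in (0:ℝ)..t, Lh A B C h (sch A B C h F₀ s) φ| ≤ K * tst C h) ∧
      (∀ s t, |(∫ x, φ x * sch A B C h F₀ t x) - (∫ x, φ x * sch A B C h F₀ s x)| ≤ K * (|t - s| + tst C h)) := by
  obtain ⟨K, hK, hb⟩ := Lh_bd hN hφ hc
  have hi : Integrable φ := cs_int hφ.continuous hc
  refine ⟨K, hK, hb, fun h hh hh1 => ?_⟩
  have hτ := tst_pos hN hh
  set τ := tst C h with hτd
  set v : ℕ → ℝ := fun j => Lh A B C h ((stp A B C h)^[j] F₀) φ with hv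
  have vb : ∀ j, |v j| ≤ K := fun j => hb h _ hh hh1 (it_M01 hN hh hh1 hF j)
  have sm : ∀ N, (∫ x, φ x * (stp A B C h)^[N] F₀ x) - (∫ x, φ x * F₀ x) = τ * ∑ j ∈ Finset.range N, v j :=
    fun N => it_sum hN hh hh1 hF hi N
  constructor
  · intro t ht
    have := step_err hτ vb ht
    rw [← sm] at this
    exact this
  · have main : ∀ s t, s ≤ t → |(∫ x, φ x * sch A B C h F₀ t x) - (∫ x, φ x * sch A B C h F₀ s x)| ≤ K * (|t - s| + τ) := by
      intro s t hst
      set n := ⌊s/τ⌋₊ with hn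
      set m := ⌊t/τ⌋₊ with hm
      have hnm : n ≤ m := Nat.floor_mono (by gcongr)
      have e : (∫ x, φ x * sch A B C h F₀ t x) - (∫ x, φ x * sch A B C h F₀ s x) = τ * ∑ j ∈ Finset.Ico n m, v j := by
        rw [Finset.sum_Ico_eq_sub _ hnm, mul_sub, ← sm, ← sm]
        simp only [sch, ← hτd, ← hn, ← hm]; ring
      rw [e, abs_mul, abs_of_pos hτ, abs_of_nonneg (sub_nonneg.2 hst)]
      have e2 : |∑ j ∈ Finset.Ico n m, v j| ≤ (m - n : ℝ) * K := by
        refine (Finset.abs_sum_le_sum_abs _ _).trans ?_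
        refine (Finset.sum_le_card_nsmul _ _ K (fun j _ => vb j)).trans ?_
        rw [nsmul_eq_mul, Nat.card_Ico, Nat.cast_sub hnm]
      have e3 : ((m:ℝ) - n) * τ ≤ t - s + τ := by
        rcases le_or_gt 0 t with ht | ht
        · have h1 : (m:ℝ) * τ ≤ t := by
            have := Nat.floor_le (div_nonneg ht hτ.le); rwa [le_div_iff₀ hτ] at this
          have h2 : s ≤ (n : ℝ) * τ + τ := by
            have := (Nat.lt_floor_add_one (s/τ)).le; rw [div_le_iff₀ hτ] at this; linarith
          linarith
        · have : m = 0 := Nat.floor_of_nonpos (div_nonpos_of_nonpos_of_nonneg ht.le hτ.le)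
          have h0 : n = 0 := by omega
          rw [this, h0]; simp; linarith
      calc τ * |∑ j ∈ Finset.Ico n m, v j| ≤ τ * ((m - n : ℝ) * K) := by gcongr
        _ = K * (((m:ℝ) - n) * τ) := by ring
        _ ≤ K * (t - s + τ) := by gcongr
    intro s t
    rcases le_total s t with h | h
    · exact main s t h
    · rw [abs_sub_comm, abs_sub_comm t]; exact main t s h
end scheme
end


section
lemma helly0 {f : ℕ → ℝ → ℝ} (hf : ∀ k, M01 (f k))
    (H : ∀ x y, x < y → ∃ I : ℝ, ∃ u : ℕ → ℝ, Tendsto u atTop (𝓝 I) ∧ ∀ k, f k x ≤ u k ∧ u k ≤ f k y) :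
    ∃ F : ℝ → ℝ, M01 F ∧ (∀ x, ContinuousWithinAt F (Ici x) x) ∧ 
      ∀ x, ContinuousAt F x → Tendsto (fun k => f k x) atTop (𝓝 (F x)) := by
  set S : ℝ → ℝ := fun x => limsup (fun k => f k x) atTop with hS
  have bu : ∀ x, IsBoundedUnder (· ≤ ·) atTop (fun k => f k x) := fun x => 
    isBoundedUnder_of ⟨1, fun k => (hf k).le_one x⟩
  have bl : ∀ x, IsBoundedUnder (· ≥ ·) atTop (fun k => f k x) := fun x => 
    isBoundedUnder_of ⟨0, fun k => (hf k).nonneg x⟩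
  have hSm : Monotone S := by
    intro x y hxy
    exact limsup_le_limsup (Eventually.of_forall fun k => (hf k).mono hxy) (bl x).isCoboundedUnder_le (bu y)
  have hS0 : ∀ x, 0 ≤ S x := fun x => 
    le_limsup_of_frequently_le (Frequently.of_forall fun k => (hf k).nonneg x) (bu x)
  have hS1 : ∀ x, S x ≤ 1 := fun x => 
    limsup_le_of_le (bl x).isCoboundedUnder_le (Eventually.of_forall fun k => (hf k).le_one x) 
  have hr : ∀ x, rightLim S x = hSm.stieltjesFunction x := fun x => rfl
  refine ⟨hSm.stieltjesFunction, ⟨hSm.stieltjesFunction.mono, fun x => (hS0 x).trans (hSm.le_rightLim le_rfl), 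
    fun x => (hSm.rightLim_le (lt_add_one x)).trans (hS1 _)⟩, fun x => hSm.stieltjesFunction.right_continuous x, ?_⟩
  intro x hx
  rw [tendsto_order]
  constructor
  · intro c hc
    have := (hx.eventually (lt_mem_nhds hc))
    obtain ⟨d, hd, hd'⟩ := Metric.eventually_nhds_iff.1 this
    have h1 : c < hSm.stieltjesFunction (x - d/2) := hd' (by rw [Real.dist_eq]; rw [abs_lt]; constructor <;> linarith)
    have h2 := hSm.rightLim_le (show x - d/2 < x - d/4 by linarith)
    rw [hr] at h2
    obtain ⟨I, u, hu, hu'⟩ := H (x-d/4) x (by linarith)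
    have h3 : S (x - d/4) ≤ I := by
      rw [← hu.limsup_eq]
      exact limsup_le_limsup (Eventually.of_forall fun k => (hu' k).1) (bl _).isCoboundedUnder_le hu.isBoundedUnder_le
    filter_upwards [hu.eventually (lt_mem_nhds (show c < I by linarith))] with k hk
    exact hk.trans_le (hu' k).2
  · intro c hc
    exact eventually_lt_of_limsup_lt (lt_of_le_of_lt (hSm.le_rightLim le_rfl) hc) (bu x)

/-- pointwise convergence at continuity points gives convergence of integrals -/
lemma conv_int {f : ℕ → ℝ → ℝ} (hf : ∀ k, M01 (f k)) {F : ℝ → ℝ} (hF : M01 F)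
    (hc : ∀ x, ContinuousAt F x → Tendsto (fun k => f k x) atTop (𝓝 (F x))) {φ : ℝ → ℝ} (hφ : Integrable φ) :
    Tendsto (fun k => ∫ x, φ x * f k x) atTop (𝓝 (∫ x, φ x * F x)) := by
  refine tendsto_integral_of_dominated_convergence (fun x => |φ x|) 
    (fun k => hφ.aestronglyMeasurable.mul (hf k).mono.measurable.aestronglyMeasurable) hφ.abs (fun k => Eventually.of_forall fun x => ?_) ?_
  · rw [Real.norm_eq_abs, abs_mul, abs_of_nonneg ((hf k).nonneg x)]
    exact mul_le_of_le_one_right (abs_nonneg _) ((hf k).le_one x)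
  · filter_upwards [mono_ae_cont hF.mono] with x hx
    exact (hc x hx).const_mul _

/-- Helly selection at countably many rational times -/
lemma helly1 {f : ℕ → ℝ → ℝ → ℝ} (hf : ∀ k t, M01 (f k t)) :
    ∃ σ : ℕ → ℕ, StrictMono σ ∧ ∀ t q : ℚ, ∃ l, Tendsto (fun k => f (σ k) t q) atTop (𝓝 l) := by
  have hcpt : IsCompact (Set.pi univ (fun _ : ℚ × ℚ => Icc (0:ℝ) 1)) := isCompact_univ_pi fun _ => isCompact_Icc
  obtain ⟨g, -, σ, hσ, hg⟩ := hcpt.tendsto_subseq (x := fun k (p : ℚ × ℚ) => f k p.1 p.2) (fun k p _ => (hf k _).mem _)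
  refine ⟨σ, hσ, fun t q => ⟨g (t, q), ?_⟩⟩
  exact (tendsto_pi_nhds.1 hg) (t, q)

/-- compactness -/
lemma helly2 {f : ℕ → ℝ → ℝ → ℝ} (hf : ∀ k t, M01 (f k t)) {τ : ℕ → ℝ} (hτ : Tendsto τ atTop (𝓝 0))
    (hL : ∀ φ : ℝ → ℝ, ContDiff ℝ (⊤ : ℕ∞) φ → HasCompactSupport φ → ∃ K, 0 ≤ K ∧ 
      ∀ k s t, |(∫ x, φ x * f k t x) - (∫ x, φ x * f k s x)| ≤ K * (|t - s| + τ k)) :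
    ∃ σ : ℕ → ℕ, StrictMono σ ∧ ∃ F : ℝ → ℝ → ℝ, (∀ t, M01 (F t)) ∧ (∀ t x, ContinuousWithinAt (F t) (Ici x) x) ∧
      ∀ t x, ContinuousAt (F t) x → Tendsto (fun k => f (σ k) t x) atTop (𝓝 (F t x)) := by
  obtain ⟨σ, hσ, hq⟩ := helly1 hf
  refine ⟨σ, hσ, ?_⟩
  have hτ' := hτ.comp hσ.tendsto_atTop
  have rat : ∀ t : ℚ, ∃ F : ℝ → ℝ, M01 F ∧ (∀ x, ContinuousWithinAt F (Ici x) x) ∧ 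
      ∀ x, ContinuousAt F x → Tendsto (fun k => f (σ k) t x) atTop (𝓝 (F x)) := by
    intro t
    refine helly0 (fun k => hf (σ k) t) fun x y hxy => ?_
    obtain ⟨q, h1, h2⟩ := exists_rat_btwn hxy
    obtain ⟨l, hl⟩ := hq t q
    exact ⟨l, _, hl, fun k => ⟨(hf _ _).mono h1.le, (hf _ _).mono h2.le⟩⟩
  have cau : ∀ φ : ℝ → ℝ, ContDiff ℝ (⊤ : ℕ∞) φ → HasCompactSupport φ → ∀ t : ℝ, 
      ∃ I, Tendsto (fun k => ∫ x, φ x * f (σ k) t x) atTop (𝓝 I) := by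
    intro φ hφ hc t
    obtain ⟨K, hK, hK'⟩ := hL φ hφ hc
    apply cauchySeq_tendsto_of_complete
    rw [Metric.cauchySeq_iff]
    intro e he
    have hpos : 0 < e / (8*(K+1)) := by positivity
    obtain ⟨q, hq1, hq2⟩ := exists_rat_btwn (show t < t + e / (8*(K+1)) by linarith)
    obtain ⟨G, hG, -, hG'⟩ := rat q
    have c1 := (conv_int (fun k => hf (σ k) q) hG hG' (hφ.continuous.integrable_of_hasCompactSupport hc)).cauchySeq
    obtain ⟨N, hN⟩ := Metric.cauchySeq_iff.1 c1 (e/4) (by positivity)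
    obtain ⟨N', hN'⟩ := eventually_atTop.1 (hτ'.eventually (gt_mem_nhds (show 0 < e / (8*(K+1)) by positivity)))
    refine ⟨max N N', fun m hm n hn => ?_⟩
    have d1 := hN m (le_trans (le_max_left _ _) hm) n (le_trans (le_max_left _ _) hn)
    have k1 : ∀ m, max N N' ≤ m → |(∫ x, φ x * f (σ m) t x) - (∫ x, φ x * f (σ m) q x)| < e/4 + e/16 := by
      intro m hm
      have := hK' (σ m) q t
      have h2 := hN' m (le_trans (le_max_right _ _) hm)
      have h3 : |t - q| ≤ e / (8*(K+1)) := by rw [abs_le]; constructor <;> linarith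
      simp only [Function.comp] at h2
      have : K * (|t - q| + τ (σ m)) ≤ K * (e / (8*(K+1)) + e / (8*(K+1))) := by gcongr
      have h4 : K * (e / (8*(K+1)) + e / (8*(K+1))) ≤ e/4 := by
        have : K * (e / (8*(K+1)) + e / (8*(K+1))) = (K/(K+1)) * (e/4) := by field_simp; ring
        rw [this]
        have : K/(K+1) ≤ 1 := by rw [div_le_one (by positivity)]; linarith
        nlinarith
      linarith
    have a1 := k1 m hm
    have a2 := k1 n hn
    rw [Real.dist_eq] at d1 ⊢
    rw [abs_lt] at *
    constructor <;> linarith [a1.1, a1.2, a2.1, a2.2, d1.1, d1.2]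
  have all : ∀ t : ℝ, ∃ F : ℝ → ℝ, M01 F ∧ (∀ x, ContinuousWithinAt F (Ici x) x) ∧ 
      ∀ x, ContinuousAt F x → Tendsto (fun k => f (σ k) t x) atTop (𝓝 (F x)) := by
    intro t
    refine helly0 (fun k => hf (σ k) t) fun x y hxy => ?_
    obtain ⟨k, hk⟩ := exists_mol (show 0 < (y-x)/2 by linarith)
    obtain ⟨I, hI⟩ := cau (fun z => k ((x+y)/2 - z)) (hk.smooth.comp (by fun_prop)) 
      (hk.cs.comp_homeomorph (Homeomorph.subLeft ((x+y)/2))) t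
    refine ⟨I, _, hI, fun j => ?_⟩
    have := cv_bounds hk (hf (σ j) t).mono (M := 1) (fun x => by 
      rw [abs_of_nonneg ((hf _ _).nonneg x)]; exact (hf _ _).le_one x) ((x+y)/2)
    rw [cv_swap] at this
    simp_rw [mul_comm (k _)]
    rw [show (x+y)/2 - (y-x)/2 = x by ring, show (x+y)/2 + (y-x)/2 = y by ring] at this
    exact this
  choose F h1 h2 h3 using all
  exact ⟨F, h1, h2, h3⟩
end


section
section
variable {A B a b : ℝ → ℝ} {C h : ℝ} {F₀ : ℝ → ℝ}

lemma Lh_lim (hN : Nice A B a b C) {f : ℕ → ℝ → ℝ} (hf : ∀ k, M01 (f k)) {F : ℝ → ℝ} (hF : M01 F)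
    (hc : ∀ x, ContinuousAt F x → Tendsto (fun k => f k x) atTop (𝓝 (F x))) {h : ℕ → ℝ} (h0 : ∀ k, 0 < h k) (h1 : ∀ k, h k ≤ 1)
    (hl : Tendsto h atTop (𝓝 0)) {φ : ℝ → ℝ} (hφ : ContDiff ℝ (⊤ : ℕ∞) φ) (hcs : HasCompactSupport φ) :
    Tendsto (fun k => Lh A B C (h k) (f k) φ) atTop (𝓝 (Lop A B F φ)) := by
  obtain ⟨κ, hκ, hκ'⟩ := dd_dom hφ hcs
  have hC := hN.C0
  have hl' : Tendsto h atTop (𝓝[>] 0) := tendsto_nhdsWithin_iff.2 ⟨hl, Eventually.of_forall h0⟩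
  unfold Lh Lop
  have md1 : ∀ k, Continuous (fun x => dd1 φ (h k) x) := fun k => by
    unfold dd1; have := hφ.continuous; fun_prop
  have md2 : ∀ k, Continuous (fun x => dd2 φ (h k) x) := fun k => by
    unfold dd2; have := hφ.continuous; fun_prop
  refine tendsto_integral_of_dominated_convergence (fun x => (2*C) * κ x) (fun k => ?_) (hκ.const_mul _) 
    (fun k => Eventually.of_forall fun x => ?_) ?_
  · have m := (hf k).mono.measurable
    have mA := hN.cA.measurable.comp m
    have mB := hN.cB.measurable.comp m
    exact (((mA.add (m.const_mul _)).const_mul _).mul (md2 k).measurable |>.add (mB.mul (md1 k).measurable)).aestronglyMeasurable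
  · obtain ⟨b1, b2, b3⟩ := CdfFlow.AB_bd hN (f k x) ((hf k).mem x)
    obtain ⟨c1, c2⟩ := hκ' (h k) x (h0 k) (h1 k)
    have m0 := (hf k).nonneg x
    have m1 := (hf k).le_one x
    have hk0 := h0 k
    have hk1 := h1 k
    have e1 : 0 ≤ C * h k * f k x := by positivity
    have e2 : C * h k * f k x ≤ C * 1 * 1 := by gcongr
    rw [Real.norm_eq_abs]
    refine (abs_add_le _ _).trans ?_
    rw [abs_mul (1/2 * _), abs_mul (B _)]
    have : |1/2 * (A (f k x) + C * h k * f k x)| ≤ C := by rw [abs_of_nonneg (by positivity)]; linarith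
    have i1 := mul_le_mul this c2 (abs_nonneg _) (by positivity)
    have i2 := mul_le_mul b3 c1 (abs_nonneg _) (by positivity)
    linarith
  · filter_upwards [mono_ae_cont hF.mono] with x hx
    have hx' := hc x hx
    have t1 := (hN.cA.tendsto (F x)).comp hx'
    have t2 := (hN.cB.tendsto (F x)).comp hx'
    have t3 := (dd2_lim hφ x).comp hl'
    have t4 := (dd1_lim hφ x).comp hl'
    have t5 : Tendsto (fun k => C * h k * f k x) atTop (𝓝 (C * 0 * F x)) := (hl.const_mul C).mul hx'
    have := (((t1.add t5).const_mul (1/2)).mul t3).add (t2.mul t4)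
    simpa using this

lemma sch_lim (hN : Nice A B a b C) (hF0 : M01 F₀) : 
    ∃ F : ℝ → ℝ → ℝ, (∀ t, M01 (F t)) ∧ (∀ t x, ContinuousWithinAt (F t) (Ici x) x) ∧ WW A B F₀ F ∧
      ∀ φ : ℝ → ℝ, ContDiff ℝ (⊤ : ℕ∞) φ → HasCompactSupport φ → ∃ K, 0 ≤ K ∧ 
      ∀ s t, |(∫ x, φ x * F t x) - (∫ x, φ x * F s x)| ≤ K * |t - s| := by
  set H : ℕ → ℝ := fun k => 1/((k:ℝ)+1) with hH
  have H0 : ∀ k, 0 < H k := fun k => by positivity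
  have H1 : ∀ k, H k ≤ 1 := fun k => by
    rw [hH]; simp only; rw [div_le_one (by positivity)]; have := Nat.cast_nonneg (α := ℝ) k; linarith
  have Hl : Tendsto H atTop (𝓝 0) := tendsto_one_div_add_atTop_nhds_zero_nat
  have Tl : Tendsto (fun k => tst C (H k)) atTop (𝓝 0) := by
    have := (Hl.pow 2).const_mul (1/(2*C))
    simpa [tst] using this
  have hf : ∀ k t, M01 (sch A B C (H k) F₀ t) := fun k t => sch_M01 hN (H0 k) (H1 k) hF0 t
  obtain ⟨σ, hσ, F, F1, F2, F3⟩ := helly2 (f := fun k => sch A B C (H k) F₀) hf Tl (fun φ hφ hc => by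
    obtain ⟨K, hK, -, h2⟩ := sch_est hN hF0 hφ hc
    exact ⟨K, hK, fun k s t => (h2 (H k) (H0 k) (H1 k)).2 s t⟩)
  have Hl' := Hl.comp hσ.tendsto_atTop
  have Tl' := Tl.comp hσ.tendsto_atTop
  refine ⟨F, F1, F2, ?_, ?_⟩
  · intro φ hφ hc t ht
    obtain ⟨K, hK, h1, h2⟩ := sch_est hN hF0 hφ hc
    have hφi := hφ.continuous.integrable_of_hasCompactSupport hc (μ := volume)
    have c1 := conv_int (fun k => hf (σ k) t) (F1 t) (F3 t) hφi
    have c2 : Tendsto (fun k => ∫ s in (0:ℝ)..t, Lh A B C (H (σ k)) (sch A B C (H (σ k)) F₀ s) φ) atTop 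
        (𝓝 (∫ s in (0:ℝ)..t, Lop A B (F s) φ)) := by
      refine intervalIntegral.tendsto_integral_filter_of_dominated_convergence (fun _ => K) ?_ ?_ intervalIntegrable_const ?_
      · refine Eventually.of_forall fun k => ?_
        exact (step_meas (fun j => Lh A B C (H (σ k)) ((stp A B C (H (σ k)))^[j] F₀) φ) (tst C (H (σ k)))).aestronglyMeasurable
      · refine Eventually.of_forall fun k => Eventually.of_forall fun s _ => ?_
        exact h1 _ _ (H0 _) (H1 _) (hf _ _)
      · refine Eventually.of_forall fun s _ => ?_
        exact Lh_lim hN (fun k => hf (σ k) s) (F1 s) (F3 s) (fun k => H0 _) (fun k => H1 _) Hl' hφ hc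
    have c3 := (c1.sub_const (∫ x, φ x * F₀ x)).sub c2
    have c4 : Tendsto (fun k => K * tst C (H (σ k))) atTop (𝓝 (K * 0)) := Tl'.const_mul K
    have := le_of_tendsto_of_tendsto' c3.abs c4 (fun k => (h2 _ (H0 _) (H1 _)).1 t ht)
    rw [mul_zero] at this
    have := abs_nonpos_iff.1 this
    linarith
  · intro φ hφ hc 
    obtain ⟨K, hK, h1, h2⟩ := sch_est hN hF0 hφ hc
    refine ⟨K, hK, fun s t => ?_⟩
    have hφi := hφ.continuous.integrable_of_hasCompactSupport hc (μ := volume)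
    have c1 := conv_int (fun k => hf (σ k) t) (F1 t) (F3 t) hφi
    have c2 := conv_int (fun k => hf (σ k) s) (F1 s) (F3 s) hφi
    have c4 : Tendsto (fun k => K * (|t - s| + tst C (H (σ k)))) atTop (𝓝 (K * (|t-s| + 0))) := 
      (Tl'.const_add _).const_mul K
    have := le_of_tendsto_of_tendsto' (c1.sub c2).abs c4 (fun k => (h2 _ (H0 _) (H1 _)).2 s t)
    rwa [add_zero] at this

/-- Lipschitz tested against test functions implies `cont` -/
lemma cont_of_test {F : ℝ → ℝ → ℝ} (hF : ∀ t, M01 (F t)) 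
    (hL : ∀ φ : ℝ → ℝ, ContDiff ℝ (⊤ : ℕ∞) φ → HasCompactSupport φ → ∃ K, 0 ≤ K ∧ 
      ∀ s t, |(∫ x, φ x * F t x) - (∫ x, φ x * F s x)| ≤ K * |t - s|) {t x : ℝ} (hx : ContinuousAt (F t) x) :
    ContinuousAt (fun s => F s x) t := by
  have key : ∀ ε > 0, ∀ z, ∃ u : ℝ → ℝ, ContinuousAt u t ∧ ∀ s, F s (z - ε) ≤ u s ∧ u s ≤ F s (z + ε) := by
    intro ε hε z
    obtain ⟨k, hk⟩ := exists_mol hε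
    obtain ⟨K, hK, hK'⟩ := hL (fun y => k (z - y)) (hk.smooth.comp (by fun_prop)) 
      (hk.cs.comp_homeomorph (Homeomorph.subLeft z))
    refine ⟨fun s => ∫ y, k (z - y) * F s y, ?_, fun s => ?_⟩
    · have : LipschitzWith (⟨K, hK⟩ : NNReal) (fun s => ∫ y, k (z - y) * F s y) := by
        refine LipschitzWith.of_dist_le_mul fun s r => ?_
        rw [Real.dist_eq, Real.dist_eq]; exact hK' r s
      exact this.continuous.continuousAt
    · have := cv_bounds hk (hF s).mono (M := 1) (fun x => by 
        rw [abs_of_nonneg ((hF _).nonneg x)]; exact (hF _).le_one x) z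
      rw [cv_swap] at this
      simp_rw [mul_comm (k _)]
      exact this
  unfold ContinuousAt
  rw [tendsto_order]
  constructor
  · intro c hc
    obtain ⟨d, hd, hd'⟩ := Metric.eventually_nhds_iff.1 (hx.eventually (lt_mem_nhds hc))
    have h1 : c < F t (x - d/2) := hd' (by rw [Real.dist_eq]; rw [abs_lt]; constructor <;> linarith)
    obtain ⟨u, hu, hu'⟩ := key (d/4) (by positivity) (x - d/4)
    have h2 := (hu' t).1
    rw [show x - d/4 - d/4 = x - d/2 by ring] at h2
    filter_upwards [hu.eventually (lt_mem_nhds (h1.trans_le h2))] with s hs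
    have := (hu' s).2
    rw [show x - d/4 + d/4 = x by ring] at this
    exact hs.trans_le this
  · intro c hc
    obtain ⟨d, hd, hd'⟩ := Metric.eventually_nhds_iff.1 (hx.eventually (gt_mem_nhds hc))
    have h1 : F t (x + d/2) < c := hd' (by rw [Real.dist_eq]; rw [abs_lt]; constructor <;> linarith)
    obtain ⟨u, hu, hu'⟩ := key (d/4) (by positivity) (x + d/4)
    have h2 := (hu' t).2
    rw [show x + d/4 + d/4 = x + d/2 by ring] at h2
    filter_upwards [hu.eventually (gt_mem_nhds (h2.trans_lt h1))] with s hs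
    have := (hu' s).1
    rw [show x + d/4 - d/4 = x by ring] at this
    exact this.trans_lt hs
end
end


section
lemma cutoff : ∃ K : ℝ, 0 ≤ K ∧ ∀ R : ℝ, ∃ φ : ℝ → ℝ, ContDiff ℝ (⊤ : ℕ∞) φ ∧ HasCompactSupport φ ∧ (∀ x, 0 ≤ φ x) ∧ 
    (∀ x, φ x ≤ 1) ∧ (∀ x, x ≤ 0 → φ x = 0) ∧ (∀ x, 1 ≤ x → x ≤ R - 1 → φ x = 1) ∧ 
    (∫ x, |deriv φ x|) ≤ K ∧ (∫ x, |deriv (deriv φ) x|) ≤ K := by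
  set S := Real.smoothTransition with hS
  have s0 : ContDiff ℝ (⊤ : ℕ∞) S := Real.smoothTransition.contDiff
  have s1 := smooth_deriv s0
  have s2 := smooth_deriv s1
  have z1 : HasCompactSupport (deriv S) := by
    refine HasCompactSupport.intro (isCompact_Icc (a := (0:ℝ)) (b := 1)) fun x hx => ?_
    by_cases h : x < 0
    · have : S =ᶠ[𝓝 x] fun _ => 0 := by
        filter_upwards [gt_mem_nhds h] with y hy
        exact Real.smoothTransition.zero_of_nonpos hy.le
      rw [this.deriv_eq]; simp
    · have h' : 1 < x := by by_contra h2; exact hx ⟨not_lt.1 h, not_lt.1 h2⟩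
      have : S =ᶠ[𝓝 x] fun _ => 1 := by
        filter_upwards [lt_mem_nhds h'] with y hy
        exact Real.smoothTransition.one_of_one_le hy.le
      rw [this.deriv_eq]; simp
  have z2 := z1.deriv
  have i1 : Integrable (fun x => |deriv S x|) := (s1.continuous.integrable_of_hasCompactSupport z1).abs
  have i2 : Integrable (fun x => |deriv (deriv S) x|) := (s2.continuous.integrable_of_hasCompactSupport z2).abs
  obtain ⟨M, hM⟩ := z1.exists_bound_of_continuous s1.continuous
  have hM0 : 0 ≤ M := (norm_nonneg _).trans (hM 0)
  have J1 : 0 ≤ ∫ x, |deriv S x| := integral_nonneg fun _ => abs_nonneg _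
  have J2 : 0 ≤ ∫ x, |deriv (deriv S) x| := integral_nonneg fun _ => abs_nonneg _
  refine ⟨2 * (∫ x, |deriv S x|) + (2 * (∫ x, |deriv (deriv S) x|) + 2 * M * ∫ x, |deriv S x|), by positivity, fun R => ?_⟩
  have n0 : ∀ x, 0 ≤ S x := Real.smoothTransition.nonneg
  have n1 : ∀ x, S x ≤ 1 := Real.smoothTransition.le_one
  have d1 : ∀ x, HasDerivAt (fun x => S x * S (R - x)) (deriv S x * S (R-x) - S x * deriv S (R-x)) x := by
    intro x
    have e2 := HasDerivAt.comp_const_sub (f := S) R x (f' := deriv S (R-x)) (test_d s0 _)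
    exact ((test_d s0 x).mul e2).congr_deriv (by ring)
  have d1' : deriv (fun x => S x * S (R - x)) = fun x => deriv S x * S (R-x) - S x * deriv S (R-x) := funext fun x => (d1 x).deriv
  have d2 : ∀ x, HasDerivAt (fun x => deriv S x * S (R-x) - S x * deriv S (R-x)) 
      (deriv (deriv S) x * S (R-x) - 2 * (deriv S x * deriv S (R-x)) + S x * deriv (deriv S) (R-x)) x := by
    intro x
    have e2 := HasDerivAt.comp_const_sub (f := S) R x (f' := deriv S (R-x)) (test_d s0 _)
    have e3 := HasDerivAt.comp_const_sub (f := deriv S) R x (f' := deriv (deriv S) (R-x)) (test_d s1 _)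
    exact (((test_d s1 x).mul e2).fun_sub ((test_d s0 x).mul e3)).congr_deriv (by ring)
  have d2' : deriv (deriv (fun x => S x * S (R - x))) = fun x => 
      (deriv (deriv S) x * S (R-x) - 2 * (deriv S x * deriv S (R-x)) + S x * deriv (deriv S) (R-x)) := by rw [d1']; exact funext fun x => (d2 x).deriv
  have j1 : Integrable (fun x => |deriv S (R - x)|) := i1.comp_sub_left R
  have j2 : Integrable (fun x => |deriv (deriv S) (R - x)|) := i2.comp_sub_left R
  have k1 : ∫ x, |deriv S (R - x)| = ∫ x, |deriv S x| := integral_sub_left_eq_self (fun x => |deriv S x|) _ R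
  have k2 : ∫ x, |deriv (deriv S) (R - x)| = ∫ x, |deriv (deriv S) x| := integral_sub_left_eq_self (fun x => |deriv (deriv S) x|) _ R
  have c0 : ContDiff ℝ (⊤ : ℕ∞) (fun x => S x * S (R - x)) := s0.mul (s0.comp (contDiff_const.sub contDiff_id))
  have cc : HasCompactSupport (fun x => S x * S (R - x)) := by
    refine HasCompactSupport.intro (isCompact_Icc (a := (0:ℝ)) (b := R)) fun x hx => ?_
    by_cases h : x < 0
    · simp [hS, Real.smoothTransition.zero_of_nonpos h.le]
    · have h' : R < x := by by_contra h2; exact hx ⟨not_lt.1 h, not_lt.1 h2⟩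
      simp [hS, Real.smoothTransition.zero_of_nonpos (show R - x ≤ 0 by linarith)]
  refine ⟨fun x => S x * S (R - x), c0, cc, 
    fun x => mul_nonneg (n0 _) (n0 _), fun x => mul_le_one₀ (n1 _) (n0 _) (n1 _), ?_, ?_, ?_, ?_⟩
  · intro x hx; simp [hS, Real.smoothTransition.zero_of_nonpos hx]
  · intro x hx hx'
    simp [hS, Real.smoothTransition.one_of_one_le hx, Real.smoothTransition.one_of_one_le (show 1 ≤ R - x by linarith)]
  · have : ∫ x, |deriv (fun x => S x * S (R - x)) x| ≤ ∫ x, (|deriv S x| + |deriv S (R - x)|) := by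
      refine integral_mono_of_nonneg (Eventually.of_forall fun _ => abs_nonneg _) (i1.add j1) (Eventually.of_forall fun x => ?_)
      simp only [d1']
      refine (abs_sub _ _).trans ?_
      rw [abs_mul, abs_mul, abs_of_nonneg (n0 x), abs_of_nonneg (n0 (R-x))]
      gcongr
      · exact mul_le_of_le_one_right (abs_nonneg _) (n1 _)
      · exact mul_le_of_le_one_left (abs_nonneg _) (n1 _)
    rw [integral_add i1 j1, k1] at this
    have : 0 ≤ 2 * M * ∫ x, |deriv S x| := by positivity
    linarith
  · have : ∫ x, |deriv (deriv (fun x => S x * S (R - x))) x| ≤ 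
        ∫ x, ((|deriv (deriv S) x| + |deriv (deriv S) (R - x)|) + 2 * M * |deriv S x|) := by
      refine integral_mono_of_nonneg (Eventually.of_forall fun _ => abs_nonneg _) ((i2.add j2).add (i1.const_mul _)) (Eventually.of_forall fun x => ?_)
      simp only [d2']
      refine (abs_add_le _ _).trans ?_
      have h1 := abs_sub (deriv (deriv S) x * S (R - x)) (2 * (deriv S x * deriv S (R - x)))
      rw [abs_mul, abs_mul 2, abs_mul, abs_of_nonneg (n0 (R-x)), abs_two] at h1
      rw [abs_mul (S x), abs_of_nonneg (n0 x)]
      have h2 := mul_le_of_le_one_right (abs_nonneg (deriv (deriv S) x)) (n1 (R-x))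
      have h3 := mul_le_of_le_one_left (abs_nonneg (deriv (deriv S) (R-x))) (n1 x)
      have h4 := mul_le_mul_of_nonneg_left (hM (R-x)) (abs_nonneg (deriv S x))
      rw [Real.norm_eq_abs] at h4
      linarith
    have q1 : Integrable (fun x => |deriv (deriv S) x| + |deriv (deriv S) (R - x)|) := i2.add j2
    rw [integral_add q1 (i1.const_mul _), integral_add i2 j2, k2, integral_const_mul] at this
    linarith

section
variable {A B a b : ℝ → ℝ} {C : ℝ} {F₀ : ℝ → ℝ}

lemma Lop_bd (hN : Nice A B a b C) {f : ℝ → ℝ} (hf : M01 f) {φ : ℝ → ℝ} (hφ : ContDiff ℝ (⊤ : ℕ∞) φ) 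
    (hc : HasCompactSupport φ) : |Lop A B f φ| ≤ C * (∫ x, |deriv (deriv φ) x|) + C * ∫ x, |deriv φ x| := by
  have hC := hN.C0
  have s1 := smooth_deriv hφ
  have s2 := smooth_deriv s1
  have i1 : Integrable (fun x => |deriv φ x|) := (s1.continuous.integrable_of_hasCompactSupport hc.deriv).abs
  have i2 : Integrable (fun x => |deriv (deriv φ) x|) := (s2.continuous.integrable_of_hasCompactSupport hc.deriv.deriv).abs
  rw [← integral_const_mul, ← integral_const_mul, ← integral_add (i2.const_mul _) (i1.const_mul _)]
  unfold Lop
  rw [← Real.norm_eq_abs]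
  refine norm_integral_le_of_norm_le ((i2.const_mul _).add (i1.const_mul _)) (Eventually.of_forall fun x => ?_)
  obtain ⟨b1, b2, b3⟩ := CdfFlow.AB_bd hN (f x) (hf.mem x)
  rw [Real.norm_eq_abs]
  refine (abs_add_le _ _).trans ?_
  rw [abs_mul (1/2 * _), abs_mul (B _)]
  gcongr
  rw [abs_of_nonneg (by positivity)]; linarith

lemma tail_bd (hN : Nice A B a b C) (hF0 : M01 F₀) {F : ℝ → ℝ → ℝ} (hF : ∀ t, M01 (F t)) (hW : WW A B F₀ F)
    (hi : IntegrableOn (fun s => 1 - F₀ s + F₀ (-s)) (Ioi 0)) : 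
    ∃ M K : ℝ, 0 ≤ M ∧ 0 ≤ K ∧ ∀ t, 0 ≤ t → ∀ R, 1 ≤ R → ∫ s in (1:ℝ)..R, (1 - F t s + F t (-s)) ≤ M + K * t := by
  obtain ⟨K, hK, hcut⟩ := cutoff
  have hC := hN.C0
  have hg0 : ∀ {f : ℝ → ℝ}, M01 f → ∀ s, 0 ≤ 1 - f s + f (-s) := fun hf s => by 
    linarith [hf.le_one s, hf.nonneg (-s)]
  refine ⟨∫ s in Ioi 0, (1 - F₀ s + F₀ (-s)), 4 * C * K, setIntegral_nonneg measurableSet_Ioi fun s _ => hg0 hF0 s, by positivity, ?_⟩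
  intro t ht R hR
  obtain ⟨φ, h0, hc, p0, p1, pz, po, d1, d2⟩ := hcut (R+1)
  have hφi := h0.continuous.integrable_of_hasCompactSupport hc (μ := volume)
  have fint : ∀ {f : ℝ → ℝ}, M01 f → Integrable (fun s => φ s * f s) := fun hf => by
    have := hf.integrable_mul continuous_id hφi
    simpa [mul_comm] using this
  have fint2 : ∀ {f : ℝ → ℝ}, M01 f → Integrable (fun s => φ (-s) * f s) := fun hf => by
    have := hf.integrable_mul continuous_id hφi.comp_neg
    simpa [mul_comm] using this
  have fint3 : ∀ {f : ℝ → ℝ}, M01 f → Integrable (fun s => φ s * f (-s)) := fun hf => by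
    have := (fint2 hf).comp_neg
    simpa using this
  have split : ∀ {f : ℝ → ℝ}, M01 f → (Integrable (fun s => φ s * (1 - f s + f (-s)))) ∧ 
      ∫ s, φ s * (1 - f s + f (-s)) = (∫ s, φ s) - (∫ s, φ s * f s) + ∫ s, φ (-s) * f s := by
    intro f hf
    have e : (fun s => φ s * (1 - f s + f (-s))) = fun s => (φ s - φ s * f s) + φ s * f (-s) := by
      funext s; ring
    have q : Integrable (fun s => φ s - φ s * f s) := hφi.sub (fint hf)
    rw [e]
    refine ⟨q.add (fint3 hf), ?_⟩
    rw [integral_add q (fint3 hf), integral_sub hφi (fint hf)]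
    congr 1
    rw [← integral_neg_eq_self]; simp
  have b1 : ∫ s in (1:ℝ)..R, (1 - F t s + F t (-s)) ≤ ∫ s, φ s * (1 - F t s + F t (-s)) := by
    rw [intervalIntegral.integral_of_le hR]
    have : ∫ s in Ioc 1 R, (1 - F t s + F t (-s)) = ∫ s in Ioc 1 R, φ s * (1 - F t s + F t (-s)) := by
      refine setIntegral_congr_fun measurableSet_Ioc fun s hs => ?_
      rw [po s hs.1.le (by linarith [hs.2]), one_mul]
    rw [this]
    exact setIntegral_le_integral (split (hF t)).1 (Eventually.of_forall fun s => mul_nonneg (p0 s) (hg0 (hF t) s))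
  have b2 : ∫ s, φ s * (1 - F₀ s + F₀ (-s)) ≤ ∫ s in Ioi 0, (1 - F₀ s + F₀ (-s)) := by
    rw [← integral_indicator measurableSet_Ioi]
    refine integral_mono (split hF0).1 (hi.integrable_indicator measurableSet_Ioi) fun s => ?_
    by_cases hs : s ≤ 0
    · simp [pz s hs, indicator, not_lt.2 hs]
    · rw [indicator_of_mem (by simpa using hs)]
      exact mul_le_of_le_one_left (hg0 hF0 s) (p1 s)
  have cn : ContDiff ℝ (⊤ : ℕ∞) (fun x => φ (-x)) := h0.comp contDiff_neg
  have hcn : HasCompactSupport (fun x => φ (-x)) := hc.comp_homeomorph (Homeomorph.neg ℝ)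
  have lb : ∀ {ψ : ℝ → ℝ}, ContDiff ℝ (⊤ : ℕ∞) ψ → HasCompactSupport ψ → (∫ x, |deriv ψ x|) ≤ K → (∫ x, |deriv (deriv ψ) x|) ≤ K → 
      |∫ s in (0:ℝ)..t, Lop A B (F s) ψ| ≤ 2 * C * K * t := by
    intro ψ hψ hψc e1 e2
    have := intervalIntegral.norm_integral_le_of_norm_le_const (f := fun s => Lop A B (F s) ψ) (a := 0) (b := t) (C := 2*C*K) 
      (fun s _ => by
        refine (Lop_bd hN (hF s) hψ hψc).trans ?_
        nlinarith)
    simpa [abs_of_nonneg ht] using this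
  have dn1 : deriv (fun x => φ (-x)) = fun x => - deriv φ (-x) := funext fun x => by rw [deriv_comp_neg]
  have dn2 : deriv (fun x => - deriv φ (-x)) = fun x => deriv (deriv φ) (-x) := funext fun x => by 
    rw [deriv.fun_neg, deriv_comp_neg, neg_neg]
  have l1 := lb h0 hc d1 d2
  have l2 := lb cn hcn (by rw [dn1]; simp only [abs_neg]; rwa [integral_neg_eq_self (fun x => |deriv φ x|)]) 
    (by rw [dn1, dn2]; rwa [integral_neg_eq_self (fun x => |deriv (deriv φ) x|)])
  rw [← hW φ h0 hc t ht] at l1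
  rw [← hW _ cn hcn t ht] at l2
  rw [(split (hF t)).2] at b1
  rw [(split hF0).2] at b2
  rw [abs_le] at l1 l2
  linarith [l1.1, l2.2]
end
end


section
section
variable {A B a b : ℝ → ℝ} {C : ℝ} {F₀ : ℝ → ℝ}

lemma exist_flow (hN : Nice A B a b C) (hF0 : M01 F₀) 
    (hi : IntegrableOn (fun s => 1 - F₀ s + F₀ (-s)) (Ioi 0)) : 
    ∃ F : ℝ → ℝ → ℝ, CdfFlow F ∧ WW A B F₀ F ∧ ∃ M K : ℝ, 0 ≤ M ∧ 0 ≤ K ∧ 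
      ∀ t R, 1 ≤ R → ∫ s in (1:ℝ)..R, (1 - F t s + F t (-s)) ≤ M + K * |t| := by
  obtain ⟨G, G1, G2, G3, G4⟩ := sch_lim hN hF0
  obtain ⟨M, K, hM, hK, hb⟩ := tail_bd hN hF0 G1 G3 hi
  have hb' : ∀ t R, 1 ≤ R → ∫ s in (1:ℝ)..R, (1 - G (max t 0) s + G (max t 0) (-s)) ≤ M + K * |t| := by
    intro t R hR
    refine (hb _ (le_max_right t 0) R hR).trans ?_
    gcongr
    exact max_le (le_abs_self t) (abs_nonneg t)
  have hWW : WW A B F₀ (fun t => G (max t 0)) := by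
    intro φ hφ hc t ht
    have := G3 φ hφ hc t ht
    simp only [max_eq_left ht]
    rw [this]
    refine intervalIntegral.integral_congr fun s hs => ?_
    rw [uIcc_of_le ht] at hs
    simp only [max_eq_left hs.1]
  have small : ∀ t, Tendsto (fun R => 1 - G (max t 0) R + G (max t 0) (-R)) atTop (𝓝 0) := by
    intro t
    have g := G1 (max t 0)
    have anti : ∀ s R, s ≤ R → 1 - G (max t 0) R + G (max t 0) (-R) ≤ 1 - G (max t 0) s + G (max t 0) (-s) := by
      intro s R h
      linarith [g.mono h, g.mono (neg_le_neg h)]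
    have lim : Tendsto (fun R : ℝ => (M + K * |t|) / (R - 1)) atTop (𝓝 0) := 
      Tendsto.const_div_atTop (tendsto_atTop_add_const_right _ _ tendsto_id) _
    refine squeeze_zero' (Eventually.of_forall fun R => by linarith [g.le_one R, g.nonneg (-R)]) ?_ lim
    filter_upwards [eventually_gt_atTop 1] with R hR
    rw [le_div_iff₀ (by linarith)]
    refine le_trans ?_ (hb' t R hR.le)
    have m1 : IntervalIntegrable (G (max t 0)) volume 1 R := g.mono.intervalIntegrable
    have m2 : IntervalIntegrable (fun s => G (max t 0) (-s)) volume 1 R := 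
      AntitoneOn.intervalIntegrable (fun x _ y _ h => g.mono (neg_le_neg h))
    have : ∫ s in (1:ℝ)..R, (1 - G (max t 0) R + G (max t 0) (-R)) ≤ ∫ s in (1:ℝ)..R, (1 - G (max t 0) s + G (max t 0) (-s)) := by
      refine intervalIntegral.integral_mono_on hR.le intervalIntegrable_const ((intervalIntegrable_const.sub m1).add m2) ?_
      intro s hs
      exact anti s R hs.2
    rw [intervalIntegral.integral_const, smul_eq_mul] at this
    linarith
  refine ⟨fun t => G (max t 0), ⟨fun t => (G1 _).mono, fun t => (G1 _).nonneg, fun t => (G1 _).le_one, fun t => G2 _, ?_, ?_, ?_⟩, 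
    hWW, M, K, hM, hK, hb'⟩
  · intro t
    have := squeeze_zero (f := fun R => G (max t 0) (-R)) (fun R => (G1 _).nonneg _) (fun R => by linarith [(G1 (max t 0)).le_one R]) (small t)
    have := this.comp tendsto_neg_atBot_atTop
    simpa [Function.comp_def] using this
  · intro t
    have := squeeze_zero (f := fun R => 1 - G (max t 0) R) (fun R => by linarith [(G1 (max t 0)).le_one R]) (fun R => by linarith [(G1 (max t 0)).nonneg (-R)]) (small t)
    have := this.const_sub 1
    simpa using this
  · intro t x hx
    refine cont_of_test (F := fun t => G (max t 0)) (fun t => G1 _) ?_ hx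
    intro φ hφ hc
    obtain ⟨K, hK, h⟩ := G4 φ hφ hc
    refine ⟨K, hK, fun s t => (h _ _).trans ?_⟩
    exact mul_le_mul_of_nonneg_left (abs_max_sub_max_le_abs t s 0) hK
end

/-- the Stieltjes function at time `t` -/
def CdfFlow.st {F : ℝ → ℝ → ℝ} (hF : CdfFlow F) (t : ℝ) : StieltjesFunction ℝ where
  toFun := F t
  mono' := hF.mono t
  right_continuous' := hF.rc t

def CdfFlow.P {F : ℝ → ℝ → ℝ} (hF : CdfFlow F) (t : ℝ) : ProbabilityMeasure ℝ := 
  ⟨(hF.st t).measure, (hF.st t).isProbabilityMeasure (hF.bot t) (hF.top t)⟩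

variable {F : ℝ → ℝ → ℝ}

lemma CdfFlow.P_Iic (hF : CdfFlow F) (t x : ℝ) : (hF.P t : Measure ℝ) (Iic x) = ENNReal.ofReal (F t x) := by
  have := (hF.st t).measure_Iic (hF.bot t) x
  rw [sub_zero] at this
  exact this

lemma CdfFlow.P_Ioc (hF : CdfFlow F) (t x y : ℝ) : (hF.P t : Measure ℝ) (Ioc x y) = ENNReal.ofReal (F t y - F t x) := 
  (hF.st t).measure_Ioc x y

lemma CdfFlow.P_Ioi (hF : CdfFlow F) (t x : ℝ) : (hF.P t : Measure ℝ) (Ioi x) = ENNReal.ofReal (1 - F t x) := 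
  (hF.st t).measure_Ioi (hF.top t) x

lemma CdfFlow.P_cont (hF : CdfFlow F) : Continuous hF.P := by
  rw [continuous_iff_continuousAt]
  intro t
  set S : Set (Set ℝ) := {s | ∃ c d, ContinuousAt (F t) c ∧ ContinuousAt (F t) d ∧ s = Ioc c d}
  have hS : IsPiSystem S := by
    rintro _ ⟨c, d, hc, hd, rfl⟩ _ ⟨c', d', hc', hd', rfl⟩ -
    refine ⟨max c c', min d d', ?_, ?_, Ioc_inter_Ioc⟩
    · rcases max_choice c c' with h | h <;> rw [h] <;> assumption
    · rcases min_choice d d' with h | h <;> rw [h] <;> assumption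
  refine hS.tendsto_probabilityMeasure_of_tendsto_of_mem ?_ ?_ ?_
  · rintro _ ⟨c, d, hc, hd, rfl⟩; exact measurableSet_Ioc
  · intro u hu x hx
    obtain ⟨e, he, he'⟩ := Metric.isOpen_iff.1 hu x hx
    obtain ⟨y, hy, hyc⟩ := mono_exists_cont (hF.mono t) (show x - e < x by linarith)
    obtain ⟨z, hz, hzc⟩ := mono_exists_cont (hF.mono t) (show x < x + e by linarith)
    refine ⟨Ioc y z, ⟨y, z, hyc, hzc, rfl⟩, Ioc_mem_nhds hy.2 hz.1, fun w hw => he' ?_⟩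
    rw [Metric.mem_ball, Real.dist_eq, abs_lt]
    constructor <;> linarith [hw.1, hw.2, hy.1, hz.2]
  · rintro _ ⟨c, d, hc, hd, rfl⟩
    have e : ∀ s, hF.P s (Ioc c d) = Real.toNNReal (F s d - F s c) := by
      intro s
      have := hF.P_Ioc s c d
      rw [ProbabilityMeasure.coeFn_def]; simp only [this]; rfl
    simp_rw [e]
    exact (continuous_real_toNNReal.tendsto _).comp ((hF.cont t d hd).sub (hF.cont t c hc))

lemma CdfFlow.mom (hF : CdfFlow F) {D t : ℝ} (hD : 0 ≤ D) 
    (hb : ∀ R, 1 ≤ R → ∫ s in (1:ℝ)..R, (1 - F t s + F t (-s)) ≤ D) :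
    Integrable (fun x => |x|) (hF.P t : Measure ℝ) ∧ ∫ x, |x| ∂(hF.P t : Measure ℝ) ≤ 2 + D := by
  set g : ℝ → ℝ := fun s => 1 - F t s + F t (-s) with hg
  have g0 : ∀ s, 0 ≤ g s := fun s => by simp only [hg]; linarith [hF.le_one t s, hF.nonneg t (-s)]
  have g2 : ∀ s, g s ≤ 2 := fun s => by simp only [hg]; linarith [hF.le_one t (-s), hF.nonneg t s]
  have gm : Measurable g := ((hF.mono t).measurable.const_sub 1).add ((hF.mono t).measurable.comp measurable_neg)
  have gi : ∀ R, IntegrableOn g (Ioc 1 R) := fun R => by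
    refine Measure.integrableOn_of_bounded (M := 2) (by simp) gm.aestronglyMeasurable (Eventually.of_forall fun s => ?_)
    rw [Real.norm_eq_abs, abs_of_nonneg (g0 s)]; exact g2 s
  have gI : IntegrableOn g (Ioi 1) := by
    refine integrableOn_Ioi_of_intervalIntegral_norm_bounded D 1 gi tendsto_id ?_
    filter_upwards [eventually_ge_atTop 1] with R hR
    simp only [Real.norm_eq_abs, abs_of_nonneg (g0 _)]
    exact hb R hR
  have gD : ∫ s in Ioi 1, g s ≤ D := by
    refine le_of_tendsto (intervalIntegral_tendsto_integral_Ioi 1 gI tendsto_id) ?_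
    filter_upwards [eventually_ge_atTop 1] with R hR
    exact hb R hR
  have key : ∫⁻ x, ENNReal.ofReal |x| ∂(hF.P t : Measure ℝ) ≤ ENNReal.ofReal (2 + D) := by
    rw [lintegral_eq_lintegral_meas_lt _ (Eventually.of_forall fun x => abs_nonneg x) (by fun_prop)]
    have h1 : ∀ s, (hF.P t : Measure ℝ) {x | s < |x|} ≤ ENNReal.ofReal (g s) := by
      intro s
      have : {x : ℝ | s < |x|} ⊆ Ioi s ∪ Iic (-s) := by
        intro x hx
        simp only [mem_ofPred_eq, lt_abs] at hx
        rcases hx with h | h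
        · exact Or.inl h
        · right; simp only [mem_Iic]; linarith
      refine (measure_mono this).trans ((measure_union_le _ _).trans ?_)
      rw [hF.P_Ioi, hF.P_Iic, ← ENNReal.ofReal_add (by linarith [hF.le_one t s]) (hF.nonneg _ _)]
    refine (lintegral_mono h1).trans ?_
    rw [← Ioc_union_Ioi_eq_Ioi (zero_le_one' ℝ)]
    refine (lintegral_union_le _ _ _).trans ?_
    rw [ENNReal.ofReal_add zero_le_two hD]
    gcongr
    · calc ∫⁻ s in Ioc 0 1, ENNReal.ofReal (g s) ≤ ∫⁻ s in Ioc (0:ℝ) 1, ENNReal.ofReal 2 := 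
            lintegral_mono fun s => ENNReal.ofReal_le_ofReal (g2 s)
        _ = _ := by simp
    · rw [← ofReal_integral_eq_lintegral_ofReal gI (Eventually.of_forall g0)]
      exact ENNReal.ofReal_le_ofReal gD
  have hintg : Integrable (fun x => |x|) (hF.P t : Measure ℝ) := by
    refine ⟨by fun_prop, ?_⟩
    rw [hasFiniteIntegral_iff_norm]
    simp only [Real.norm_eq_abs, abs_abs]
    exact key.trans_lt ENNReal.ofReal_lt_top
  refine ⟨hintg, ?_⟩
  rw [← ofReal_integral_eq_lintegral_ofReal hintg (Eventually.of_forall fun x => abs_nonneg x)] at key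
  exact (ENNReal.ofReal_le_ofReal_iff (by positivity)).1 key

lemma CdfFlow.memF (hF : CdfFlow F) {M K : ℝ} (hM : 0 ≤ M) (hK : 0 ≤ K) 
    (hb : ∀ t R, 1 ≤ R → ∫ s in (1:ℝ)..R, (1 - F t s + F t (-s)) ≤ M + K * |t|) : MemF F := by
  have hm := fun t => hF.mom (t := t) (D := M + K * |t|) (by positivity) (hb t)
  refine ⟨hF.P, hF.P_cont.continuousOn, fun t _ => (hm t).1, fun T hT => ?_, fun t _ x => ?_⟩
  · have meas : Measurable (fun t => ∫ x, |x| ∂(hF.P t : Measure ℝ)) := by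
      refine measurable_of_tendsto_metrizable (f := fun (n : ℕ) t => ∫ x, min |x| n ∂(hF.P t : Measure ℝ)) (fun n => ?_) ?_
      · refine Continuous.measurable ?_
        let f : BoundedContinuousFunction ℝ ℝ := BoundedContinuousFunction.ofNormedAddCommGroup (fun x => min |x| (n:ℝ)) (by fun_prop) n (fun x => by
          rw [Real.norm_eq_abs, abs_of_nonneg (le_min (abs_nonneg _) (Nat.cast_nonneg _))]; exact min_le_right _ _)
        rw [continuous_iff_continuousAt]
        intro t
        exact (ProbabilityMeasure.tendsto_iff_forall_integral_tendsto.1 (hF.P_cont.tendsto t)) f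
      · rw [tendsto_pi_nhds]
        intro t
        refine tendsto_integral_of_dominated_convergence (fun x => |x|) (fun n => by fun_prop) (hm t).1 
          (fun n => Eventually.of_forall fun x => ?_) (Eventually.of_forall fun x => ?_)
        · rw [Real.norm_eq_abs, abs_of_nonneg (le_min (abs_nonneg _) (Nat.cast_nonneg _))]; exact min_le_left _ _
        · refine tendsto_const_nhds.congr' ?_
          filter_upwards [tendsto_natCast_atTop_atTop.eventually_ge_atTop |x|] with n hn
          rw [min_eq_left hn]
    refine Measure.integrableOn_of_bounded (M := 2 + (M + K * T)) (by simp) meas.aestronglyMeasurable ?_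
    filter_upwards [ae_restrict_mem measurableSet_Icc] with t ht
    rw [Real.norm_eq_abs, abs_of_nonneg (integral_nonneg fun x => abs_nonneg x)]
    refine (hm t).2.trans ?_
    rw [abs_of_nonneg ht.1]
    have := ht.2
    gcongr
  · rw [hF.P_Iic, ENNReal.toReal_ofReal (hF.nonneg _ _)]
end


section
lemma weak_congr {A B A' B' F₀ : ℝ → ℝ} {G : ℝ → ℝ → ℝ} (hA : ∀ u ∈ Icc (0:ℝ) 1, A u = A' u) 
    (hB : ∀ u ∈ Icc (0:ℝ) 1, B u = B' u) (hG : ∀ t, 0 ≤ t → ∀ x, G t x ∈ Icc (0:ℝ) 1) 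
    (h : IsWeakSolution A B F₀ G) : IsWeakSolution A' B' F₀ G := by
  intro g hg hc t ht
  rw [h g hg hc t ht]
  refine integral_congr_ae (Eventually.of_forall fun x => ?_)
  refine intervalIntegral.integral_congr fun s hs => ?_
  rw [uIcc_of_le ht] at hs
  simp only [hA _ (hG s hs.1 x), hB _ (hG s hs.1 x)]

lemma flow_of_memF {G : ℝ → ℝ → ℝ} (h : MemF G) : ∃ F : ℝ → ℝ → ℝ, CdfFlow F ∧ ∀ t, 0 ≤ t → ∀ x, G t x = F t x := by
  obtain ⟨P, hP, -, -, hG⟩ := h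
  set Q : ℝ → ProbabilityMeasure ℝ := fun t => P (max t 0)
  have hQ : Continuous Q := hP.comp_continuous (by fun_prop) (fun t => mem_Ici.2 (le_max_right _ _))
  set F : ℝ → ℝ → ℝ := fun t => ProbabilityTheory.cdf (Q t : Measure ℝ) with hF
  have e : ∀ t x, F t x = ((Q t : Measure ℝ) (Iic x)).toReal := fun t x => 
    ProbabilityTheory.cdf_eq_real _ x
  refine ⟨F, ⟨fun t => ProbabilityTheory.monotone_cdf _, fun t => ProbabilityTheory.cdf_nonneg _, 
    fun t => ProbabilityTheory.cdf_le_one _, fun t => (ProbabilityTheory.cdf _).right_continuous, 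
    fun t => ProbabilityTheory.tendsto_cdf_atBot _, fun t => ProbabilityTheory.tendsto_cdf_atTop _, ?_⟩, ?_⟩
  · intro t x hx
    have h0 : (Q t : Measure ℝ) (frontier (Iic x)) = 0 := by
      rw [frontier_Iic, ← ProbabilityTheory.measure_cdf (Q t : Measure ℝ), StieltjesFunction.measure_singleton, 
        leftLim_eq_of_tendsto (hx.tendsto.mono_left nhdsWithin_le_nhds)]
      simp [hF]
    have := ProbabilityMeasure.tendsto_measure_of_null_frontier_of_tendsto' (hQ.tendsto t) h0
    have := (ENNReal.tendsto_toReal (measure_ne_top _ _)).comp this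
    simp_rw [e]
    unfold ContinuousAt
    exact this
  · intro t ht x
    rw [hG t ht x, e]
    simp only [Q, max_eq_left ht]

lemma cdf_tail (m : Measure ℝ) [IsProbabilityMeasure m] (hm : Integrable (fun x => |x|) m) : 
    M01 (cdfOf m) ∧ IntegrableOn (fun s => 1 - cdfOf m s + cdfOf m (-s)) (Ioi 0) := by
  have e : cdfOf m = ProbabilityTheory.cdf m := funext fun x => (ProbabilityTheory.cdf_eq_real m x).symm
  have hM : M01 (cdfOf m) := by
    rw [e]; exact ⟨ProbabilityTheory.monotone_cdf _, ProbabilityTheory.cdf_nonneg _, ProbabilityTheory.cdf_le_one _⟩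
  refine ⟨hM, ?_⟩
  have mm := hM.mono.measurable
  have bd : ∀ s, 1 - cdfOf m s + cdfOf m (-s) ≤ 2 * m.real {x | s ≤ |x|} := by
    intro s
    have h1 : 1 - cdfOf m s = m.real (Ioi s) := by
      rw [← compl_Iic, probReal_compl_eq_one_sub measurableSet_Iic]; rfl
    have h2 : m.real (Ioi s) ≤ m.real {x | s ≤ |x|} := measureReal_mono fun x hx => le_trans (le_of_lt hx) (le_abs_self x)
    have h3 : cdfOf m (-s) ≤ m.real {x | s ≤ |x|} := by
      refine measureReal_mono (μ := m) (s₁ := Iic (-s)) fun x hx => ?_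
      have : x ≤ -s := hx
      exact le_trans (by linarith) (neg_le_abs x)
    linarith
  have anti : Antitone fun s : ℝ => m {x | s ≤ |x|} := fun s r h => measure_mono fun x hx => le_trans h hx
  have key := lintegral_eq_lintegral_meas_le m (Eventually.of_forall fun x => abs_nonneg x) hm.aemeasurable
  have fin : ∫⁻ x, ENNReal.ofReal |x| ∂m < ∞ := hm.lintegral_lt_top
  rw [key] at fin
  have hi : IntegrableOn (fun s => m.real {x | s ≤ |x|}) (Ioi 0) := 
    integrable_toReal_of_lintegral_ne_top anti.measurable.aemeasurable fin.ne
  refine Integrable.mono' (hi.const_mul 2) ?_ (Eventually.of_forall fun s => ?_)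
  · exact ((mm.const_sub 1).add (mm.comp measurable_neg)).aestronglyMeasurable
  · rw [Real.norm_eq_abs, abs_of_nonneg (by linarith [hM.le_one s, hM.nonneg (-s)])]; exact bd s

lemma prim_facts {a : ℝ → ℝ} (ha : ContinuousOn a (Icc 0 1)) : ∃ a' : ℝ → ℝ, Continuous a' ∧ 
    (∀ u, ∃ v ∈ Icc (0:ℝ) 1, a' u = a v) ∧ (∀ u, HasDerivAt (primitive a') (a' u) u) ∧ 
    (∀ u ∈ Icc (0:ℝ) 1, primitive a u = primitive a' u) ∧ primitive a' 0 = 0 := by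
  have c : Continuous (IccExtend (zero_le_one' ℝ) ((Icc (0:ℝ) 1).domRestrict a)) := 
    (continuousOn_iff_continuous_domRestrict.1 ha).Icc_extend'
  refine ⟨_, c, fun u => ⟨projIcc 0 1 zero_le_one u, (projIcc 0 1 zero_le_one u).2, rfl⟩, fun u => ?_, fun u hu => ?_, by simp [primitive]⟩
  · exact intervalIntegral.integral_hasDerivAt_right (c.intervalIntegrable _ _) c.stronglyMeasurable.stronglyMeasurableAtFilter c.continuousAt
  · refine intervalIntegral.integral_congr fun v hv => ?_
    rw [uIcc_of_le hu.1] at hv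
    rw [IccExtend_of_mem _ _ ⟨hv.1, hv.2.trans hu.2⟩]; rfl
end

/-- Under (D1) and a finite first moment of `m`, there is exactly one weak solution
of the Cauchy problem with initial condition `H*m` in the class `𝓕`. -/
theorem existence_uniqueness_probabilistic_solution
    (a b : ℝ → ℝ)
    (ha : ContinuousOn a (Set.Icc 0 1)) (hb : ContinuousOn b (Set.Icc 0 1))
    (ha0 : ∀ u ∈ Set.Icc (0:ℝ) 1, 0 ≤ a u)
    (hD1 : StrictMonoOn (primitive a) (Set.Icc 0 1))
    (m : Measure ℝ) [IsProbabilityMeasure m]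
    (hm : Integrable (fun x => |x|) m) :
    ∃ F : ℝ → ℝ → ℝ,
      (IsWeakSolution (primitive a) (primitive b) (cdfOf m) F ∧ MemF F) ∧
      ∀ G : ℝ → ℝ → ℝ,
        IsWeakSolution (primitive a) (primitive b) (cdfOf m) G → MemF G →
        ∀ t : ℝ, 0 ≤ t → ∀ x : ℝ, G t x = F t x := by
  obtain ⟨a', ca, va, da, pa, za⟩ := prim_facts ha
  obtain ⟨b', cb, vb, db, pb, zb⟩ := prim_facts hb
  obtain ⟨Ma, hMa⟩ := isCompact_Icc.exists_bound_of_continuousOn ha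
  obtain ⟨Mb, hMb⟩ := isCompact_Icc.exists_bound_of_continuousOn hb
  have hN : Nice (primitive a') (primitive b') a' b' (max 1 (max Ma Mb)) := by
    refine ⟨ca, cb, da, db, fun u => ?_, fun u => ?_, fun u => ?_, le_max_left _ _, za, zb, fun u hu v hv h => ?_⟩
    · obtain ⟨v, hv, e⟩ := va u; rw [e]; exact ha0 v hv
    · obtain ⟨v, hv, e⟩ := va u; rw [e]
      exact (le_abs_self _).trans ((hMa v hv).trans ((le_max_left _ _).trans (le_max_right _ _)))
    · obtain ⟨v, hv, e⟩ := vb u; rw [e]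
      exact (hMb v hv).trans ((le_max_right _ _).trans (le_max_right _ _))
    · rw [← pa u hu, ← pa v hv]; exact hD1 hu hv h
  obtain ⟨hM, hi⟩ := cdf_tail m hm
  obtain ⟨F, hF, hW, M, K, hM0, hK0, hbd⟩ := exist_flow hN hM hi
  refine ⟨F, ⟨weak_congr (fun u hu => (pa u hu).symm) (fun u hu => (pb u hu).symm) (fun t _ x => hF.mem t x) 
    (weak_of_WW hF hN.cA hN.cB hW), hF.memF hM0 hK0 hbd⟩, ?_⟩
  intro G hG hGm t ht x
  obtain ⟨G', hG', eG⟩ := flow_of_memF hGm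
  have hG2 := weak_congr pa pb (fun t ht x => by rw [eG t ht x]; exact hG'.mem t x) hG
  rw [eG t ht x]
  exact hF.uniq hG' hN hW (WW_of_weak hG' hN.cA hN.cB hG2 eG) ht x
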